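/- Let A be a σ-unital simple C*-algebra with strict comparison which is not purely infinite. Suppose H_a and H_b are countably generated Hilbert A-modules (with a, b ∈ (A⊗K)_+) such that ω(H_a) = 0 and d_τ(H_a) < d_τ(H_b) for all τ ∈ QT̃(A)\{0}. Then H_a is unitarily equivalent to a Hilbert A-submodule of H_b. -/

import Mathlib

open scoped ENNReal
open Filter Topology

noncomputable section

namespace Paper

/-! ### Generic definitions in a (non-unital) C*-algebra -/

variable (R : Type*) [NonUnitalCStarAlgebra R] [PartialOrder R] [StarOrderedRing R]

variable {R} in
/-- The hereditary C*-subalgebra generated by `b`, i.e. `closure (b R b)`. -/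
def her (b : R) : Set R := closure {x : R | ∃ y : R, x = b * y * b}

/-- `I` is a (not necessarily closed) two-sided ideal of the subalgebra `B`. -/
def IsIdealIn (B I : Set R) : Prop :=
  I ⊆ B ∧ (0 : R) ∈ I ∧ (∀ x ∈ I, ∀ y ∈ I, x + y ∈ I) ∧ (∀ x ∈ I, -x ∈ I) ∧
    (∀ x ∈ I, ∀ b ∈ B, x * b ∈ I ∧ b * x ∈ I)

variable {R} in
/-- The Pedersen ideal of the subalgebra `B`: the minimal dense two-sided ideal of `B`,
equivalently the intersection of all dense two-sided ideals of `B`. -/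
def pedersenIn (B : Set R) : Set R :=
  ⋂ I ∈ {I : Set R | IsIdealIn R B I ∧ B ⊆ closure I}, I

/-- The Pedersen ideal of `R`. -/
def pedersen : Set R := pedersenIn (Set.univ : Set R)

variable {R} in
/-- Cuntz subequivalence `a ≲ b`. -/
def CuntzLE (a b : R) : Prop :=
  ∃ x : ℕ → R, Tendsto (fun n => ‖a - star (x n) * b * x n‖) atTop (𝓝 0)

variable {R} in
/-- Cuntz subequivalence relative to a subset `B` (the `xₙ` are taken in `B`). -/
def CuntzLEIn (B : Set R) (a b : R) : Prop :=
  ∃ x : ℕ → R, (∀ n, x n ∈ B) ∧ Tendsto (fun n => ‖a - star (x n) * b * x n‖) atTop (𝓝 0)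

variable {R} in
/-- Cuntz equivalence `a ∼ b`. -/
def CuntzEq (a b : R) : Prop := CuntzLE a b ∧ CuntzLE b a

/-- The cut-off function `f_ε`: `0` on `[0, ε/2]`, `1` on `[ε, ∞)`, linear in between. -/
def cutoff (ε : ℝ) : ℝ → ℝ := fun t => min 1 (max 0 (2 * t / ε - 1))

variable {R} in
/-- `f_ε(a)`, via the (non-unital) continuous functional calculus. -/
def fEps (ε : ℝ) (a : R) : R := cfcₙ (cutoff ε) a

/-- A densely defined 2-quasitrace on `R` (recorded by its values on positive elements;
the value on non-positive elements is normalised to `0`). -/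
structure QuasiTrace : Type _ where
  toFun : R → ℝ≥0∞
  zero_of_not_nonneg : ∀ a : R, ¬ (0 ≤ a) → toFun a = 0
  map_zero : toFun 0 = 0
  map_smul : ∀ (r : ℝ) (a : R), 0 < r → 0 ≤ a → toFun (r • a) = ENNReal.ofReal r * toFun a
  map_add_of_commute : ∀ a b : R, 0 ≤ a → 0 ≤ b → a * b = b * a →
    toFun (a + b) = toFun a + toFun b
  map_star_mul_self : ∀ x : R, toFun (star x * x) = toFun (x * star x)
  lowerSemicontinuousOn : LowerSemicontinuousOn toFun {a : R | 0 ≤ a}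
  finite_on_pedersen : ∀ a ∈ pedersen R, 0 ≤ a → toFun a < ∞
  exists_matrix_extension : ∃ σ : Matrix (Fin 2) (Fin 2) R → ℝ≥0∞,
    (∀ a : R, σ (fun i j => if i = 0 ∧ j = 0 then a else 0) = toFun a) ∧
    σ 0 = 0 ∧
    (∀ (r : ℝ) (x : Matrix (Fin 2) (Fin 2) R), 0 < r → (∃ y, x = star y * y) →
      σ (r • x) = ENNReal.ofReal r * σ x) ∧
    (∀ x y : Matrix (Fin 2) (Fin 2) R, (∃ z, x = star z * z) → (∃ z, y = star z * z) →
      x * y = y * x → σ (x + y) = σ x + σ y) ∧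
    (∀ x : Matrix (Fin 2) (Fin 2) R, σ (star x * x) = σ (x * star x))

/-- The topology of pointwise convergence on the Pedersen ideal. -/
instance : TopologicalSpace (QuasiTrace R) :=
  TopologicalSpace.induced (fun τ => fun a : pedersen R => τ.toFun a) inferInstance

variable {R}

/-- The zero quasitrace. -/
def QuasiTrace.IsZero (τ : QuasiTrace R) : Prop := ∀ a : R, τ.toFun a = 0

/-- The dimension function `d_τ(a) = lim_{ε → 0} τ(f_ε(a))`. -/
def dTau (τ : QuasiTrace R) (a : R) : ℝ≥0∞ :=
  ⨆ n : ℕ, τ.toFun (fEps (1 / (n + 1)) a)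

/-- `ω(a)` relative to a set `S` of quasitraces:
`lim_n sup {d_τ(a) - τ(f_{1/n}(a)) : τ ∈ S}`. -/
def omegaOn (S : Set (QuasiTrace R)) (a : R) : ℝ≥0∞ :=
  ⨅ n : ℕ, ⨆ τ ∈ S, (dTau τ a - τ.toFun (fEps (1 / (n + 1)) a))

/-- The seminorm `‖x‖_{2,S}`. -/
def norm2On (S : Set (QuasiTrace R)) (x : R) : ℝ≥0∞ :=
  ⨆ τ ∈ S, (τ.toFun (star x * x)) ^ (1 / 2 : ℝ)

variable (R)

/-- `R` has (Blackadar's) strict comparison. -/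
def StrictComparison : Prop :=
  ∀ a b : R, 0 ≤ a → 0 ≤ b →
    (∀ τ : QuasiTrace R, ¬ τ.IsZero → dTau τ a < dTau τ b) → CuntzLE a b

/-- `R` is a simple C*-algebra: it is nonzero and has no nontrivial closed two-sided ideals. -/
def IsSimpleCStar : Prop :=
  (∃ x : R, x ≠ 0) ∧
    ∀ I : TwoSidedIdeal R, IsClosed (I : Set R) → (I : Set R) = {0} ∨ (I : Set R) = Set.univ

/-- `R` is σ-unital: it contains a strictly positive element `h`
(equivalently, `Her(h) = R`). -/
def SigmaUnital : Prop := ∃ h : R, 0 ≤ h ∧ her h = Set.univ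

/-- `R` is elementary: isomorphic to the algebra of compact operators on some Hilbert space. -/
def IsElementary : Prop :=
  ∃ (H : Type) (_ : NormedAddCommGroup H) (_ : InnerProductSpace ℂ H) (_ : CompleteSpace H)
    (φ : R →⋆ₙₐ[ℂ] (H →L[ℂ] H)), Function.Injective φ ∧
      Set.range φ = {T : H →L[ℂ] H | IsCompactOperator (⇑T)}

/-- `R` is purely infinite: `R ≇ ℂ` and `b ≲ a` for all nonzero positive `a, b`. -/
def PurelyInfinite : Prop :=
  (¬ ∃ φ : R →⋆ₙₐ[ℂ] ℂ, Function.Bijective φ) ∧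
    ∀ a b : R, 0 ≤ a → 0 ≤ b → a ≠ 0 → b ≠ 0 → CuntzLE b a

/-- `R` is finite: its minimal unitization contains no non-unitary isometry. -/
def IsFiniteCStar : Prop :=
  ∀ v : Unitization ℂ R, star v * v = 1 → v * star v = 1

/-- `R` has stable rank one: the invertible elements are dense in the minimal unitization. -/
def StableRankOne : Prop := Dense {x : Unitization ℂ R | IsUnit x}

variable {R}

/-- `c` represents `n·[a]` in the Cuntz semigroup: it is the sum of `n` mutually
orthogonal positive elements, each Cuntz equivalent to `a`. -/
def IsNFoldRep (n : ℕ) (a c : R) : Prop :=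
  ∃ f : Fin n → R, (∀ i, 0 ≤ f i) ∧ (∀ i, CuntzEq (f i) a) ∧
    (∀ i j, i ≠ j → f i * f j = 0) ∧ c = ∑ i, f i

/-- `s` represents the supremum of the increasing sequence of Cuntz classes `[y n]`. -/
def IsCuntzLUB (y : ℕ → R) (s : R) : Prop :=
  (∀ n, CuntzLE (y n) s) ∧ ∀ c : R, 0 ≤ c → (∀ n, CuntzLE (y n) c) → CuntzLE s c

/-- `[x] ≪ [y]` in the Cuntz semigroup. -/
def CuntzWayBelow (x y : R) : Prop :=
  ∀ yseq : ℕ → R, (∀ n, 0 ≤ yseq n) → (∀ n, CuntzLE (yseq n) (yseq (n + 1))) →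
    ∀ s : R, 0 ≤ s → IsCuntzLUB yseq s → CuntzLE y s → ∃ n₀, CuntzLE x (yseq n₀)

variable (R)

/-- The Cuntz semigroup of `R` is almost unperforated. -/
def AlmostUnperforated : Prop :=
  ∀ (a b : R) (k : ℕ), 1 ≤ k → 0 ≤ a → 0 ≤ b →
    (∃ c d : R, IsNFoldRep (k + 1) a c ∧ IsNFoldRep k b d ∧ CuntzLE c d) → CuntzLE a b

/-- The Cuntz semigroup of `R` is almost divisible. -/
def AlmostDivisible : Prop :=
  ∀ x y : R, 0 ≤ x → 0 ≤ y → CuntzWayBelow x y → ∀ n : ℕ, 1 ≤ n →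
    ∃ z : R, 0 ≤ z ∧ (∃ c : R, IsNFoldRep n z c ∧ CuntzLE c y) ∧
      (∃ c : R, IsNFoldRep (n + 1) z c ∧ CuntzLE x c)

/-! ### The stabilization `W ≅ A ⊗ K` -/

variable (A W : Type*) [NonUnitalCStarAlgebra A] [PartialOrder A] [StarOrderedRing A]
  [NonUnitalCStarAlgebra W] [PartialOrder W] [StarOrderedRing W]

/-- A realization of `W` as the stabilization `A ⊗ K`: the maps `emb i j : a ↦ a ⊗ e_{ij}`
are isometric, satisfy the matrix-unit relations, and have dense joint linear span. -/
structure Stabilization : Type _ where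
  emb : ℕ → ℕ → (A →ₗ[ℂ] W)
  emb_mul : ∀ (i j k l : ℕ) (a b : A),
    emb i j a * emb k l b = if j = k then emb i l (a * b) else 0
  emb_star : ∀ (i j : ℕ) (a : A), star (emb i j a) = emb j i (star a)
  norm_emb : ∀ (i j : ℕ) (a : A), ‖emb i j a‖ = ‖a‖
  dense_span : Dense (Submodule.span ℂ {w : W | ∃ (i j : ℕ) (a : A), w = emb i j a} : Set W)

variable {A W}

/-- The set `QT(A)` of quasitraces normalized on `A ⊆ A ⊗ K`. -/
def QTSet (SB : Stabilization A W) : Set (QuasiTrace W) :=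
  {τ | (⨆ a : {a : A // 0 ≤ a ∧ ‖a‖ ≤ 1}, τ.toFun (SB.emb 0 0 a)) = 1}

/-- The quasitraces normalized on the hereditary subalgebra `Her(c) ⊆ W`. -/
def QTSetHer (c : W) : Set (QuasiTrace W) :=
  {τ : QuasiTrace W |
    (⨆ a : {a : W // a ∈ her c ∧ 0 ≤ a ∧ ‖a‖ ≤ 1}, τ.toFun a) = 1}

/-- `ω(a) = 0` for `a ∈ W = A ⊗ K`, computed relative to `\overline{QT(Her(e))}^w`
for any nonzero `e ∈ Ped(A)₊`. -/
def OmegaZero (SB : Stabilization A W) (a : W) : Prop :=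
  ∀ e : A, 0 ≤ e → e ≠ 0 → e ∈ pedersen A →
    omegaOn (closure (QTSetHer (SB.emb 0 0 e))) a = 0

/-- `A` has tracial approximate oscillation zero. -/
def TAOZ (SB : Stabilization A W) : Prop :=
  ∀ e : A, 0 ≤ e → e ≠ 0 → e ∈ pedersen A →
    ∀ a : W, 0 ≤ a → a ∈ pedersen W →
      ∃ b : ℕ → W, (∀ n, 0 ≤ b n) ∧ (∀ n, ‖b n‖ ≤ 1) ∧
        (∀ n, b n ∈ pedersenIn (her a)) ∧
        Tendsto (fun n => omegaOn (closure (QTSetHer (SB.emb 0 0 e))) (b n)) atTop (𝓝 0) ∧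
        Tendsto (fun n => norm2On (closure (QTSetHer (SB.emb 0 0 e))) (a - b n)) atTop (𝓝 0)

/-! ### Affine functions on the quasitrace cone and the map `Γ` -/

variable (W) in
/-- `ρ = t·τ + (1-t)·σ` as quasitraces. -/
def IsCombo (t : ℝ) (τ σ ρ : QuasiTrace W) : Prop :=
  ∀ a : W, 0 ≤ a →
    ρ.toFun a = ENNReal.ofReal t * τ.toFun a + ENNReal.ofReal (1 - t) * σ.toFun a

variable (W) in
/-- `f` is affine on the quasitrace cone. -/
def IsAffineQT (f : QuasiTrace W → ℝ≥0∞) : Prop :=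
  ∀ t : ℝ, 0 ≤ t → t ≤ 1 → ∀ τ σ ρ : QuasiTrace W, IsCombo W t τ σ ρ →
    f ρ = ENNReal.ofReal t * f τ + ENNReal.ofReal (1 - t) * f σ

variable (W) in
/-- Membership in `Aff₊(QT̃(A))`. -/
def MemAffPlus (f : QuasiTrace W → ℝ≥0∞) : Prop :=
  (∀ τ, f τ = 0) ∨
    (Continuous f ∧ IsAffineQT W f ∧ (∀ τ, f τ < ∞) ∧
      (∀ τ : QuasiTrace W, ¬ τ.IsZero → 0 < f τ) ∧
      (∀ τ : QuasiTrace W, τ.IsZero → f τ = 0))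

variable (W) in
/-- Membership in `LAff₊(QT̃(A))`. -/
def MemLAffPlus (f : QuasiTrace W → ℝ≥0∞) : Prop :=
  ∃ g : ℕ → QuasiTrace W → ℝ≥0∞, (∀ n, MemAffPlus W (g n)) ∧
    (∀ n τ, g n τ ≤ g (n + 1) τ) ∧ ∀ τ, f τ = ⨆ n, g n τ

variable (W) in
/-- The canonical map `Γ : Cu(A) → LAff₊(QT̃(A))`, `Γ([a])(τ) = d_τ(a)`, is surjective. -/
def GammaSurjective : Prop :=
  ∀ f : QuasiTrace W → ℝ≥0∞, MemLAffPlus W f →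
    ∃ a : W, 0 ≤ a ∧ ∀ τ : QuasiTrace W, dTau τ a = f τ


/-- The standard Hilbert `A`-module `ℓ²(A)`, realized inside `W = A ⊗ K` as the closed
"first column" `\overline{W·(A ⊗ e₁₁)}`, with `A`-valued inner product `⟨x, y⟩ = x* y`. -/
def colSpace (SB : Stabilization A W) : Set W :=
  closure {z : W | ∃ (w : W) (c : A), z = w * SB.emb 0 0 c}

/-- The Hilbert `A`-module `H_a = \overline{a · ℓ²(A)}`, realized inside `W = A ⊗ K`. -/
def Hmod (SB : Stabilization A W) (a : W) : Set W :=
  closure {z : W | ∃ (w : W) (c : A), z = a * (w * SB.emb 0 0 c)}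

/-- `N` is a closed Hilbert `A`-submodule (of `ℓ²(A)`, realized inside `W`). -/
def IsClosedSubmodule (SB : Stabilization A W) (N : Set W) : Prop :=
  IsClosed N ∧ (0 : W) ∈ N ∧ (∀ x ∈ N, ∀ y ∈ N, x + y ∈ N) ∧
    (∀ (c : ℂ), ∀ x ∈ N, c • x ∈ N) ∧ ∀ x ∈ N, ∀ c : A, x * SB.emb 0 0 c ∈ N

/-!
The embedding is a strong sum of pieces, one for each layer of the spectrum of `a`. Since
`ω(a) = 0`, the dimension `τ ↦ d_τ(a)` is a uniform limit of the functions `τ ↦ τ(f_ε(a))`, so a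
compactness argument (ultralimits of quasitraces, made lower semicontinuous) turns
`d_τ(a) < d_τ(b)` into a gap `d_τ(a) + κ ≤ d_τ(b)` that is uniform over the normalized
quasitraces; moreover the part of `a` over `(0, 2δ)` has uniformly small dimension for small `δ`.

Strict comparison and Rørdam's lemma provide `v` in the closed right ideal of `b` such that `v* v`
is a unit for the next layer `f_δ'(a) - f_δ(a)`, hence `z` in that ideal with
`z* z = f_δ'(a) - f_δ(a)`. Cutting `b` down by `1 - v v*` costs at most the dimension of the part
of `a` over `(0, 2δ)`, and if `δ'` is small the part of `a` over `(0, 2δ')` again fits into what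
is left with a uniform gap. Iterating gives elements `z n` with orthogonal ranges whose squares
`(z n)* (z n)` telescope to `f_δ(a)` with `δ → 0`, an approximate unit for the closed right ideal
of `a`. Thus `y ↦ ∑ (z n) y` converges there and preserves inner products.
-/

section Cutoff

@[fun_prop]
lemma continuous_cutoff (ε : ℝ) : Continuous (cutoff ε) := by
  unfold cutoff
  fun_prop

@[simp]
lemma cutoff_zero (ε : ℝ) : cutoff ε 0 = 0 := by
  simp [cutoff]

lemma cutoff_nonneg (ε t : ℝ) : 0 ≤ cutoff ε t := by
  simp [cutoff]

lemma cutoff_le_one (ε t : ℝ) : cutoff ε t ≤ 1 := by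
  simp [cutoff]

lemma cutoff_eq_one {ε t : ℝ} (hε : 0 < ε) (h : ε ≤ t) : cutoff ε t = 1 := by
  have : 1 ≤ 2 * t / ε - 1 := by
    rw [le_sub_iff_add_le, le_div_iff₀ hε]
    linarith
  exact min_eq_left (le_max_of_le_right this)

lemma cutoff_eq_zero {ε t : ℝ} (hε : 0 < ε) (h : t ≤ ε / 2) : cutoff ε t = 0 := by
  have : 2 * t / ε - 1 ≤ 0 := by
    rw [sub_nonpos, div_le_iff₀ hε]
    linarith
  simp [cutoff, max_eq_left this]

lemma cutoff_mul_cutoff {ε ε' : ℝ} (hε' : 0 < ε') (h : ε' ≤ ε / 2) (t : ℝ) :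
    cutoff ε' t * cutoff ε t = cutoff ε t := by
  rcases le_total t (ε / 2) with ht | ht
  · rw [cutoff_eq_zero (by linarith) ht, mul_zero]
  · rw [cutoff_eq_one hε' (h.trans ht), one_mul]

lemma cutoff_anti {ε ε' t : ℝ} (hε' : 0 < ε') (h : ε' ≤ ε) (ht : 0 ≤ t) :
    cutoff ε t ≤ cutoff ε' t := by
  unfold cutoff
  gcongr

/-- A continuous version of `t ↦ f_ε(t) / t`, witnessing that `f_ε(a)` is a multiple of `a`. -/
def cutoffDiv (ε : ℝ) : ℝ → ℝ := fun t => cutoff ε t / max t (ε / 2)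

lemma continuous_cutoffDiv {ε : ℝ} (hε : 0 < ε) : Continuous (cutoffDiv ε) :=
  (continuous_cutoff ε).div (by fun_prop) fun _ =>
    (lt_max_of_lt_right (half_pos hε)).ne'

@[simp]
lemma cutoffDiv_zero (ε : ℝ) : cutoffDiv ε 0 = 0 := by
  simp [cutoffDiv]

lemma cutoffDiv_nonneg {ε : ℝ} (hε : 0 < ε) (t : ℝ) : 0 ≤ cutoffDiv ε t :=
  div_nonneg (cutoff_nonneg ε t) (le_max_of_le_right (half_pos hε).le)

lemma mul_cutoffDiv {ε : ℝ} (hε : 0 < ε) (t : ℝ) : t * cutoffDiv ε t = cutoff ε t := by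
  unfold cutoffDiv
  rcases le_total t (ε / 2) with h | h
  · simp [cutoff_eq_zero hε h]
  · rw [max_eq_left h, mul_div_cancel₀ _ (by linarith : t ≠ 0)]

end Cutoff

section FunctionalCalculus

variable {B : Type*} [NonUnitalCStarAlgebra B]

lemma star_cfcₙ_real (f : ℝ → ℝ) (a : B) : star (cfcₙ f a) = cfcₙ f a :=
  (IsSelfAdjoint.cfcₙ (f := f) (a := a)).star_eq

lemma self_mul_cfcₙ {f : ℝ → ℝ} (hf : Continuous f) (hf0 : f 0 = 0) {a : B}
    (ha : IsSelfAdjoint a) : a * cfcₙ f a = cfcₙ (fun t => t * f t) a := by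
  rw [cfcₙ_mul (fun t => t) f a, cfcₙ_id' ℝ a]

lemma cfcₙ_mul_self {f : ℝ → ℝ} (hf : Continuous f) (hf0 : f 0 = 0) {a : B}
    (ha : IsSelfAdjoint a) : cfcₙ f a * a = cfcₙ (fun t => f t * t) a := by
  rw [cfcₙ_mul f (fun t => t) a, cfcₙ_id' ℝ a]

lemma map_cfcₙ_of_continuous {D : Type*} [NonUnitalCStarAlgebra D] (φ : B →⋆ₙₐ[ℂ] D) {f : ℝ → ℝ}
    (hf : Continuous f) (hf0 : f 0 = 0) {a : B} (ha : IsSelfAdjoint a) :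
    φ (cfcₙ f a) = cfcₙ f (φ a) :=
  NonUnitalStarAlgHom.map_cfcₙ (S := ℂ) φ f a hf.continuousOn hf0
    ((NonUnitalStarAlgHom.instContinuousLinearMapClassComplex (F := B →⋆ₙₐ[ℂ] D)).map_continuous φ)
    ha (ha.map φ)

lemma map_prod_cfcₙ {D : Type*} [NonUnitalCStarAlgebra D] (φ : (B × B) →⋆ₙₐ[ℂ] D) {f : ℝ → ℝ}
    (hf : Continuous f) (hf0 : f 0 = 0) {a b : B} (ha : IsSelfAdjoint a) (hb : IsSelfAdjoint b) :
    φ (cfcₙ f a, cfcₙ f b) = cfcₙ f (φ (a, b)) := by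
  have hab : IsSelfAdjoint ((a, b) : B × B) := Prod.ext ha.star_eq hb.star_eq
  rw [← cfcₙ_map_prod (S := ℂ) f a b hf.continuousOn hab ha hb,
    map_cfcₙ_of_continuous _ hf hf0 hab]

lemma commute_map_prod_cfcₙ {D : Type*} [NonUnitalCStarAlgebra D] (φ : (B × B) →⋆ₙₐ[ℂ] D)
    {f : ℝ → ℝ} (hf : Continuous f) (hf0 : f 0 = 0) {a b : B} (ha : IsSelfAdjoint a)
    (hb : IsSelfAdjoint b) {X : D} (h : Commute (φ (a, b)) X) :
    Commute (φ (cfcₙ f a, cfcₙ f b)) X := by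
  rw [map_prod_cfcₙ φ hf hf0 ha hb]
  exact h.cfcₙ_real f

/-- The embedding of `B ⊕ B` into `M₂(B)` as diagonal matrices. -/
def diagHom (B : Type*) [NonUnitalCStarAlgebra B] :
    (B × B) →⋆ₙₐ[ℂ] CStarMatrix (Fin 2) (Fin 2) B where
  toFun p := CStarMatrix.ofMatrix !![p.1, 0; 0, p.2]
  map_smul' r p := by
    ext i j; fin_cases i <;> fin_cases j <;> simp [CStarMatrix.ofMatrix_apply]
  map_zero' := by
    ext i j; fin_cases i <;> fin_cases j <;> simp [CStarMatrix.ofMatrix_apply]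
  map_add' p q := by
    ext i j; fin_cases i <;> fin_cases j <;> simp [CStarMatrix.ofMatrix_apply]
  map_mul' p q := by
    ext i j; fin_cases i <;> fin_cases j <;>
      simp [CStarMatrix.ofMatrix_apply, CStarMatrix.mul_apply]
  map_star' p := by
    ext i j; fin_cases i <;> fin_cases j <;>
      simp [CStarMatrix.ofMatrix_apply, CStarMatrix.star_apply]

lemma star_fEps (ε : ℝ) (a : B) : star (fEps ε a) = fEps ε a :=
  star_cfcₙ_real _ a

lemma fEps_mul_fEps {ε ε' : ℝ} (hε' : 0 < ε') (h : ε' ≤ ε / 2) (a : B) :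
    fEps ε' a * fEps ε a = fEps ε a := by
  unfold fEps
  rw [← cfcₙ_mul (cutoff ε') (cutoff ε) a]
  simp only [cutoff_mul_cutoff hε' h]

lemma norm_fEps_le_one (ε : ℝ) (a : B) : ‖fEps ε a‖ ≤ 1 :=
  norm_cfcₙ_le fun t _ => by
    rw [Real.norm_of_nonneg (cutoff_nonneg ε t)]
    exact cutoff_le_one ε t

lemma fEps_eq_mul_cfcₙ {ε : ℝ} (hε : 0 < ε) {a : B} (ha : IsSelfAdjoint a) :
    fEps ε a = a * cfcₙ (cutoffDiv ε) a := by
  simp only [self_mul_cfcₙ (continuous_cutoffDiv hε) (cutoffDiv_zero ε) ha, mul_cutoffDiv hε]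
  rfl

lemma fEps_eq_cfcₙ_mul {ε : ℝ} (hε : 0 < ε) {a : B} (ha : IsSelfAdjoint a) :
    fEps ε a = cfcₙ (cutoffDiv ε) a * a := by
  simp only [cfcₙ_mul_self (continuous_cutoffDiv hε) (cutoffDiv_zero ε) ha, mul_comm _ (_ : ℝ),
    mul_cutoffDiv hε]
  rfl

variable [PartialOrder B] [StarOrderedRing B]

/-- Berberian's trick: `x a = b x` says that `diag(a, b)` commutes with the matrix unit carrying
`x`. -/
lemma semiconjBy_cfcₙ {f : ℝ → ℝ} (hf : Continuous f) (hf0 : f 0 = 0) {x a b : B}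
    (ha : IsSelfAdjoint a) (hb : IsSelfAdjoint b) (h : SemiconjBy x a b) :
    SemiconjBy x (cfcₙ f a) (cfcₙ f b) := by
  let X : CStarMatrix (Fin 2) (Fin 2) B := CStarMatrix.ofMatrix !![0, 0; x, 0]
  have hcomm (c d : B) : Commute (diagHom B (c, d)) X ↔ SemiconjBy x c d := by
    rw [Commute, SemiconjBy, SemiconjBy, ← CStarMatrix.ext_iff]
    simp [Fin.forall_fin_two, X, diagHom, CStarMatrix.ofMatrix_apply, CStarMatrix.mul_apply,
      eq_comm]
  have hX := commute_map_prod_cfcₙ (diagHom B) hf hf0 ha hb (X := X) ((hcomm a b).2 h)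
  exact (hcomm _ _).1 hX

lemma exists_star_mul_self_eq_cfcₙ {g : ℝ → ℝ} (hg : Continuous g) (hg0 : g 0 = 0)
    (hnonneg : ∀ t, 0 ≤ g t) (x : B) :
    ∃ m : B, star (x * m) * (x * m) = cfcₙ (fun t => t * g t) (star x * x) ∧
      x * m * star (x * m) = cfcₙ (fun t => t * g t) (x * star x) := by
  have hs : Continuous fun t => √(g t) := hg.sqrt
  have hs0 : √(g 0) = 0 := by simp [hg0]
  have hmul (t : ℝ) : √(g t) * √(g t) = g t := Real.mul_self_sqrt (hnonneg t)
  set k := cfcₙ (fun t => √(g t)) (star x * x) with hk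
  have hks : star k = k := star_cfcₙ_real _ _
  refine ⟨k, ?_, ?_⟩
  · calc star (x * k) * (x * k) = k * (star x * x) * k := by
          rw [star_mul, hks]; simp only [mul_assoc]
      _ = cfcₙ (fun t => √(g t) * t * √(g t)) (star x * x) := by
          rw [hk, cfcₙ_mul_self hs hs0 (.star_mul_self x),
            ← cfcₙ_mul (fun t => √(g t) * t) (fun t => √(g t)) _
              (hs.mul continuous_id').continuousOn (by simp) hs.continuousOn hs0]
      _ = cfcₙ (fun t => t * g t) (star x * x) := by
          congr 1
          funext t
          rw [mul_right_comm, hmul, mul_comm]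
  · calc x * k * star (x * k) = x * (k * k) * star x := by
          rw [star_mul, hks]; simp only [mul_assoc]
      _ = x * cfcₙ g (star x * x) * star x := by
          rw [hk, ← cfcₙ_mul (fun t => √(g t)) (fun t => √(g t)) _ hs.continuousOn hs0
            hs.continuousOn hs0]
          simp only [hmul]
      _ = cfcₙ g (x * star x) * (x * star x) := by
          rw [(semiconjBy_cfcₙ hg hg0 (.star_mul_self x) (.mul_star_self x)
            (by rw [SemiconjBy, mul_assoc] : SemiconjBy x (star x * x) (x * star x))).eq, mul_assoc]
      _ = cfcₙ (fun t => t * g t) (x * star x) := by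
          rw [cfcₙ_mul_self hg hg0 (.mul_star_self x)]
          simp only [mul_comm]

lemma cfcₙ_congr_of_nonneg {f g : ℝ → ℝ} {a : B} (ha : 0 ≤ a) (h : ∀ t, 0 ≤ t → f t = g t) :
    cfcₙ f a = cfcₙ g a :=
  cfcₙ_congr fun t ht => h t (quasispectrum_nonneg_of_nonneg a ha t ht)

lemma cfcₙ_mono_of_nonneg {f g : ℝ → ℝ} (hf : Continuous f) (hg : Continuous g) (hf0 : f 0 = 0)
    (hg0 : g 0 = 0) {a : B} (ha : 0 ≤ a) (h : ∀ t, 0 ≤ t → f t ≤ g t) :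
    cfcₙ f a ≤ cfcₙ g a :=
  cfcₙ_mono (fun t ht => h t (quasispectrum_nonneg_of_nonneg a ha t ht)) hf.continuousOn
    hg.continuousOn hf0 hg0

lemma cfcₙ_nonneg_of_nonneg {f : ℝ → ℝ} {a : B} (ha : 0 ≤ a) (h : ∀ t, 0 ≤ t → 0 ≤ f t) :
    0 ≤ cfcₙ f a :=
  cfcₙ_nonneg fun t ht => h t (quasispectrum_nonneg_of_nonneg a ha t ht)

lemma norm_cfcₙ_le_of_nonneg {f : ℝ → ℝ} {a : B} (ha : 0 ≤ a) {c : ℝ}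
    (h : ∀ t, 0 ≤ t → |f t| ≤ c) : ‖cfcₙ f a‖ ≤ c :=
  norm_cfcₙ_le fun t ht => h t (quasispectrum_nonneg_of_nonneg a ha t ht)

lemma fEps_nonneg (ε : ℝ) (a : B) : 0 ≤ fEps ε a :=
  cfcₙ_nonneg fun t _ => cutoff_nonneg ε t

lemma norm_fEps_mul_self_sub_le {ε : ℝ} (hε : 0 < ε) {a : B} (ha : 0 ≤ a) :
    ‖fEps ε a * a - a‖ ≤ ε := by
  have h : fEps ε a * a - a = cfcₙ (fun t => cutoff ε t * t - t) a := by
    rw [cfcₙ_sub (fun t => cutoff ε t * t) (fun t => t) a, cfcₙ_id' ℝ a,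
      ← cfcₙ_mul_self (continuous_cutoff ε) (cutoff_zero ε) ha.isSelfAdjoint]
    rfl
  rw [h]
  refine norm_cfcₙ_le_of_nonneg ha fun t ht => ?_
  rcases le_total ε t with h | h
  · simpa [cutoff_eq_one hε h] using hε.le
  · rw [abs_le]
    constructor <;> nlinarith [cutoff_nonneg ε t, cutoff_le_one ε t]

end FunctionalCalculus

section OrderedAlgebra

variable {B : Type*} [NonUnitalCStarAlgebra B] [PartialOrder B] [StarOrderedRing B]

lemma conjugate_le_norm_smul_mul_self {x p : B} (hx : IsSelfAdjoint x) (hp : IsSelfAdjoint p) :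
    p * x * p ≤ ‖x‖ • (p * p) := by
  simpa only [hp.star_eq] using CStarAlgebra.star_left_conjugate_le_norm_smul (a := p) hx

lemma mul_self_le_self {u : B} (hu : 0 ≤ u) (hu1 : ‖u‖ ≤ 1) : u * u ≤ u := by
  set s := CFC.sqrt u
  have hss : s * s = u := CFC.sqrt_mul_sqrt_self u hu
  calc u * u = s * u * s := by rw [← hss]; noncomm_ring
    _ ≤ ‖u‖ • (s * s) := conjugate_le_norm_smul_mul_self hu.isSelfAdjoint
        (CFC.sqrt_nonneg u).isSelfAdjoint
    _ ≤ u := by simpa [hss] using smul_le_smul_of_nonneg_right hu1 hu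

/-- The product `(1 - f) x (1 - f)`, expanded because `B` need not have a unit. -/
lemma one_sub_conjugate_nonneg {f x : B} (hf : IsSelfAdjoint f) (hx : 0 ≤ x) :
    0 ≤ f * x * f - f * x - x * f + x := by
  obtain ⟨s, rfl⟩ := CStarAlgebra.nonneg_iff_eq_star_mul_self.1 hx
  convert star_mul_self_nonneg (s * f - s) using 1
  simp only [star_sub, star_mul, hf.star_eq]
  noncomm_ring

lemma star_add_mul_add_le (x y : B) :
    star (x + y) * (x + y) ≤ (2 : ℝ) • (star x * x + star y * y) := by
  rw [← sub_nonneg]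
  convert star_mul_self_nonneg (x - y) using 1
  rw [two_smul]
  simp only [star_add, star_sub]
  noncomm_ring

lemma norm_add_le_one_of_mul_eq_zero {f g : B} (hf : 0 ≤ f) (hg : 0 ≤ g) (hf1 : ‖f‖ ≤ 1)
    (hg1 : ‖g‖ ≤ 1) (hfg : f * g = 0) : ‖f + g‖ ≤ 1 := by
  have hgf : g * f = 0 := by
    simpa [hf.isSelfAdjoint.star_eq, hg.isSelfAdjoint.star_eq] using congrArg star hfg
  have hsa : IsSelfAdjoint (f + g) := (add_nonneg hf hg).isSelfAdjoint
  have hsq : (f + g) * (f + g) ≤ f + g := by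
    calc (f + g) * (f + g) = f * f + g * g := by simp [mul_add, add_mul, hfg, hgf]
      _ ≤ f + g := add_le_add (mul_self_le_self hf hf1) (mul_self_le_self hg hg1)
  have hnorm := CStarAlgebra.norm_le_norm_of_nonneg_of_le hsa.mul_self_nonneg hsq
  rw [hsa.norm_mul_self] at hnorm
  nlinarith [norm_nonneg (f + g)]

end OrderedAlgebra

section ClosedRightIdeal

section Basic

variable {B : Type*} [NonUnitalCStarAlgebra B]

/-- The closed right ideal `closure (c B)` generated by `c`. For positive `c` it plays the role of
the Hilbert module `H_c` when `B` acts on itself. -/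
def closedRightIdeal (c : B) : Submodule ℂ B :=
  (LinearMap.range (LinearMap.mulLeft ℂ c)).topologicalClosure

lemma isClosed_closedRightIdeal (c : B) : IsClosed (closedRightIdeal c : Set B) :=
  Submodule.isClosed_topologicalClosure _

lemma mul_mem_closedRightIdeal (c y : B) : c * y ∈ closedRightIdeal c :=
  Submodule.le_topologicalClosure _ ⟨y, rfl⟩

lemma closedRightIdeal_induction {c x : B} (hx : x ∈ closedRightIdeal c) {S : Set B}
    (hS : IsClosed S) (h : ∀ y, c * y ∈ S) : x ∈ S :=
  closure_minimal (by rintro _ ⟨y, rfl⟩; exact h y) hS hx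

lemma mul_right_mem_closedRightIdeal {c x : B} (hx : x ∈ closedRightIdeal c) (z : B) :
    x * z ∈ closedRightIdeal c :=
  closedRightIdeal_induction hx (S := (· * z) ⁻¹' closedRightIdeal c)
    ((isClosed_closedRightIdeal c).preimage (by fun_prop)) fun y => by
      rw [Set.mem_preimage, mul_assoc]
      exact mul_mem_closedRightIdeal c (y * z)

lemma mem_closedRightIdeal_trans {b c x : B} (hx : x ∈ closedRightIdeal c)
    (hc : c ∈ closedRightIdeal b) : x ∈ closedRightIdeal b :=
  closedRightIdeal_induction hx (isClosed_closedRightIdeal b) fun y =>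
    mul_right_mem_closedRightIdeal hc y

lemma mul_eq_zero_of_mem_closedRightIdeal {c x y : B} (hx : x ∈ closedRightIdeal c)
    (h : y * c = 0) : y * x = 0 :=
  closedRightIdeal_induction hx (S := {x | y * x = 0})
    (isClosed_eq (by fun_prop) (by fun_prop)) fun z => by simp [← mul_assoc, h]

lemma mul_eq_self_of_mem_closedRightIdeal {c x y : B} (hx : x ∈ closedRightIdeal c)
    (h : y * c = c) : y * x = x :=
  closedRightIdeal_induction hx (S := {x | y * x = x})
    (isClosed_eq (by fun_prop) (by fun_prop)) fun z => by simp [← mul_assoc, h]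

lemma fEps_mem_closedRightIdeal {ε : ℝ} (hε : 0 < ε) {a : B} (ha : IsSelfAdjoint a) :
    fEps ε a ∈ closedRightIdeal a := by
  rw [fEps_eq_mul_cfcₙ hε ha]
  exact mul_mem_closedRightIdeal _ _

end Basic

variable {B : Type*} [NonUnitalCStarAlgebra B] [PartialOrder B] [StarOrderedRing B]

lemma tendsto_fEps_mul {a x : B} (ha : 0 ≤ a) (hx : x ∈ closedRightIdeal a) :
    Tendsto (fun ε => fEps ε a * x) (𝓝[>] 0) (𝓝 x) := by
  rw [Metric.tendsto_nhds]
  intro η hη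
  obtain ⟨_, ⟨y, rfl⟩, hy⟩ := Metric.mem_closure_iff.1 hx (η / 3) (by linarith)
  rw [LinearMap.mulLeft_apply, dist_eq_norm] at hy
  have hsmall : Tendsto (fun ε : ℝ => ε * ‖y‖) (𝓝[>] 0) (𝓝 0) :=
    tendsto_nhdsWithin_of_tendsto_nhds (Continuous.tendsto' (by fun_prop) _ _ (by simp))
  filter_upwards [self_mem_nhdsWithin, hsmall.eventually_lt_const (show 0 < η / 3 by linarith)]
    with ε hε hεy
  have hgen : ‖(fEps ε a * a - a) * y‖ ≤ ε * ‖y‖ :=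
    (norm_mul_le _ _).trans (by gcongr; exact norm_fEps_mul_self_sub_le hε ha)
  have herr : ‖fEps ε a * (x - a * y)‖ ≤ ‖x - a * y‖ :=
    (norm_mul_le _ _).trans (mul_le_of_le_one_left (norm_nonneg _) (norm_fEps_le_one _ _))
  rw [dist_eq_norm]
  calc ‖fEps ε a * x - x‖
      = ‖fEps ε a * (x - a * y) + (fEps ε a * a - a) * y - (x - a * y)‖ := by
        congr 1; noncomm_ring
    _ ≤ ‖fEps ε a * (x - a * y)‖ + ‖(fEps ε a * a - a) * y‖ + ‖x - a * y‖ :=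
        (norm_sub_le _ _).trans (by gcongr; exact norm_add_le _ _)
    _ < η := by linarith

lemma norm_fEps_mul_sub_sq_le {P y : B} (hy : 0 ≤ y) {r : ℝ} (h : P * star P ≤ r • y) {ε : ℝ}
    (hε : 0 < ε) : ‖fEps ε y * P - P‖ ^ 2 ≤ |r| * (2 * ε) := by
  set f := fEps ε y
  have hf : IsSelfAdjoint f := star_fEps ε y
  have hle : (f * P - P) * star (f * P - P) ≤ r • (f * y * f - f * y - y * f + y) := by
    rw [← sub_nonneg]
    convert one_sub_conjugate_nonneg hf (sub_nonneg.2 h) using 1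
    simp only [star_sub, star_mul, hf.star_eq, mul_sub, sub_mul, smul_add, smul_sub,
      mul_smul_comm, smul_mul_assoc, mul_assoc]
    abel
  have hnorm : ‖f * y * f - f * y - y * f + y‖ ≤ 2 * ε := by
    have hfy := norm_fEps_mul_self_sub_le hε hy
    have hfyf : ‖(f * y - y) * f‖ ≤ ε :=
      (norm_mul_le _ _).trans
        ((mul_le_of_le_one_right (norm_nonneg _) (norm_fEps_le_one ε y)).trans hfy)
    calc ‖f * y * f - f * y - y * f + y‖ = ‖(f * y - y) * f - (f * y - y)‖ := by
          congr 1; noncomm_ring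
      _ ≤ ‖(f * y - y) * f‖ + ‖f * y - y‖ := norm_sub_le _ _
      _ ≤ 2 * ε := by linarith
  calc ‖f * P - P‖ ^ 2 = ‖(f * P - P) * star (f * P - P)‖ := by
        rw [CStarRing.norm_self_mul_star, sq]
    _ ≤ ‖r • (f * y * f - f * y - y * f + y)‖ :=
        CStarAlgebra.norm_le_norm_of_nonneg_of_le (mul_star_self_nonneg _) hle
    _ ≤ |r| * (2 * ε) := by
        rw [norm_smul, Real.norm_eq_abs]
        gcongr

lemma mem_closedRightIdeal_of_mul_star_le {P y : B} (hy : 0 ≤ y) {r : ℝ}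
    (h : P * star P ≤ r • y) : P ∈ closedRightIdeal y := by
  have hbound : Tendsto (fun ε : ℝ => |r| * (2 * ε)) (𝓝[>] 0) (𝓝 0) :=
    tendsto_nhdsWithin_of_tendsto_nhds (Continuous.tendsto' (by fun_prop) _ _ (by simp))
  have hsq : Tendsto (fun ε : ℝ => ‖fEps ε y * P - P‖ ^ 2) (𝓝[>] 0) (𝓝 0) :=
    squeeze_zero' (.of_forall fun _ => by positivity)
      (eventually_mem_nhdsWithin.mono fun _ hε => norm_fEps_mul_sub_sq_le hy h hε) hbound
  have hlim : Tendsto (fun ε : ℝ => fEps ε y * P) (𝓝[>] 0) (𝓝 P) :=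
    tendsto_iff_norm_sub_tendsto_zero.2 (by simpa [Real.sqrt_sq] using hsq.sqrt)
  exact (isClosed_closedRightIdeal y).mem_of_tendsto hlim
    (eventually_mem_nhdsWithin.mono fun _ hε => mul_right_mem_closedRightIdeal
      (fEps_mem_closedRightIdeal hε hy.isSelfAdjoint) P)

lemma mem_closedRightIdeal_mul_star (P : B) : P ∈ closedRightIdeal (P * star P) :=
  mem_closedRightIdeal_of_mul_star_le (mul_star_self_nonneg P) (r := 1) (by simp)

lemma mem_closedRightIdeal_mul_self {p : B} (hp : IsSelfAdjoint p) :
    p ∈ closedRightIdeal (p * p) := by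
  simpa only [hp.star_eq] using mem_closedRightIdeal_mul_star p

lemma sqrt_mem_closedRightIdeal {y : B} (hy : 0 ≤ y) : CFC.sqrt y ∈ closedRightIdeal y := by
  simpa only [CFC.sqrt_mul_sqrt_self y hy] using
    mem_closedRightIdeal_mul_self (CFC.sqrt_nonneg y).isSelfAdjoint

lemma mem_closedRightIdeal_of_le {x y : B} (hx : 0 ≤ x) (hy : 0 ≤ y) {r : ℝ} (h : x ≤ r • y) :
    x ∈ closedRightIdeal y := by
  have hsqrt : CFC.sqrt x ∈ closedRightIdeal y :=
    mem_closedRightIdeal_of_mul_star_le hy (r := r) <| by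
      rwa [(CFC.sqrt_nonneg x).isSelfAdjoint.star_eq, CFC.sqrt_mul_sqrt_self x hx]
  simpa only [CFC.sqrt_mul_sqrt_self x hx] using
    mul_right_mem_closedRightIdeal hsqrt (CFC.sqrt x)

lemma self_mem_closedRightIdeal {a : B} (ha : 0 ≤ a) : a ∈ closedRightIdeal a :=
  mem_closedRightIdeal_of_le ha ha (r := 1) (by simp)

end ClosedRightIdeal

section Rordam

variable {B : Type*} [NonUnitalCStarAlgebra B] [PartialOrder B] [StarOrderedRing B]

lemma exists_star_mul_mul_eq {h p Q : B} {ε : ℝ} (hε : 0 < ε) (hh : IsSelfAdjoint h)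
    (hp : h * p = p) (hQ : ε • (h * h) ≤ h * (star Q * Q) * h) :
    ∃ y : B, star (Q * y) * (Q * p) = p := by
  -- `K = G - ε h²` with `G = h Q* Q h`, so `G p = (K + ε) p` and `l = K (K + ε)⁻¹` removes `K`.
  set K := h * (star Q * Q) * h - ε • (h * h) with hKdef
  have hK : 0 ≤ K := sub_nonneg.2 hQ
  set l := cfcₙ (fun t : ℝ => t / (|t| + ε)) K with hl
  have hcont : Continuous (fun t : ℝ => t / (|t| + ε)) :=
    Continuous.div (by fun_prop) (by fun_prop) fun t => by positivity
  have hlK : l * K + ε • l = K := by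
    rw [hl, cfcₙ_mul_self hcont (by simp) hK.isSelfAdjoint,
      ← cfcₙ_smul ε _ K hcont.continuousOn (by simp),
      ← cfcₙ_add (fun t => t / (|t| + ε) * t) (fun t => ε • (t / (|t| + ε))) K
        (hcont.mul continuous_id').continuousOn (by simp)
        (hcont.const_smul ε).continuousOn (by simp)]
    conv_rhs => rw [← cfcₙ_id' ℝ K]
    refine cfcₙ_congr_of_nonneg hK fun t ht => ?_
    rw [abs_of_nonneg ht, smul_eq_mul]
    field_simp
  have hGp : h * (star Q * Q) * h * p = K * p + ε • p := by
    rw [hKdef, sub_mul, smul_mul_assoc, mul_assoc h h p, hp, hp]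
    abel
  have hlGp : l * (h * (star Q * Q) * h * p) = K * p := by
    rw [hGp, mul_add, ← mul_assoc, mul_smul_comm, ← smul_mul_assoc, ← add_mul, hlK]
  refine ⟨ε⁻¹ • (h - h * l), ?_⟩
  calc star (Q * ε⁻¹ • (h - h * l)) * (Q * p)
      = ε⁻¹ • (h * (star Q * Q) * (h * p) - l * (h * (star Q * Q) * (h * p))) := by
        simp only [hp, star_mul, star_smul, star_sub, hh.star_eq, hl, star_cfcₙ_real, star_trivial,
          smul_mul_assoc, sub_mul, mul_assoc]
    _ = p := by
        rw [← mul_assoc _ h p, hlGp, hGp, add_sub_cancel_left, smul_smul, inv_mul_cancel₀ hε.ne',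
          one_smul]

lemma smul_fEps_mul_self_le_conjugate {ε : ℝ} (hε : 0 < ε) {r : B} (hr : 0 ≤ r) :
    (ε / 2) • (fEps ε r * fEps ε r) ≤ fEps ε r * r * fEps ε r := by
  have hr' := hr.isSelfAdjoint
  rw [fEps, cfcₙ_mul_self (continuous_cutoff _) (cutoff_zero _) hr',
    ← cfcₙ_mul (cutoff ε) (cutoff ε) r, ← cfcₙ_mul (fun t => cutoff ε t * t) (cutoff ε) r,
    ← cfcₙ_smul (ε / 2) _ r (by fun_prop) (by simp)]
  refine cfcₙ_mono_of_nonneg (by fun_prop) (by fun_prop) (by simp) (by simp) hr fun t _ => ?_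
  rw [smul_eq_mul]
  rcases le_total t (ε / 2) with h | h
  · simp [cutoff_eq_zero hε h]
  · nlinarith [mul_self_nonneg (cutoff ε t)]

/-- **Rørdam's lemma**, in the form producing an element of `closure (c B)`. -/
lemma CuntzLE.exists_star_mul_self_eq {r c : B} (hrc : CuntzLE r c) (hr : 0 ≤ r) (hc : 0 ≤ c)
    {η : ℝ} (hη : 0 < η) :
    ∃ v ∈ closedRightIdeal c, star v * v = fEps η r * fEps η r := by
  obtain ⟨x, hx⟩ := hrc
  obtain ⟨n, hn⟩ := ((tendsto_order.1 hx).2 (η / 8) (by linarith)).exists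
  set Q := CFC.sqrt c * x n with hQ
  have hQQ : star Q * Q = star (x n) * c * x n := by
    rw [hQ, star_mul, (CFC.sqrt_nonneg c).isSelfAdjoint.star_eq, mul_assoc,
      ← mul_assoc (CFC.sqrt c), CFC.sqrt_mul_sqrt_self c hc, mul_assoc]
  set h := fEps (η / 2) r
  set p := fEps η r
  have hh : IsSelfAdjoint h := star_fEps _ r
  have hrQ : h * (r - star Q * Q) * h ≤ (η / 8) • (h * h) :=
    (conjugate_le_norm_smul_mul_self (hr.isSelfAdjoint.sub (.star_mul_self _)) hh).trans
      (smul_le_smul_of_nonneg_right (hQQ ▸ hn.le) hh.mul_self_nonneg)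
  have hQh : (η / 8) • (h * h) ≤ h * (star Q * Q) * h := by
    calc (η / 8) • (h * h) = (η / 2 / 2) • (h * h) - (η / 8) • (h * h) := by
          rw [← sub_smul]; congr 1; ring
      _ ≤ h * r * h - h * (r - star Q * Q) * h :=
          sub_le_sub (smul_fEps_mul_self_le_conjugate (half_pos hη) hr) hrQ
      _ = h * (star Q * Q) * h := by noncomm_ring
  obtain ⟨y, hy⟩ := exists_star_mul_mul_eq (by linarith) hh
    (fEps_mul_fEps (half_pos hη) le_rfl r : h * p = p) hQh
  set Z := Q * y
  have hZ : Z ∈ closedRightIdeal c := mul_right_mem_closedRightIdeal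
    (mul_right_mem_closedRightIdeal (sqrt_mem_closedRightIdeal hc) _) y
  have hZZ := mul_star_self_nonneg Z
  refine ⟨CFC.sqrt (Z * star Z) * (Q * p), mul_right_mem_closedRightIdeal
    (mem_closedRightIdeal_trans (sqrt_mem_closedRightIdeal hZZ)
      (mul_right_mem_closedRightIdeal hZ _)) _, ?_⟩
  calc star (CFC.sqrt (Z * star Z) * (Q * p)) * (CFC.sqrt (Z * star Z) * (Q * p))
      = star (Q * p) * (CFC.sqrt (Z * star Z) * CFC.sqrt (Z * star Z)) * (Q * p) := by
        rw [star_mul (CFC.sqrt _), (CFC.sqrt_nonneg (Z * star Z)).isSelfAdjoint.star_eq]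
        simp only [mul_assoc]
    _ = star (star Z * (Q * p)) * (star Z * (Q * p)) := by
        rw [CFC.sqrt_mul_sqrt_self _ hZZ, star_mul (star Z), star_star]
        simp only [mul_assoc]
    _ = p * p := by rw [hy, star_fEps]

end Rordam

section PreQuasitrace

/-- A 2-quasitrace without the requirements of lower semicontinuity, density of the domain and
extendability to matrices. -/
structure IsPreQuasitrace {B : Type*} [NonUnitalCStarAlgebra B] [PartialOrder B]
    (t : B → ℝ≥0∞) : Prop where
  map_zero : t 0 = 0
  map_smul : ∀ (r : ℝ) (a : B), 0 < r → 0 ≤ a → t (r • a) = ENNReal.ofReal r * t a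
  map_add : ∀ a b : B, 0 ≤ a → 0 ≤ b → a * b = b * a → t (a + b) = t a + t b
  map_star_mul_self : ∀ x : B, t (star x * x) = t (x * star x)

lemma QuasiTrace.isPreQuasitrace {B : Type*} [NonUnitalCStarAlgebra B] [PartialOrder B]
    (τ : QuasiTrace B) : IsPreQuasitrace τ.toFun :=
  ⟨τ.map_zero, τ.map_smul, τ.map_add_of_commute, τ.map_star_mul_self⟩

variable {B : Type*} [NonUnitalCStarAlgebra B] [PartialOrder B] [StarOrderedRing B]
  {t : B → ℝ≥0∞}

lemma IsPreQuasitrace.mono_of_commute (ht : IsPreQuasitrace t) {x y : B} (hx : 0 ≤ x)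
    (hxy : x ≤ y) (hc : x * y = y * x) : t x ≤ t y := by
  have h := ht.map_add x (y - x) hx (sub_nonneg.2 hxy) (by rw [mul_sub, sub_mul, hc])
  rw [add_sub_cancel] at h
  exact h ▸ le_self_add

lemma IsPreQuasitrace.le_of_mul_eq (ht : IsPreQuasitrace t) {u z : B} (hu : 0 ≤ u)
    (hu1 : ‖u‖ ≤ 1) (hz : 0 ≤ z) (hz1 : ‖z‖ ≤ 1) (huz : u * z = z) : t z ≤ t u := by
  have hzu : z * u = z := by
    simpa [hu.isSelfAdjoint.star_eq, hz.isSelfAdjoint.star_eq] using congrArg star huz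
  refine ht.mono_of_commute hz ?_ (by rw [huz, hzu])
  calc z = u * z * u := by rw [huz, hzu]
    _ ≤ ‖z‖ • (u * u) := conjugate_le_norm_smul_mul_self hz.isSelfAdjoint hu.isSelfAdjoint
    _ ≤ u * u := by
        simpa using smul_le_smul_of_nonneg_right hz1 hu.isSelfAdjoint.mul_self_nonneg
    _ ≤ u := mul_self_le_self hu hu1

end PreQuasitrace

section DimensionFunction

variable {B : Type*} [NonUnitalCStarAlgebra B]

lemma tendsto_conjugate {ι : Type*} {l : Filter ι} {u : ι → B} {z : B}
    (hu1 : ∀ᶠ i in l, ‖u i‖ ≤ 1) (hu : ∀ i, IsSelfAdjoint (u i)) (hz : IsSelfAdjoint z)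
    (h : Tendsto (fun i => u i * z) l (𝓝 z)) : Tendsto (fun i => u i * z * u i) l (𝓝 z) := by
  have h' : Tendsto (fun i => z * u i) l (𝓝 z) := by
    simpa [(hu _).star_eq, hz.star_eq] using h.star
  rw [tendsto_iff_norm_sub_tendsto_zero] at h h' ⊢
  refine squeeze_zero' (.of_forall fun _ => norm_nonneg _) (hu1.mono fun i hi => ?_)
    (by simpa using h'.add h)
  calc ‖u i * z * u i - z‖ = ‖u i * (z * u i - z) + (u i * z - z)‖ := by
        congr 1; noncomm_ring
    _ ≤ ‖u i * (z * u i - z)‖ + ‖u i * z - z‖ := norm_add_le _ _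
    _ ≤ ‖z * u i - z‖ + ‖u i * z - z‖ := by
        gcongr
        exact (norm_mul_le _ _).trans (mul_le_of_le_one_left (norm_nonneg _) hi)

lemma norm_mul_star_le_one {x : B} (hx : ‖x‖ ≤ 1) : ‖x * star x‖ ≤ 1 := by
  rw [CStarRing.norm_self_mul_star]
  exact mul_le_one₀ hx (norm_nonneg _) hx

lemma fEps_mul_star_self_mul_eq_zero {P Q : B} (hPQ : star P * Q = 0) {ε : ℝ} (hε : 0 < ε) :
    fEps ε (P * star P) * Q = 0 := by
  rw [fEps_eq_cfcₙ_mul hε (.mul_star_self P), mul_assoc, mul_assoc, hPQ, mul_zero, mul_zero]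

lemma fEps_mul_star_self_mul_fEps_eq_zero {P Q : B} (hPQ : star P * Q = 0) {ε ε' : ℝ}
    (hε : 0 < ε) (hε' : 0 < ε') : fEps ε (P * star P) * fEps ε' (Q * star Q) = 0 :=
  mul_eq_zero_of_mem_closedRightIdeal
    (mem_closedRightIdeal_trans (fEps_mem_closedRightIdeal hε' (.mul_star_self Q))
      (mul_mem_closedRightIdeal Q (star Q)))
    (fEps_mul_star_self_mul_eq_zero hPQ hε)

variable [PartialOrder B] [StarOrderedRing B]

lemma exists_star_mul_self_eq_fEps {ε : ℝ} (hε : 0 < ε) (Q : B) :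
    ∃ m : B, star (Q * m) * (Q * m) = fEps ε (star Q * Q) ∧ ‖Q * m‖ ≤ 1 := by
  obtain ⟨m, hm, -⟩ := exists_star_mul_self_eq_cfcₙ (continuous_cutoffDiv hε) (cutoffDiv_zero ε)
    (cutoffDiv_nonneg hε) Q
  simp only [mul_cutoffDiv hε] at hm
  refine ⟨m, hm, ?_⟩
  have hnorm : ‖Q * m‖ * ‖Q * m‖ ≤ 1 := by
    rw [← CStarRing.norm_star_mul_self, hm]
    exact norm_fEps_le_one _ _
  nlinarith [norm_nonneg (Q * m)]

namespace QuasiTrace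

variable (τ : QuasiTrace B)

lemma apply_le_of_tendsto {ι : Type*} {l : Filter ι} [l.NeBot] {z : ι → B} {z₀ : B}
    (hz : ∀ i, 0 ≤ z i) (hlim : Tendsto z l (𝓝 z₀)) {M : ℝ≥0∞}
    (hM : ∀ᶠ i in l, τ.toFun (z i) ≤ M) : τ.toFun z₀ ≤ M := by
  by_contra! hlt
  have hz₀ : 0 ≤ z₀ := ge_of_tendsto' hlim hz
  have hlim' : Tendsto z l (𝓝[{a : B | 0 ≤ a}] z₀) :=
    tendsto_nhdsWithin_iff.2 ⟨hlim, .of_forall hz⟩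
  obtain ⟨i, hi, hi'⟩ :=
    (hM.and (hlim'.eventually (τ.lowerSemicontinuousOn z₀ hz₀ M hlt))).exists
  exact hi.not_gt hi'

lemma apply_fEps_anti {x : B} (hx : 0 ≤ x) {ε ε' : ℝ} (hε' : 0 < ε') (h : ε' ≤ ε) :
    τ.toFun (fEps ε x) ≤ τ.toFun (fEps ε' x) :=
  τ.isPreQuasitrace.mono_of_commute (fEps_nonneg _ _)
    (cfcₙ_mono_of_nonneg (continuous_cutoff _) (continuous_cutoff _) (cutoff_zero _)
      (cutoff_zero _) hx fun _ ht => cutoff_anti hε' h ht)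
    (cfcₙ_commute_cfcₙ _ _ x).eq

lemma apply_fEps_le_dTau {x : B} (hx : 0 ≤ x) {ε : ℝ} (hε : 0 < ε) :
    τ.toFun (fEps ε x) ≤ dTau τ x := by
  obtain ⟨n, hn⟩ := exists_nat_one_div_lt hε
  exact (τ.apply_fEps_anti hx Nat.one_div_pos_of_nat hn.le).trans
    (le_iSup (fun n : ℕ => τ.toFun (fEps (1 / ((n : ℝ) + 1)) x)) n)

lemma apply_le_of_tendsto_mul {u : ℝ → B} {z : B} {M : ℝ≥0∞} (hu : ∀ ε, 0 ≤ u ε)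
    (hu1 : ∀ ε, 0 < ε → ‖u ε‖ ≤ 1) (huu : ∀ ε, 0 < ε → u (ε / 2) * u ε = u ε) (hz : 0 ≤ z)
    (hz1 : ‖z‖ ≤ 1) (h : Tendsto (fun ε => u ε * z) (𝓝[>] 0) (𝓝 z))
    (hM : ∀ ε, 0 < ε → τ.toFun (u ε) ≤ M) : τ.toFun z ≤ M := by
  have hconj (ε : ℝ) : 0 ≤ u ε * z * u ε := (hu ε).isSelfAdjoint.conjugate_nonneg hz
  have hpos : ∀ᶠ ε : ℝ in 𝓝[>] 0, 0 < ε := eventually_mem_nhdsWithin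
  refine τ.apply_le_of_tendsto hconj
    (tendsto_conjugate (hpos.mono hu1) (fun ε => (hu ε).isSelfAdjoint) hz.isSelfAdjoint h)
    (hpos.mono fun ε hε => ?_)
  refine (τ.isPreQuasitrace.le_of_mul_eq (hu (ε / 2)) (hu1 _ (half_pos hε)) (hconj ε) ?_ ?_).trans
    (hM _ (half_pos hε))
  · calc ‖u ε * z * u ε‖ ≤ ‖u ε‖ * ‖z‖ * ‖u ε‖ := norm_mul₃_le
      _ ≤ 1 * 1 * 1 := by gcongr <;> exact hu1 ε hε
      _ = 1 := by norm_num
  · rw [← mul_assoc, ← mul_assoc, huu ε hε]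

lemma apply_le_dTau {y z : B} (hy : 0 ≤ y) (hz : 0 ≤ z) (hz1 : ‖z‖ ≤ 1)
    (hzy : z ∈ closedRightIdeal y) : τ.toFun z ≤ dTau τ y :=
  τ.apply_le_of_tendsto_mul (u := fun ε => fEps ε y) (fun _ => fEps_nonneg _ _)
    (fun _ _ => norm_fEps_le_one _ _) (fun _ hε => fEps_mul_fEps (half_pos hε) le_rfl y) hz hz1
    (tendsto_fEps_mul hy hzy) (fun _ hε => τ.apply_fEps_le_dTau hy hε)

lemma apply_star_mul_self_le_dTau {x y : B} (hy : 0 ≤ y) (hx1 : ‖x‖ ≤ 1)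
    (hxy : x ∈ closedRightIdeal y) : τ.toFun (star x * x) ≤ dTau τ y := by
  rw [τ.map_star_mul_self]
  exact τ.apply_le_dTau hy (mul_star_self_nonneg x) (norm_mul_star_le_one hx1)
    (mul_right_mem_closedRightIdeal hxy _)

end QuasiTrace

variable (τ : QuasiTrace B)

lemma dTau_mono_of_mem_closedRightIdeal {x y : B} (hx : 0 ≤ x) (hy : 0 ≤ y)
    (h : x ∈ closedRightIdeal y) : dTau τ x ≤ dTau τ y :=
  iSup_le fun _ => τ.apply_le_dTau hy (fEps_nonneg _ _) (norm_fEps_le_one _ _)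
    (mem_closedRightIdeal_trans
      (fEps_mem_closedRightIdeal Nat.one_div_pos_of_nat hx.isSelfAdjoint) h)

lemma dTau_star_mul_self_le {Q y : B} (hy : 0 ≤ y) (hQ : Q ∈ closedRightIdeal y) :
    dTau τ (star Q * Q) ≤ dTau τ y := by
  refine iSup_le fun n => ?_
  obtain ⟨m, hm, hm1⟩ := exists_star_mul_self_eq_fEps Nat.one_div_pos_of_nat Q
  rw [← hm]
  exact τ.apply_star_mul_self_le_dTau hy hm1 (mul_right_mem_closedRightIdeal hQ m)

lemma dTau_mul_star_self_le (P : B) : dTau τ (P * star P) ≤ dTau τ (star P * P) := by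
  simpa only [star_star] using dTau_star_mul_self_le τ (Q := star P) (star_mul_self_nonneg P)
    (by simpa only [star_star] using mem_closedRightIdeal_mul_star (star P))

lemma dTau_add_le_of_star_mul_eq_zero {P Q : B} (hPQ : star P * Q = 0) :
    dTau τ (star (P + Q) * (P + Q)) ≤ dTau τ (star P * P) + dTau τ (star Q * Q) := by
  have hQP : star Q * P = 0 := by simpa using congrArg star hPQ
  let p := fun ε => fEps ε (P * star P)
  let q := fun ε => fEps ε (Q * star Q)
  have hpq {ε ε' : ℝ} (hε : 0 < ε) (hε' : 0 < ε') : p ε * q ε' = 0 :=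
    fEps_mul_star_self_mul_fEps_eq_zero hPQ hε hε'
  have hqp {ε ε' : ℝ} (hε : 0 < ε) (hε' : 0 < ε') : q ε * p ε' = 0 :=
    fEps_mul_star_self_mul_fEps_eq_zero hQP hε hε'
  have hpp {ε : ℝ} (hε : 0 < ε) : p (ε / 2) * p ε = p ε := fEps_mul_fEps (half_pos hε) le_rfl _
  have hqq {ε : ℝ} (hε : 0 < ε) : q (ε / 2) * q ε = q ε := fEps_mul_fEps (half_pos hε) le_rfl _
  have hmul {ε : ℝ} (hε : 0 < ε) : (p ε + q ε) * (P + Q) = p ε * P + q ε * Q := by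
    rw [add_mul, mul_add, mul_add, fEps_mul_star_self_mul_eq_zero hPQ hε,
      fEps_mul_star_self_mul_eq_zero hQP hε, add_zero, zero_add]
  refine iSup_le fun n => ?_
  obtain ⟨m, hm, hm1⟩ := exists_star_mul_self_eq_fEps Nat.one_div_pos_of_nat (P + Q)
  set Y := (P + Q) * m with hY
  rw [← hm, τ.map_star_mul_self]
  refine τ.apply_le_of_tendsto_mul (u := fun ε => p ε + q ε)
    (fun _ => add_nonneg (fEps_nonneg _ _) (fEps_nonneg _ _)) (fun ε hε => ?_) (fun ε hε => ?_)
    (mul_star_self_nonneg Y) (norm_mul_star_le_one hm1) ?_ (fun ε hε => ?_)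
  · exact norm_add_le_one_of_mul_eq_zero (fEps_nonneg _ _) (fEps_nonneg _ _)
      (norm_fEps_le_one _ _) (norm_fEps_le_one _ _) (hpq hε hε)
  · simp only [mul_add, add_mul, hpq (half_pos hε) hε, hqp (half_pos hε) hε, hpp hε, hqq hε,
      add_zero, zero_add]
  · have hlim := ((tendsto_fEps_mul (mul_star_self_nonneg P) (mem_closedRightIdeal_mul_star P)).add
      (tendsto_fEps_mul (mul_star_self_nonneg Q) (mem_closedRightIdeal_mul_star Q))).mul_const
      (m * star Y)
    rw [hY, mul_assoc, ← hY]
    refine hlim.congr' (eventually_mem_nhdsWithin.mono fun ε hε => ?_)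
    beta_reduce
    rw [← mul_assoc _ (P + Q), hmul hε]
  · rw [τ.map_add_of_commute _ _ (fEps_nonneg _ _) (fEps_nonneg _ _)
      ((hpq hε hε).trans (hqp hε hε).symm)]
    gcongr
    · exact (τ.apply_fEps_le_dTau (mul_star_self_nonneg P) hε).trans (dTau_mul_star_self_le τ P)
    · exact (τ.apply_fEps_le_dTau (mul_star_self_nonneg Q) hε).trans (dTau_mul_star_self_le τ Q)

end DimensionFunction

section OrthogonalCopies

/-- `B` has room for orthogonal copies: any two elements can be moved, without changing `p* p` and
`q* q`, to elements with orthogonal ranges. Stable algebras have this property. -/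
def HasOrthogonalCopies (B : Type*) [NonUnitalCStarAlgebra B] : Prop :=
  ∀ p q : B, ∃ P Q : B, star P * P = star p * p ∧ star Q * Q = star q * q ∧ star P * Q = 0

lemma HasOrthogonalCopies.exists_star_mul_add_eq {B : Type*} [NonUnitalCStarAlgebra B]
    (hB : HasOrthogonalCopies B) (p q : B) : ∃ P Q : B, star P * P = star p * p ∧
      star Q * Q = star q * q ∧ star P * Q = 0 ∧
      star (P + Q) * (P + Q) = star p * p + star q * q := by
  obtain ⟨P, Q, hP, hQ, hPQ⟩ := hB p q
  have hQP : star Q * P = 0 := by simpa using congrArg star hPQ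
  exact ⟨P, Q, hP, hQ, hPQ, by simp only [star_add, mul_add, add_mul, hPQ, hQP, hP, hQ,
    add_zero, zero_add]⟩

lemma HasOrthogonalCopies.dTau_add_le {B : Type*} [NonUnitalCStarAlgebra B] [PartialOrder B]
    [StarOrderedRing B] (hB : HasOrthogonalCopies B) (τ : QuasiTrace B) {x y : B} (hx : 0 ≤ x)
    (hy : 0 ≤ y) : dTau τ (x + y) ≤ dTau τ x + dTau τ y := by
  obtain ⟨p, rfl⟩ := CStarAlgebra.nonneg_iff_eq_star_mul_self.1 hx
  obtain ⟨q, rfl⟩ := CStarAlgebra.nonneg_iff_eq_star_mul_self.1 hy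
  obtain ⟨P, Q, hP, hQ, hPQ, hsum⟩ := hB.exists_star_mul_add_eq p q
  rw [← hsum, ← hP, ← hQ]
  exact dTau_add_le_of_star_mul_eq_zero τ hPQ

namespace Stabilization

variable {C V : Type*} [NonUnitalCStarAlgebra C] [NonUnitalCStarAlgebra V]

/-- The finite sum `∑ F(i, j) ⊗ e_{g i, j}`: a finitely supported matrix with its rows moved
by `g`. -/
def rowSum (SB : Stabilization C V) (g : ℕ → ℕ) : ((ℕ × ℕ) →₀ C) →ₗ[ℂ] V :=
  Finsupp.lsum ℂ fun ij => SB.emb (g ij.1) ij.2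

variable (SB : Stabilization C V) {g : ℕ → ℕ}

lemma star_rowSum_mul_rowSum (hg : Function.Injective g) (F G : (ℕ × ℕ) →₀ C) :
    star (SB.rowSum g F) * SB.rowSum g G = star (SB.rowSum id F) * SB.rowSum id G := by
  induction F using Finsupp.induction_linear with
  | zero => simp
  | add F F' h h' => simp only [map_add, star_add, add_mul, h, h']
  | single i x =>
    induction G using Finsupp.induction_linear with
    | zero => simp
    | add G G' h h' => simp only [map_add, mul_add, h, h']
    | single j y => simp [rowSum, SB.emb_star, SB.emb_mul, hg.eq_iff]

lemma star_rowSum_mul_rowSum_eq_zero {g' : ℕ → ℕ} (hg : ∀ i j, g i ≠ g' j)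
    (F G : (ℕ × ℕ) →₀ C) : star (SB.rowSum g F) * SB.rowSum g' G = 0 := by
  induction F using Finsupp.induction_linear with
  | zero => simp
  | add F F' h h' => simp only [map_add, star_add, add_mul, h, h', add_zero]
  | single i x =>
    induction G using Finsupp.induction_linear with
    | zero => simp
    | add G G' h h' => simp only [map_add, mul_add, h, h', add_zero]
    | single j y => simp [rowSum, SB.emb_star, SB.emb_mul, hg]

lemma norm_rowSum (hg : Function.Injective g) (F : (ℕ × ℕ) →₀ C) :
    ‖SB.rowSum g F‖ = ‖SB.rowSum id F‖ := by
  refine (mul_self_inj (norm_nonneg _) (norm_nonneg _)).1 ?_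
  rw [← CStarRing.norm_star_mul_self, ← CStarRing.norm_star_mul_self,
    SB.star_rowSum_mul_rowSum hg]

lemma exists_tendsto_rowSum (p : V) :
    ∃ F : ℕ → ((ℕ × ℕ) →₀ C), Tendsto (fun n => SB.rowSum id (F n)) atTop (𝓝 p) := by
  have hspan : Submodule.span ℂ {w : V | ∃ (i j : ℕ) (a : C), w = SB.emb i j a} ≤
      LinearMap.range (SB.rowSum id) := by
    rw [Submodule.span_le]
    rintro _ ⟨i, j, a, rfl⟩
    exact ⟨Finsupp.single (i, j) a, by simp [rowSum]⟩
  obtain ⟨x, hx, hlim⟩ := mem_closure_iff_seq_limit.1 (closure_mono hspan (SB.dense_span p))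
  choose F hF using hx
  exact ⟨F, by simpa only [hF] using hlim⟩

lemma exists_tendsto_rowSum_star_mul_self_eq (hg : Function.Injective g) {p : V}
    {F : ℕ → ((ℕ × ℕ) →₀ C)} (hF : Tendsto (fun n => SB.rowSum id (F n)) atTop (𝓝 p)) :
    ∃ P : V, Tendsto (fun n => SB.rowSum g (F n)) atTop (𝓝 P) ∧ star P * P = star p * p := by
  have hcauchy : CauchySeq fun n => SB.rowSum g (F n) := by
    have hF' := hF.cauchySeq
    rw [cauchySeq_iff_tendsto_dist_atTop_0] at hF' ⊢
    simpa only [dist_eq_norm, ← map_sub, SB.norm_rowSum hg] using hF'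
  obtain ⟨P, hP⟩ := cauchySeq_tendsto_of_complete hcauchy
  exact ⟨P, hP, tendsto_nhds_unique (hP.star.mul hP)
    ((hF.star.mul hF).congr fun _ => (SB.star_rowSum_mul_rowSum hg _ _).symm)⟩

end Stabilization

/-- Move the rows of `p` to the even and those of `q` to the odd positions. -/
lemma Stabilization.hasOrthogonalCopies {C V : Type*} [NonUnitalCStarAlgebra C]
    [NonUnitalCStarAlgebra V] (SB : Stabilization C V) : HasOrthogonalCopies V := by
  intro p q
  obtain ⟨F, hF⟩ := SB.exists_tendsto_rowSum p
  obtain ⟨G, hG⟩ := SB.exists_tendsto_rowSum q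
  obtain ⟨P, hP, hPP⟩ := SB.exists_tendsto_rowSum_star_mul_self_eq (g := fun i => 2 * i)
    (fun i j h => by simpa using h) hF
  obtain ⟨Q, hQ, hQQ⟩ := SB.exists_tendsto_rowSum_star_mul_self_eq (g := fun i => 2 * i + 1)
    (fun i j h => by simpa using h) hG
  refine ⟨P, Q, hPP, hQQ, tendsto_nhds_unique (hP.star.mul hQ) ?_⟩
  exact tendsto_const_nhds.congr fun n =>
    (SB.star_rowSum_mul_rowSum_eq_zero (fun i j => by omega) _ _).symm

end OrthogonalCopies

section CutDown

variable {B : Type*} [NonUnitalCStarAlgebra B]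

/-- The cut-down `(x - ε)₊` of a positive element. -/
def cutDown (ε : ℝ) (x : B) : B := cfcₙ (fun t : ℝ => max 0 (t - ε)) x

lemma continuous_max_zero_sub (ε : ℝ) : Continuous fun t : ℝ => max 0 (t - ε) := by fun_prop

lemma max_zero_zero_sub {ε : ℝ} (hε : 0 ≤ ε) : max 0 (0 - ε) = 0 := by simpa using hε

lemma commute_cutDown {x y : B} (h : Commute x y) (ε δ : ℝ) :
    Commute (cutDown ε x) (cutDown δ y) :=
  ((h.cfcₙ_real _).symm.cfcₙ_real _).symm

variable [PartialOrder B] [StarOrderedRing B]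

lemma cutDown_nonneg (ε : ℝ) (x : B) : 0 ≤ cutDown ε x :=
  cfcₙ_nonneg fun _ _ => le_max_left _ _

lemma exists_star_mul_self_eq_cutDown {ε : ℝ} (hε : 0 < ε) (x : B) :
    ∃ y : B, star y * y = cutDown ε (star x * x) ∧ y * star y = cutDown ε (x * star x) := by
  have hpos (t : ℝ) : 0 < max t ε := lt_max_of_lt_right hε
  have hg : Continuous fun t : ℝ => max 0 (t - ε) / max t ε :=
    (continuous_max_zero_sub ε).div (by fun_prop) fun t => (hpos t).ne'
  have hmul (t : ℝ) : t * (max 0 (t - ε) / max t ε) = max 0 (t - ε) := by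
    rcases le_total t ε with h | h
    · simp [max_eq_left (sub_nonpos.2 h)]
    · rw [max_eq_left h, mul_div_cancel₀ _ (hε.trans_le h).ne']
  obtain ⟨m, hm, hm'⟩ := exists_star_mul_self_eq_cfcₙ hg (by simp [hε.le])
    (fun t => div_nonneg (le_max_left _ _) (hpos t).le) x
  simp only [hmul] at hm hm'
  exact ⟨x * m, hm, hm'⟩

lemma cutDown_smul {r : ℝ} (hr : 0 < r) {ε : ℝ} (hε : 0 < ε) {x : B} (hx : 0 ≤ x) :
    cutDown ε (r • x) = r • cutDown (ε / r) x := by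
  unfold cutDown
  rw [← cfcₙ_comp_smul r (fun t : ℝ => max 0 (t - ε)) x (by fun_prop) (max_zero_zero_sub hε.le)
    hx.isSelfAdjoint, ← cfcₙ_smul r _ x (by fun_prop) (max_zero_zero_sub (by positivity))]
  congr 1
  funext t
  rw [smul_eq_mul, smul_eq_mul, mul_max_of_nonneg _ _ hr.le, mul_zero, mul_sub,
    mul_div_cancel₀ _ hr.ne']

lemma cutDown_anti {ε ε' : ℝ} (hε' : 0 ≤ ε') (h : ε' ≤ ε) {x : B} (hx : 0 ≤ x) :
    cutDown ε x ≤ cutDown ε' x :=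
  cfcₙ_mono_of_nonneg (continuous_max_zero_sub _) (continuous_max_zero_sub _)
    (max_zero_zero_sub (hε'.trans h)) (max_zero_zero_sub hε') hx fun t _ => by gcongr

lemma cutDown_zero {x : B} (hx : 0 ≤ x) : cutDown 0 x = x := by
  conv_rhs => rw [← cfcₙ_id' ℝ x hx.isSelfAdjoint]
  exact cfcₙ_congr_of_nonneg hx fun t ht => by simpa using ht

lemma norm_sub_cutDown_le {ε : ℝ} (hε : 0 ≤ ε) {x : B} (hx : 0 ≤ x) : ‖x - cutDown ε x‖ ≤ ε := by
  have h : x - cutDown ε x = cfcₙ (fun t : ℝ => t - max 0 (t - ε)) x := by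
    rw [cfcₙ_sub (fun t => t) (fun t => max 0 (t - ε)) x (by fun_prop) rfl (by fun_prop)
      (max_zero_zero_sub hε), cfcₙ_id' ℝ x hx.isSelfAdjoint]
    rfl
  rw [h]
  refine norm_cfcₙ_le_of_nonneg hx fun t ht => abs_le.2 ?_
  rcases max_cases 0 (t - ε) with h | h <;> constructor <;> linarith

lemma cutDown_eq_zero {ε : ℝ} {x : B} (hx : 0 ≤ x) (h : ‖x‖ ≤ ε) : cutDown ε x = 0 := by
  rw [← cfcₙ_const_zero ℝ x]
  refine cfcₙ_congr fun t ht => max_eq_left (sub_nonpos.2 ?_)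
  have ht' : ‖t‖ ≤ ‖x‖ :=
    NonUnitalIsometricContinuousFunctionalCalculus.norm_quasispectrum_le x ht hx.isSelfAdjoint
  exact (le_abs_self t).trans (ht'.trans h)

end CutDown

section JointFunctionalCalculus

variable {B : Type*} [NonUnitalCStarAlgebra B]

/-- The functional calculus of real-valued functions on the spectrum of a normal element `n`; with
`n = x + i y` it serves as a joint functional calculus of the commuting elements `x` and `y`. -/
def jointCfc (n : B) (f : ℂ → ℝ) : B := cfcₙ (fun z : ℂ => (f z : ℂ)) n

lemma jointCfc_sub {f g : ℂ → ℝ} (hf : Continuous f) (hg : Continuous g) (hf0 : f 0 = 0)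
    (hg0 : g 0 = 0) (n : B) : jointCfc n f - jointCfc n g = jointCfc n (fun z => f z - g z) := by
  unfold jointCfc
  rw [← cfcₙ_sub (fun z : ℂ => (f z : ℂ)) (fun z : ℂ => (g z : ℂ)) n (by fun_prop) (by simp [hf0])
    (by fun_prop) (by simp [hg0])]
  simp only [Complex.ofReal_sub]

lemma jointCfc_add {f g : ℂ → ℝ} (hf : Continuous f) (hg : Continuous g) (hf0 : f 0 = 0)
    (hg0 : g 0 = 0) (n : B) : jointCfc n f + jointCfc n g = jointCfc n (fun z => f z + g z) := by
  unfold jointCfc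
  rw [← cfcₙ_add (fun z : ℂ => (f z : ℂ)) (fun z : ℂ => (g z : ℂ)) n (by fun_prop) (by simp [hf0])
    (by fun_prop) (by simp [hg0])]
  simp only [Complex.ofReal_add]

variable [PartialOrder B] [StarOrderedRing B]

open ComplexOrder in
lemma jointCfc_nonneg {f : ℂ → ℝ} (hf : ∀ z, 0 ≤ f z) (n : B) : 0 ≤ jointCfc n f :=
  cfcₙ_nonneg fun z _ => by exact_mod_cast hf z

lemma jointCfc_mono {f g : ℂ → ℝ} (hf : Continuous f) (hg : Continuous g) (hf0 : f 0 = 0)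
    (hg0 : g 0 = 0) (h : ∀ z, f z ≤ g z) (n : B) : jointCfc n f ≤ jointCfc n g := by
  rw [← sub_nonneg, jointCfc_sub hg hf hg0 hf0]
  exact jointCfc_nonneg (fun z => sub_nonneg.2 (h z)) n

lemma cfcₙ_jointCfc {f : ℂ → ℝ} {h : ℝ → ℝ} (hf : Continuous f) (hh : Continuous h)
    (hf0 : f 0 = 0) (hh0 : h 0 = 0) (hfn : ∀ z, 0 ≤ f z) {n : B} (hn : IsStarNormal n) :
    cfcₙ h (jointCfc n f) = jointCfc n (fun z => h (f z)) := by
  rw [cfcₙ_real_eq_complex h (jointCfc_nonneg hfn n).isSelfAdjoint]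
  unfold jointCfc
  rw [← cfcₙ_comp (fun z : ℂ => ((h z.re : ℝ) : ℂ)) (fun z : ℂ => (f z : ℂ)) n (by fun_prop)
    (by simp [hh0]) (by fun_prop) (by simp [hf0]) hn]
  congr 1

lemma cfcₙ_max_zero {a : B} (ha : 0 ≤ a) : cfcₙ (fun t : ℝ => max 0 t) a = a := by
  conv_rhs => rw [← cfcₙ_id' ℝ a ha.isSelfAdjoint]
  exact cfcₙ_congr_of_nonneg ha fun t ht => max_eq_right ht

lemma exists_jointCfc_eq {x y : B} (hx : 0 ≤ x) (hy : 0 ≤ y) (hc : Commute x y) :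
    ∃ n : B, IsStarNormal n ∧ jointCfc n (fun z => max 0 z.re) = x ∧
      jointCfc n (fun z => max 0 z.im) = y := by
  set n := x + Complex.I • y with hn
  have hstar : star n = x - Complex.I • y := by
    simp [hn, hx.isSelfAdjoint.star_eq, hy.isSelfAdjoint.star_eq, sub_eq_add_neg]
  have hnormal : IsStarNormal n := by
    have hc' : Commute x (Complex.I • y) := hc.smul_right _
    exact ⟨hstar ▸ ((Commute.refl x).add_right hc').sub_left (hc'.symm.add_right (.refl _))⟩
  have hre : ((realPart n : selfAdjoint B) : B) = x := by
    rw [realPart_apply_coe, hstar, hn, add_add_sub_cancel, ← two_smul ℝ x, smul_smul]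
    norm_num
  have him : ((imaginaryPart n : selfAdjoint B) : B) = y := by
    rw [imaginaryPart_apply_coe, hstar, hn, add_sub_sub_cancel, ← smul_add, ← two_smul ℝ y,
      smul_comm Complex.I (2 : ℝ) y, smul_smul, ← smul_comm, smul_smul]
    norm_num
  refine ⟨n, hnormal, ?_, ?_⟩
  · exact (cfcₙ_comp_re (fun t : ℝ => max 0 t) n (by fun_prop) (by simp) hnormal).trans
      (by rw [hre, cfcₙ_max_zero hx])
  · exact (cfcₙ_comp_im (fun t : ℝ => max 0 t) n (by fun_prop) (by simp) hnormal).trans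
      (by rw [him, cfcₙ_max_zero hy])

lemma exists_jointCfc_eq_cfcₙ_add {x y : B} (hx : 0 ≤ x) (hy : 0 ≤ y) (hc : Commute x y)
    {f g : ℝ → ℝ} (hf : Continuous f) (hg : Continuous g) (hf0 : f 0 = 0) (hg0 : g 0 = 0) :
    ∃ n : B, jointCfc n (fun z => f (max 0 z.re + max 0 z.im)) = cfcₙ f (x + y) ∧
      jointCfc n (fun z => g (max 0 z.re) + g (max 0 z.im)) = cfcₙ g x + cfcₙ g y := by
  obtain ⟨n, hn, hnx, hny⟩ := exists_jointCfc_eq hx hy hc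
  have hre : Continuous fun z : ℂ => max 0 z.re := by fun_prop
  have him : Continuous fun z : ℂ => max 0 z.im := by fun_prop
  refine ⟨n, ?_, ?_⟩
  · rw [← cfcₙ_jointCfc (f := fun z => max 0 z.re + max 0 z.im) (hre.add him) hf (by simp) hf0
      (fun z => add_nonneg (le_max_left _ _) (le_max_left _ _)) hn,
      ← jointCfc_add hre him (by simp) (by simp), hnx, hny]
  · rw [← jointCfc_add (f := fun z => g (max 0 z.re)) (g := fun z => g (max 0 z.im))
        (hg.comp hre) (hg.comp him) (by simp [hg0]) (by simp [hg0]),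
      ← cfcₙ_jointCfc hre hg (by simp) hg0 (fun z => le_max_left _ _) hn,
      ← cfcₙ_jointCfc him hg (by simp) hg0 (fun z => le_max_left _ _) hn, hnx, hny]

lemma cfcₙ_add_le_of_commute {x y : B} (hx : 0 ≤ x) (hy : 0 ≤ y) (hc : Commute x y)
    {f g : ℝ → ℝ} (hf : Continuous f) (hg : Continuous g) (hf0 : f 0 = 0) (hg0 : g 0 = 0)
    (h : ∀ s t, 0 ≤ s → 0 ≤ t → f (s + t) ≤ g s + g t) :
    cfcₙ f (x + y) ≤ cfcₙ g x + cfcₙ g y := by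
  obtain ⟨n, hnf, hng⟩ := exists_jointCfc_eq_cfcₙ_add hx hy hc hf hg hf0 hg0
  rw [← hnf, ← hng]
  exact jointCfc_mono (by fun_prop) (by fun_prop) (by simp [hf0]) (by simp [hg0])
    (fun z => h _ _ (le_max_left _ _) (le_max_left _ _)) n

lemma cfcₙ_add_cfcₙ_le_of_commute {x y : B} (hx : 0 ≤ x) (hy : 0 ≤ y) (hc : Commute x y)
    {f g : ℝ → ℝ} (hf : Continuous f) (hg : Continuous g) (hf0 : f 0 = 0) (hg0 : g 0 = 0)
    (h : ∀ s t, 0 ≤ s → 0 ≤ t → g s + g t ≤ f (s + t)) :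
    cfcₙ g x + cfcₙ g y ≤ cfcₙ f (x + y) := by
  obtain ⟨n, hnf, hng⟩ := exists_jointCfc_eq_cfcₙ_add hx hy hc hf hg hf0 hg0
  rw [← hnf, ← hng]
  exact jointCfc_mono (by fun_prop) (by fun_prop) (by simp [hg0]) (by simp [hf0])
    (fun z => h _ _ (le_max_left _ _) (le_max_left _ _)) n

lemma cutDown_add_le_of_commute {x y : B} (hx : 0 ≤ x) (hy : 0 ≤ y) (hc : Commute x y) {ε : ℝ}
    (hε : 0 ≤ ε) : cutDown ε (x + y) ≤ cutDown (ε / 2) x + cutDown (ε / 2) y :=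
  cfcₙ_add_le_of_commute hx hy hc (continuous_max_zero_sub _) (continuous_max_zero_sub _)
    (max_zero_zero_sub hε) (max_zero_zero_sub (by positivity)) fun s t _ _ => by
      rcases max_cases 0 (s - ε / 2) with h | h <;> rcases max_cases 0 (t - ε / 2) with h' | h' <;>
        exact max_le (by linarith) (by linarith)

lemma cutDown_add_cutDown_le_of_commute {x y : B} (hx : 0 ≤ x) (hy : 0 ≤ y) (hc : Commute x y)
    {ε : ℝ} (hε : 0 ≤ ε) : cutDown ε x + cutDown ε y ≤ cutDown ε (x + y) :=
  cfcₙ_add_cfcₙ_le_of_commute hx hy hc (continuous_max_zero_sub _) (continuous_max_zero_sub _)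
    (max_zero_zero_sub hε) (max_zero_zero_sub hε) fun s t hs ht => by
      rcases max_cases 0 (s - ε) with h | h <;> rcases max_cases 0 (t - ε) with h' | h' <;>
        rcases max_cases 0 (s + t - ε) with h'' | h'' <;> linarith

end JointFunctionalCalculus

section ApproximateMonotonicity

/-- The continuous function that is `0` up to `c`, `1` from `c + δ` on, and linear in between. -/
def ramp (c δ : ℝ) : ℝ → ℝ := fun t => min 1 (max 0 ((t - c) / δ))

@[fun_prop]
lemma continuous_ramp (c δ : ℝ) : Continuous (ramp c δ) := by
  unfold ramp
  fun_prop

lemma ramp_nonneg (c δ t : ℝ) : 0 ≤ ramp c δ t := by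
  simp [ramp]

lemma ramp_le_one (c δ t : ℝ) : ramp c δ t ≤ 1 := by
  simp [ramp]

lemma ramp_eq_zero {c δ t : ℝ} (hδ : 0 < δ) (h : t ≤ c) : ramp c δ t = 0 := by
  simp [ramp, max_eq_left (div_nonpos_of_nonpos_of_nonneg (sub_nonpos.2 h) hδ.le)]

lemma ramp_eq_one {c δ t : ℝ} (hδ : 0 < δ) (h : c + δ ≤ t) : ramp c δ t = 1 :=
  min_eq_left (le_max_of_le_right (by rw [le_div_iff₀ hδ]; linarith))

lemma mul_ramp_add {c δ : ℝ} (hδ : 0 < δ) (t : ℝ) :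
    δ * ramp c δ t + max 0 (t - (c + δ)) = max 0 (t - c) := by
  rcases le_total t c with h | h
  · rw [ramp_eq_zero hδ h, max_eq_left (by linarith), max_eq_left (by linarith)]
    ring
  rcases le_total (c + δ) t with h' | h'
  · rw [ramp_eq_one hδ h', max_eq_right (by linarith), max_eq_right (by linarith)]
    ring
  · have hle : (t - c) / δ ≤ 1 := by
      rw [div_le_one hδ]
      linarith
    rw [ramp, max_eq_right (div_nonneg (sub_nonneg.2 h) hδ.le), min_eq_right hle,
      max_eq_left (by linarith), max_eq_right (by linarith), mul_div_cancel₀ _ hδ.ne', add_zero]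

variable {B : Type*} [NonUnitalCStarAlgebra B]

lemma norm_cfcₙ_ramp_le_one (c δ : ℝ) (x : B) : ‖cfcₙ (ramp c δ) x‖ ≤ 1 :=
  norm_cfcₙ_le fun t _ => by
    rw [Real.norm_of_nonneg (ramp_nonneg c δ t)]
    exact ramp_le_one c δ t

variable [PartialOrder B] [StarOrderedRing B]

lemma cfcₙ_ramp_nonneg (c δ : ℝ) (x : B) : 0 ≤ cfcₙ (ramp c δ) x :=
  cfcₙ_nonneg fun t _ => ramp_nonneg c δ t

lemma smul_cfcₙ_ramp_mul_self_le_conjugate {c δ : ℝ} (hc : 0 ≤ c) (hδ : 0 < δ) {x : B}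
    (hx : 0 ≤ x) : c • (cfcₙ (ramp c δ) x * cfcₙ (ramp c δ) x) ≤
      cfcₙ (ramp c δ) x * x * cfcₙ (ramp c δ) x := by
  have h0 : ramp c δ 0 = 0 := ramp_eq_zero hδ hc
  rw [cfcₙ_mul_self (continuous_ramp c δ) h0 hx.isSelfAdjoint,
    ← cfcₙ_mul (ramp c δ) (ramp c δ) x (by fun_prop) h0 (by fun_prop) h0,
    ← cfcₙ_mul (fun t => ramp c δ t * t) (ramp c δ) x (by fun_prop) (by simp) (by fun_prop) h0,
    ← cfcₙ_smul c _ x (by fun_prop) (by simp [h0])]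
  refine cfcₙ_mono_of_nonneg (by fun_prop) (by fun_prop) (by simp [h0]) (by simp) hx fun t _ => ?_
  rw [smul_eq_mul]
  rcases le_total t c with h | h
  · simp [ramp_eq_zero hδ h]
  · nlinarith [mul_self_nonneg (ramp c δ t)]

lemma cfcₙ_ramp_mul_cutDown {c δ : ℝ} (hc : 0 ≤ c) (hδ : 0 < δ) {y : B} (hy : 0 ≤ y) :
    cfcₙ (ramp c δ) y * cutDown (c + δ) y = cutDown (c + δ) y := by
  rw [cutDown, ← cfcₙ_mul (ramp c δ) (fun t => max 0 (t - (c + δ))) y (by fun_prop)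
    (ramp_eq_zero hδ hc) (by fun_prop) (max_zero_zero_sub (by positivity))]
  refine cfcₙ_congr_of_nonneg hy fun t _ => ?_
  rcases le_total t (c + δ) with h | h
  · rw [max_eq_left (sub_nonpos.2 h), mul_zero]
  · rw [ramp_eq_one hδ h, one_mul]

lemma smul_mul_self_le_conjugate_cutDown {x y p : B} (hx : 0 ≤ x) (hy : 0 ≤ y)
    (hp : IsSelfAdjoint p) {c δ ε : ℝ} (hε : 0 ≤ ε) (hxy : ‖x - y‖ ≤ δ)
    (hpx : c • (p * p) ≤ p * x * p) :
    (c - δ - ε) • (p * p) ≤ p * cutDown ε y * p := by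
  have hpp : 0 ≤ p * p := hp.mul_self_nonneg
  have hpxy : p * (x - y) * p ≤ δ • (p * p) :=
    (conjugate_le_norm_smul_mul_self (hx.isSelfAdjoint.sub hy.isSelfAdjoint) hp).trans
      (smul_le_smul_of_nonneg_right hxy hpp)
  have hpy : p * (y - cutDown ε y) * p ≤ ε • (p * p) :=
    (conjugate_le_norm_smul_mul_self
      (hy.isSelfAdjoint.sub (cutDown_nonneg ε y).isSelfAdjoint) hp).trans
      (smul_le_smul_of_nonneg_right (norm_sub_cutDown_le hε hy) hpp)
  calc (c - δ - ε) • (p * p) = c • (p * p) - δ • (p * p) - ε • (p * p) := by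
        rw [sub_smul, sub_smul]
    _ ≤ p * x * p - p * (x - y) * p - p * (y - cutDown ε y) * p := by gcongr
    _ = p * cutDown ε y * p := by noncomm_ring

lemma QuasiTrace.apply_le_of_mul_self_le_conjugate (τ : QuasiTrace B) {p q w : B} (hp : 0 ≤ p)
    (hp1 : ‖p‖ ≤ 1) (hq : 0 ≤ q) (hw : 0 ≤ w) (hw1 : ‖w‖ ≤ 1) (hwq : w * q = q) {r : ℝ}
    (hpq : p * p ≤ r • (p * q * p)) : τ.toFun p ≤ τ.toFun w := by
  set Q := CFC.sqrt q * p with hQ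
  have hQQ : star Q * Q = p * q * p := by
    rw [hQ, star_mul, hp.isSelfAdjoint.star_eq, (CFC.sqrt_nonneg q).isSelfAdjoint.star_eq,
      mul_assoc, ← mul_assoc (CFC.sqrt q), CFC.sqrt_mul_sqrt_self q hq, mul_assoc]
  have hpQ : p ∈ closedRightIdeal (star Q * Q) :=
    mem_closedRightIdeal_of_mul_star_le (star_mul_self_nonneg Q) (r := r) <| by
      rwa [hp.isSelfAdjoint.star_eq, hQQ]
  refine (τ.apply_le_dTau (star_mul_self_nonneg Q) hp hp1 hpQ).trans (iSup_le fun n => ?_)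
  obtain ⟨m, hm, hm1⟩ := exists_star_mul_self_eq_fEps Nat.one_div_pos_of_nat Q
  rw [← hm, τ.map_star_mul_self]
  refine τ.isPreQuasitrace.le_of_mul_eq hw hw1 (mul_star_self_nonneg _) (norm_mul_star_le_one hm1)
    ?_
  rw [← mul_assoc, ← mul_assoc, hQ, ← mul_assoc,
    mul_eq_self_of_mem_closedRightIdeal (sqrt_mem_closedRightIdeal hq) hwq]

namespace QuasiTrace

variable (τ : QuasiTrace B)

lemma apply_cfcₙ_ramp_le {x y : B} (hx : 0 ≤ x) (hy : 0 ≤ y) {c δ : ℝ} (hc : 0 ≤ c) (hδ : 0 < δ)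
    (hxy : ‖x - y‖ ≤ δ) :
    τ.toFun (cfcₙ (ramp (c + 3 * δ) δ) x) ≤ τ.toFun (cfcₙ (ramp c δ) y) := by
  set p := cfcₙ (ramp (c + 3 * δ) δ) x
  have hp : 0 ≤ p := cfcₙ_ramp_nonneg _ _ x
  have hpy : δ • (p * p) ≤ p * cutDown (c + δ) y * p := by
    have h := smul_mul_self_le_conjugate_cutDown (ε := c + δ) hx hy hp.isSelfAdjoint
      (by positivity) hxy (smul_cfcₙ_ramp_mul_self_le_conjugate (by positivity) hδ hx)
    rwa [show c + 3 * δ - δ - (c + δ) = δ by ring] at h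
  refine τ.apply_le_of_mul_self_le_conjugate hp (norm_cfcₙ_ramp_le_one _ _ x)
    (cutDown_nonneg (c + δ) y) (cfcₙ_ramp_nonneg _ _ y) (norm_cfcₙ_ramp_le_one _ _ y)
    (cfcₙ_ramp_mul_cutDown hc hδ hy) (r := δ⁻¹) ?_
  simpa [smul_smul, hδ.ne'] using smul_le_smul_of_nonneg_left hpy (inv_nonneg.2 hδ.le)

lemma apply_cutDown_eq_add (x : B) {c δ : ℝ} (hc : 0 ≤ c) (hδ : 0 < δ) :
    τ.toFun (cutDown c x) =
      ENNReal.ofReal δ * τ.toFun (cfcₙ (ramp c δ) x) + τ.toFun (cutDown (c + δ) x) := by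
  have h0 : ramp c δ 0 = 0 := ramp_eq_zero hδ hc
  have hsum : cutDown c x = δ • cfcₙ (ramp c δ) x + cutDown (c + δ) x := by
    unfold cutDown
    rw [← cfcₙ_smul δ (ramp c δ) x (by fun_prop) h0,
      ← cfcₙ_add (fun t => δ • ramp c δ t) (fun t => max 0 (t - (c + δ))) x (by fun_prop)
        (by simp [h0]) (by fun_prop) (max_zero_zero_sub (by positivity))]
    simp only [smul_eq_mul, mul_ramp_add hδ]
  rw [hsum, τ.map_add_of_commute _ _ (smul_nonneg hδ.le (cfcₙ_ramp_nonneg c δ x))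
    (cutDown_nonneg _ x) ((cfcₙ_commute_cfcₙ _ _ x).smul_left δ).eq,
    τ.map_smul δ _ hδ (cfcₙ_ramp_nonneg c δ x)]

/-- The layers of `(x - 3δ)₊` of height `δ` are compared one by one with those of `y`. -/
lemma apply_cutDown_le_of_norm_sub_le {x y : B} (hx : 0 ≤ x) (hy : 0 ≤ y) {δ : ℝ} (hδ : 0 < δ)
    (hxy : ‖x - y‖ ≤ δ) : τ.toFun (cutDown (3 * δ) x) ≤ τ.toFun y := by
  obtain ⟨M, hM⟩ := exists_nat_ge (‖x‖ / δ)
  rw [div_le_iff₀ hδ] at hM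
  have hlayers (j k : ℕ) (hk : M ≤ k + j) :
      τ.toFun (cutDown (k * δ + 3 * δ) x) ≤ τ.toFun (cutDown (k * δ) y) := by
    induction j generalizing k with
    | zero =>
      have hk' : (M : ℝ) ≤ k := by exact_mod_cast hk
      rw [cutDown_eq_zero hx (by nlinarith), τ.map_zero]
      exact zero_le
    | succ j ih =>
      have hkδ : 0 ≤ (k : ℝ) * δ := by positivity
      have hnext := ih (k + 1) (by omega)
      rw [Nat.cast_add_one, add_one_mul, add_right_comm] at hnext
      rw [τ.apply_cutDown_eq_add x (by positivity) hδ, τ.apply_cutDown_eq_add y hkδ hδ]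
      gcongr
      exact τ.apply_cfcₙ_ramp_le hx hy hkδ hδ hxy
  simpa [cutDown_zero hy] using hlayers M 0 (by omega)

end QuasiTrace

end ApproximateMonotonicity

section Regularization

variable {B : Type*} [NonUnitalCStarAlgebra B] [PartialOrder B]

open Classical in
/-- The regularization `x ↦ sup_{ε > 0} t((x - ε)₊)`, the candidate for the largest lower
semicontinuous function below `t`. As in `QuasiTrace`, it is `0` off the positive cone. -/
def lscReg (t : B → ℝ≥0∞) (x : B) : ℝ≥0∞ :=
  if 0 ≤ x then ⨆ (ε : ℝ) (_ : 0 < ε), t (cutDown ε x) else 0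

variable {t : B → ℝ≥0∞}

lemma lscReg_of_nonneg {x : B} (hx : 0 ≤ x) :
    lscReg t x = ⨆ (ε : ℝ) (_ : 0 < ε), t (cutDown ε x) :=
  if_pos hx

lemma apply_cutDown_le_lscReg {x : B} (hx : 0 ≤ x) {ε : ℝ} (hε : 0 < ε) :
    t (cutDown ε x) ≤ lscReg t x := by
  rw [lscReg_of_nonneg hx]
  exact le_iSup₂ (f := fun (ε : ℝ) (_ : 0 < ε) => t (cutDown ε x)) ε hε

lemma lscReg_le {x : B} (hx : 0 ≤ x) {M : ℝ≥0∞} (h : ∀ ε, 0 < ε → t (cutDown ε x) ≤ M) :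
    lscReg t x ≤ M := by
  rw [lscReg_of_nonneg hx]
  exact iSup₂_le h

variable [StarOrderedRing B]

lemma lowerSemicontinuousOn_lscReg
    (ht : ∀ x y : B, 0 ≤ x → 0 ≤ y → ∀ δ : ℝ, 0 < δ → ‖x - y‖ ≤ δ → t (cutDown (3 * δ) x) ≤ t y) :
    LowerSemicontinuousOn (lscReg t) {a : B | 0 ≤ a} := by
  intro x (hx : 0 ≤ x) M hM
  simp only [lscReg_of_nonneg hx, lt_iSup_iff] at hM
  obtain ⟨ε, hε, hlt⟩ := hM
  have hδ : 0 < ε / 6 := by positivity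
  filter_upwards [self_mem_nhdsWithin, mem_nhdsWithin_of_mem_nhds (Metric.ball_mem_nhds x hδ)]
    with y hy hyx
  replace hy : 0 ≤ y := hy
  rw [Metric.mem_ball', dist_eq_norm] at hyx
  have hnorm : ‖x - cutDown (ε / 6) y‖ ≤ 2 * (ε / 6) := by
    calc ‖x - cutDown (ε / 6) y‖ ≤ ‖x - y‖ + ‖y - cutDown (ε / 6) y‖ :=
          norm_sub_le_norm_sub_add_norm_sub _ _ _
      _ ≤ 2 * (ε / 6) := by linarith [norm_sub_cutDown_le hδ.le hy]
  have h := ht x _ hx (cutDown_nonneg _ y) _ (by positivity) hnorm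
  rw [show 3 * (2 * (ε / 6)) = ε by ring] at h
  exact (hlt.trans_le h).trans_le (apply_cutDown_le_lscReg hy hδ)

lemma one_sub_smul_fEps_le_cutDown {ε η : ℝ} (hε : 0 < ε) (hη : 0 ≤ η) {x : B}
    (hx : 0 ≤ x) : (1 - η) • fEps ε x ≤ cutDown η (fEps (ε / 2) x) := by
  have h0 : max 0 (cutoff (ε / 2) 0 - η) = 0 := by simpa using hη
  rw [cutDown, fEps, fEps, ← cfcₙ_comp (fun t : ℝ => max 0 (t - η)) (cutoff (ε / 2)) x
    (by fun_prop) (max_zero_zero_sub hη) (by fun_prop) (cutoff_zero _) hx.isSelfAdjoint,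
    ← cfcₙ_smul (1 - η) (cutoff ε) x (by fun_prop) (cutoff_zero ε)]
  refine cfcₙ_mono_of_nonneg (by fun_prop) (by fun_prop) (by simp) h0 hx fun t _ => ?_
  rcases le_total t (ε / 2) with h | h
  · simp [cutoff_eq_zero hε h]
  · simp only [Function.comp_apply, smul_eq_mul, cutoff_eq_one (half_pos hε) h]
    rcases le_total η 1 with h1 | h1
    · exact le_max_of_le_right (by nlinarith [cutoff_le_one ε t])
    · exact le_max_of_le_left
        (mul_nonpos_of_nonpos_of_nonneg (sub_nonpos.2 h1) (cutoff_nonneg ε t))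

namespace IsPreQuasitrace

lemma apply_cutDown_anti (ht : IsPreQuasitrace t) {x : B} (hx : 0 ≤ x) {ε ε' : ℝ} (hε' : 0 ≤ ε')
    (h : ε' ≤ ε) : t (cutDown ε x) ≤ t (cutDown ε' x) :=
  ht.mono_of_commute (cutDown_nonneg _ _) (cutDown_anti hε' h hx) (cfcₙ_commute_cfcₙ _ _ x).eq

lemma lscReg_le_self (ht : IsPreQuasitrace t) {x : B} (hx : 0 ≤ x) : lscReg t x ≤ t x :=
  lscReg_le hx fun ε hε => by
    simpa only [cutDown_zero hx] using ht.apply_cutDown_anti hx le_rfl hε.le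

lemma lscReg_smul_le (ht : IsPreQuasitrace t) {r : ℝ} (hr : 0 < r) {x : B} (hx : 0 ≤ x) :
    lscReg t (r • x) ≤ ENNReal.ofReal r * lscReg t x := by
  refine lscReg_le (smul_nonneg hr.le hx) fun ε hε => ?_
  rw [cutDown_smul hr hε hx, ht.map_smul r _ hr (cutDown_nonneg _ _)]
  gcongr
  exact apply_cutDown_le_lscReg hx (by positivity)

lemma lscReg_smul (ht : IsPreQuasitrace t) {r : ℝ} (hr : 0 < r) {x : B} (hx : 0 ≤ x) :
    lscReg t (r • x) = ENNReal.ofReal r * lscReg t x := by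
  refine le_antisymm (ht.lscReg_smul_le hr hx) ?_
  have hinv := ht.lscReg_smul_le (inv_pos.2 hr) (smul_nonneg hr.le hx)
  rw [smul_smul, inv_mul_cancel₀ hr.ne', one_smul] at hinv
  calc ENNReal.ofReal r * lscReg t x
      ≤ ENNReal.ofReal r * (ENNReal.ofReal r⁻¹ * lscReg t (r • x)) := by gcongr
    _ = lscReg t (r • x) := by
        rw [← mul_assoc, ← ENNReal.ofReal_mul hr.le, mul_inv_cancel₀ hr.ne', ENNReal.ofReal_one,
          one_mul]

lemma lscReg_add (ht : IsPreQuasitrace t) {x y : B} (hx : 0 ≤ x) (hy : 0 ≤ y)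
    (hc : Commute x y) : lscReg t (x + y) = lscReg t x + lscReg t y := by
  have hxy := add_nonneg hx hy
  have hadd (ε : ℝ) : t (cutDown ε x + cutDown ε y) = t (cutDown ε x) + t (cutDown ε y) :=
    ht.map_add _ _ (cutDown_nonneg _ _) (cutDown_nonneg _ _) (commute_cutDown hc ε ε).eq
  have hcomm (ε δ : ℝ) : Commute (cutDown ε x + cutDown ε y) (cutDown δ (x + y)) :=
    (commute_cutDown ((Commute.refl x).add_right hc) ε δ).add_left
      (commute_cutDown (hc.symm.add_right (.refl y)) ε δ)
  refine le_antisymm (lscReg_le hxy fun ε hε => ?_) ?_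
  · calc t (cutDown ε (x + y)) ≤ t (cutDown (ε / 2) x + cutDown (ε / 2) y) :=
          ht.mono_of_commute (cutDown_nonneg _ _) (cutDown_add_le_of_commute hx hy hc hε.le)
            (hcomm _ _).symm.eq
      _ ≤ lscReg t x + lscReg t y := by
          rw [hadd]
          exact add_le_add (apply_cutDown_le_lscReg hx (half_pos hε))
            (apply_cutDown_le_lscReg hy (half_pos hε))
  · rw [lscReg_of_nonneg hx, lscReg_of_nonneg hy]
    simp only [iSup_subtype']
    refine ENNReal.iSup_add_iSup_le fun ε δ => ?_
    have hμ : 0 < min ε.1 δ.1 := lt_min ε.2 δ.2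
    calc t (cutDown ε x) + t (cutDown δ y)
        ≤ t (cutDown (min ε.1 δ.1) x) + t (cutDown (min ε.1 δ.1) y) :=
          add_le_add (ht.apply_cutDown_anti hx hμ.le (min_le_left _ _))
            (ht.apply_cutDown_anti hy hμ.le (min_le_right _ _))
      _ = t (cutDown (min ε.1 δ.1) x + cutDown (min ε.1 δ.1) y) := (hadd _).symm
      _ ≤ t (cutDown (min ε.1 δ.1) (x + y)) :=
          ht.mono_of_commute (add_nonneg (cutDown_nonneg _ _) (cutDown_nonneg _ _))
            (cutDown_add_cutDown_le_of_commute hx hy hc hμ.le) (hcomm _ _).eq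
      _ ≤ lscReg t (x + y) := apply_cutDown_le_lscReg hxy hμ

lemma isPreQuasitrace_lscReg (ht : IsPreQuasitrace t) : IsPreQuasitrace (lscReg t) where
  map_zero := by
    refine le_antisymm (lscReg_le le_rfl fun ε hε => ?_) zero_le
    rw [cutDown_eq_zero le_rfl (by simpa using hε.le), ht.map_zero]
  map_smul _ _ hr hx := ht.lscReg_smul hr hx
  map_add _ _ hx hy hc := ht.lscReg_add hx hy hc
  map_star_mul_self x := by
    rw [lscReg_of_nonneg (star_mul_self_nonneg x), lscReg_of_nonneg (mul_star_self_nonneg x)]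
    refine iSup_congr fun ε => iSup_congr fun hε => ?_
    obtain ⟨y, hy, hy'⟩ := exists_star_mul_self_eq_cutDown hε x
    rw [← hy, ← hy', ht.map_star_mul_self]

lemma apply_fEps_le_lscReg (ht : IsPreQuasitrace t) {x : B} (hx : 0 ≤ x) {ε : ℝ} (hε : 0 < ε) :
    t (fEps ε x) ≤ lscReg t (fEps (ε / 2) x) := by
  have hlim : Tendsto (fun η : ℝ => ENNReal.ofReal (1 - η) * t (fEps ε x)) (𝓝[>] 0)
      (𝓝 (t (fEps ε x))) := by
    have h : Tendsto (fun η : ℝ => ENNReal.ofReal (1 - η)) (𝓝 0) (𝓝 1) := by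
      simpa using ENNReal.tendsto_ofReal ((tendsto_id (α := ℝ) (x := 𝓝 0)).const_sub 1)
    simpa using ENNReal.Tendsto.mul_const (h.mono_left nhdsWithin_le_nhds) (.inl one_ne_zero)
  refine le_of_tendsto hlim ?_
  filter_upwards [Ioo_mem_nhdsGT one_pos] with η ⟨hη, hη1⟩
  rw [← ht.map_smul _ _ (sub_pos.2 hη1) (fEps_nonneg ε x)]
  exact (ht.mono_of_commute (smul_nonneg (sub_nonneg.2 hη1.le) (fEps_nonneg ε x))
    (one_sub_smul_fEps_le_cutDown hε hη.le hx)
    (((cfcₙ_commute_cfcₙ _ _ x).symm.cfcₙ_real _).symm.smul_left _).eq).trans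
    (apply_cutDown_le_lscReg (fEps_nonneg _ x) hη)

end IsPreQuasitrace

end Regularization

section PedersenIdeal

variable {B : Type*} [NonUnitalCStarAlgebra B]

lemma exists_eq_add_mul_of_norm_sub_lt_one {h y f : B} (hf : h * f = f) (hy : ‖h - y‖ < 1) :
    ∃ z, f = y * f + z * (y * f) := by
  have hlt : ‖((h - y : B) : Unitization ℂ B)‖ < 1 := by rwa [Unitization.norm_inr]
  obtain ⟨w, hw⟩ := (isUnit_one_sub_of_norm_lt_one hlt).exists_left_inv
  have hw1 : w.fst = 1 := by
    simpa [sub_eq_add_neg] using congrArg (fun z : Unitization ℂ B => z.fst) hw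
  have hmul : (1 - ((h - y : B) : Unitization ℂ B)) * (f : Unitization ℂ B) =
      ((y * f : B) : Unitization ℂ B) := by
    rw [sub_mul, one_mul, ← Unitization.inr_mul, ← Unitization.inr_sub, sub_mul, hf,
      sub_sub_cancel]
  have hf' : (f : Unitization ℂ B) = w * ((y * f : B) : Unitization ℂ B) := by
    rw [← hmul, ← mul_assoc, hw, one_mul]
  exact ⟨w.snd, by simpa [hw1] using congrArg (fun z : Unitization ℂ B => z.snd) hf'⟩

lemma mem_pedersen_of_mul_eq {h f : B} (hf : h * f = f) : f ∈ pedersen B := by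
  simp only [pedersen, pedersenIn, Set.mem_iInter, Set.mem_ofPred_eq]
  rintro I ⟨⟨-, -, hadd, -, hmul⟩, hI⟩
  obtain ⟨y, hy, hyd⟩ := Metric.mem_closure_iff.1 (hI (Set.mem_univ h)) 1 one_pos
  obtain ⟨z, hz⟩ := exists_eq_add_mul_of_norm_sub_lt_one hf (by rwa [← dist_eq_norm])
  have hyf : y * f ∈ I := (hmul y hy f (Set.mem_univ f)).1
  rw [hz]
  exact hadd _ hyf _ (hmul _ hyf z (Set.mem_univ z)).2

lemma fEps_mem_pedersen {ε : ℝ} (hε : 0 < ε) (x : B) : fEps ε x ∈ pedersen B :=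
  mem_pedersen_of_mul_eq (fEps_mul_fEps (half_pos hε) le_rfl x)

lemma pedersen_subset_of_isIdealIn {I : Set B} (hI : IsIdealIn B Set.univ I)
    (hd : Set.univ ⊆ closure I) : pedersen B ⊆ I := by
  intro p hp
  simp only [pedersen, pedersenIn, Set.mem_iInter] at hp
  exact hp I ⟨hI, hd⟩

variable [PartialOrder B] [StarOrderedRing B]

lemma fEps_mul_cutDown {ε : ℝ} (hε : 0 < ε) {x : B} (hx : 0 ≤ x) :
    fEps ε x * cutDown ε x = cutDown ε x := by
  unfold fEps cutDown
  rw [← cfcₙ_mul (cutoff ε) (fun t => max 0 (t - ε)) x (continuous_cutoff ε).continuousOn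
    (cutoff_zero ε) (continuous_max_zero_sub ε).continuousOn (max_zero_zero_sub hε.le)]
  refine cfcₙ_congr_of_nonneg hx fun t _ => ?_
  rcases le_total t ε with h | h
  · simp [h]
  · rw [cutoff_eq_one hε h, one_mul]

lemma cutDown_mem_pedersen {ε : ℝ} (hε : 0 < ε) {x : B} (hx : 0 ≤ x) :
    cutDown ε x ∈ pedersen B :=
  mem_pedersen_of_mul_eq (fEps_mul_cutDown hε hx)

lemma QuasiTrace.isZero_of_apply_pedersen_eq_zero {τ : QuasiTrace B}
    (h : ∀ p ∈ pedersen B, 0 ≤ p → τ.toFun p = 0) : τ.IsZero := by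
  intro x
  by_cases hx : 0 ≤ x
  · have hlim : Tendsto (fun ε => cutDown ε x) (𝓝[>] 0) (𝓝 x) := by
      refine tendsto_iff_norm_sub_tendsto_zero.2 (squeeze_zero_norm' ?_
        (tendsto_id.mono_left nhdsWithin_le_nhds))
      filter_upwards [eventually_mem_nhdsWithin] with ε (hε : 0 < ε)
      rw [norm_norm, norm_sub_rev]
      exact norm_sub_cutDown_le hε.le hx
    refine le_antisymm (τ.apply_le_of_tendsto (fun ε => cutDown_nonneg ε x) hlim ?_) zero_le
    filter_upwards [eventually_mem_nhdsWithin] with ε (hε : 0 < ε)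
    exact (h _ (cutDown_mem_pedersen hε hx) (cutDown_nonneg ε x)).le
  · exact τ.zero_of_not_nonneg x hx

end PedersenIdeal

section IsIdealIn

variable {B D : Type*} [NonUnitalCStarAlgebra B] [NonUnitalCStarAlgebra D]

lemma IsIdealIn.closure {I : Set B} (hI : IsIdealIn B Set.univ I) :
    IsIdealIn B Set.univ (closure I) := by
  obtain ⟨-, hzero, hadd, hneg, hmul⟩ := hI
  exact ⟨Set.subset_univ _, subset_closure hzero,
    fun x hx y hy => map_mem_closure₂ continuous_add hx hy hadd,
    fun x hx => map_mem_closure continuous_neg hx hneg,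
    fun x hx b _ => ⟨map_mem_closure (f := fun z => z * b) (continuous_mul_const b) hx
        fun a ha => (hmul a ha b trivial).1,
      map_mem_closure (continuous_const_mul b) hx fun a ha => (hmul a ha b trivial).2⟩⟩

lemma IsIdealIn.preimage {I : Set D} (hI : IsIdealIn D Set.univ I) (φ : B →⋆ₙₐ[ℂ] D) :
    IsIdealIn B Set.univ (φ ⁻¹' I) := by
  obtain ⟨-, hzero, hadd, hneg, hmul⟩ := hI
  simp only [IsIdealIn, Set.subset_univ, Set.mem_preimage, map_zero, map_add, map_neg, map_mul,
    true_and]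
  exact ⟨hzero, fun x hx y hy => hadd _ hx _ hy, fun x hx => hneg _ hx,
    fun x hx b _ => hmul _ hx _ trivial⟩

lemma IsSimpleCStar.eq_univ_of_isIdealIn (hB : IsSimpleCStar B) {I : Set B}
    (hI : IsIdealIn B Set.univ I) (hIc : IsClosed I) {x : B} (hx : x ∈ I) (hx0 : x ≠ 0) :
    I = Set.univ := by
  obtain ⟨-, hzero, hadd, hneg, hmul⟩ := hI
  let J : TwoSidedIdeal B := TwoSidedIdeal.mk' I hzero (hadd _ · _ ·) (hneg _ ·)
    (fun {x y} hy => (hmul y hy x trivial).2) (fun {x y} hx => (hmul x hx y trivial).1)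
  have hJ : (J : Set B) = I := TwoSidedIdeal.coe_mk' ..
  rcases hB.2 J (by rwa [hJ]) with h | h
  · rw [hJ] at h
    exact absurd (by simpa [h] using hx) hx0
  · rwa [hJ] at h

end IsIdealIn

section Corner

variable {C V : Type*} [NonUnitalCStarAlgebra C] [NonUnitalCStarAlgebra V]

namespace Stabilization

/-- The inclusion `a ↦ a ⊗ e₁₁` of `C` as a corner of its stabilization. -/
def corner (SB : Stabilization C V) : C →⋆ₙₐ[ℂ] V where
  toFun := SB.emb 0 0
  map_smul' := map_smul (SB.emb 0 0)
  map_zero' := map_zero (SB.emb 0 0)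
  map_add' := map_add (SB.emb 0 0)
  map_mul' a b := by rw [SB.emb_mul, if_pos rfl]
  map_star' a := (SB.emb_star 0 0 a).symm

lemma emb_zero_zero_fEps (SB : Stabilization C V) (ε : ℝ) {x : C} (hx : IsSelfAdjoint x) :
    SB.emb 0 0 (fEps ε x) = fEps ε (SB.emb 0 0 x) :=
  map_cfcₙ_of_continuous SB.corner (continuous_cutoff ε) (cutoff_zero ε) hx

lemma continuous_emb (SB : Stabilization C V) (i j : ℕ) : Continuous (SB.emb i j) :=
  (AddMonoidHomClass.isometry_of_norm (SB.emb i j) (SB.norm_emb i j)).continuous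

lemma emb_zero_zero_nonneg [PartialOrder C] [StarOrderedRing C] [PartialOrder V]
    [StarOrderedRing V] (SB : Stabilization C V) {x : C} (hx : 0 ≤ x) : 0 ≤ SB.emb 0 0 x :=
  map_nonneg SB.corner hx

lemma emb_mem_of_isIdealIn [PartialOrder C] [StarOrderedRing C] (SB : Stabilization C V)
    {I : Set V} (hI : IsIdealIn V Set.univ I) (hIc : IsClosed I)
    (h : ∀ x, SB.emb 0 0 x ∈ I) (i j : ℕ) (x : C) : SB.emb i j x ∈ I := by
  refine closedRightIdeal_induction (S := SB.emb i j ⁻¹' I) (mem_closedRightIdeal_mul_star x)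
    (hIc.preimage (SB.continuous_emb i j)) fun y => ?_
  have hfact : SB.emb i j (x * star x * y) =
      SB.emb i 0 x * SB.emb 0 0 (star x) * SB.emb 0 j y := by
    rw [SB.emb_mul, if_pos rfl, SB.emb_mul, if_pos rfl]
  obtain ⟨-, -, -, -, hmul⟩ := hI
  rw [Set.mem_preimage, hfact]
  exact (hmul _ (hmul _ (h (star x)) _ trivial).2 _ trivial).1

lemma dense_of_isIdealIn [PartialOrder C] [StarOrderedRing C] (SB : Stabilization C V)
    (hC : IsSimpleCStar C) {I : Set V} (hI : IsIdealIn V Set.univ I) {e : C} (he0 : e ≠ 0)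
    (he : SB.emb 0 0 e ∈ I) : Dense I := by
  have hcl := hI.closure
  have hcorner : SB.emb 0 0 ⁻¹' closure I = Set.univ :=
    hC.eq_univ_of_isIdealIn (hcl.preimage SB.corner)
      (isClosed_closure.preimage (SB.continuous_emb 0 0)) (subset_closure he) he0
  have hemb := SB.emb_mem_of_isIdealIn hcl isClosed_closure (Set.eq_univ_iff_forall.1 hcorner)
  refine dense_closure.1 (SB.dense_span.mono fun w hw => ?_)
  induction hw using Submodule.closure_induction with
  | zero => exact hcl.2.1
  | add x y _ _ hx hy => exact hcl.2.2.1 x hx y hy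
  | smul_mem c x hx =>
    obtain ⟨i, j, a, rfl⟩ := hx
    rw [← map_smul]
    exact hemb i j _

end Stabilization

end Corner

section DimensionIdeal

/-- The ideal of elements whose dimension is dominated, uniformly over all quasitraces, by a
multiple of the dimension of `E`. -/
def dimensionIdeal {B : Type*} [NonUnitalCStarAlgebra B] [PartialOrder B] (E : B) : Set B :=
  {s | ∃ k : ℕ, ∀ τ : QuasiTrace B, dTau τ (star s * s) ≤ k * dTau τ E}

lemma dTau_zero {B : Type*} [NonUnitalCStarAlgebra B] [PartialOrder B] (τ : QuasiTrace B) :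
    dTau τ 0 = 0 :=
  le_antisymm (iSup_le fun n => by rw [fEps, cfcₙ_apply_zero, τ.map_zero]) zero_le

variable {B : Type*} [NonUnitalCStarAlgebra B] [PartialOrder B] [StarOrderedRing B]

lemma self_mem_dimensionIdeal {E : B} (hE : 0 ≤ E) : E ∈ dimensionIdeal E := by
  refine ⟨1, fun τ => ?_⟩
  rw [Nat.cast_one, one_mul]
  refine dTau_mono_of_mem_closedRightIdeal τ (star_mul_self_nonneg E) hE ?_
  rw [hE.isSelfAdjoint.star_eq]
  exact mul_mem_closedRightIdeal E E

lemma add_mem_dimensionIdeal (hB : HasOrthogonalCopies B) {E s t : B}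
    (hs : s ∈ dimensionIdeal E) (ht : t ∈ dimensionIdeal E) : s + t ∈ dimensionIdeal E := by
  obtain ⟨k, hk⟩ := hs
  obtain ⟨l, hl⟩ := ht
  have hnonneg := add_nonneg (star_mul_self_nonneg s) (star_mul_self_nonneg t)
  refine ⟨k + l, fun τ => ?_⟩
  calc dTau τ (star (s + t) * (s + t)) ≤ dTau τ (star s * s + star t * t) :=
        dTau_mono_of_mem_closedRightIdeal τ (star_mul_self_nonneg _) hnonneg
          (mem_closedRightIdeal_of_le (star_mul_self_nonneg _) hnonneg (star_add_mul_add_le s t))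
    _ ≤ dTau τ (star s * s) + dTau τ (star t * t) :=
        hB.dTau_add_le τ (star_mul_self_nonneg s) (star_mul_self_nonneg t)
    _ ≤ k * dTau τ E + l * dTau τ E := add_le_add (hk τ) (hl τ)
    _ = (k + l : ℕ) * dTau τ E := by push_cast; rw [add_mul]

lemma mul_left_mem_dimensionIdeal {E s : B} (hs : s ∈ dimensionIdeal E) (b : B) :
    b * s ∈ dimensionIdeal E := by
  obtain ⟨k, hk⟩ := hs
  refine ⟨k, fun τ => (dTau_mono_of_mem_closedRightIdeal τ (star_mul_self_nonneg _)
    (star_mul_self_nonneg s) ?_).trans (hk τ)⟩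
  rw [star_mul, mul_assoc]
  exact mul_right_mem_closedRightIdeal
    (by simpa only [star_star] using mem_closedRightIdeal_mul_star (star s)) _

lemma mul_right_mem_dimensionIdeal {E s : B} (hs : s ∈ dimensionIdeal E) (b : B) :
    s * b ∈ dimensionIdeal E := by
  obtain ⟨k, hk⟩ := hs
  refine ⟨k, fun τ => ?_⟩
  calc dTau τ (star (s * b) * (s * b)) ≤ dTau τ (s * b * star (s * b)) := by
        simpa only [star_star] using dTau_mul_star_self_le τ (star (s * b))
    _ ≤ dTau τ (s * star s) := by
        refine dTau_mono_of_mem_closedRightIdeal τ (mul_star_self_nonneg _)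
          (mul_star_self_nonneg s) ?_
        rw [mul_assoc]
        exact mul_right_mem_closedRightIdeal (mem_closedRightIdeal_mul_star s) _
    _ ≤ dTau τ (star s * s) := dTau_mul_star_self_le τ s
    _ ≤ k * dTau τ E := hk τ

lemma isIdealIn_dimensionIdeal (hB : HasOrthogonalCopies B) (E : B) :
    IsIdealIn B Set.univ (dimensionIdeal E) := by
  refine ⟨Set.subset_univ _, ⟨0, fun τ => by simp [dTau_zero]⟩,
    fun x hx y hy => add_mem_dimensionIdeal hB hx hy, fun x hx => ?_,
    fun x hx b _ => ⟨mul_right_mem_dimensionIdeal hx b, mul_left_mem_dimensionIdeal hx b⟩⟩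
  simpa only [dimensionIdeal, Set.mem_ofPred_eq, star_neg, neg_mul_neg] using hx

lemma QuasiTrace.apply_le_norm_mul {τ : QuasiTrace B} {p : B} (hp : 0 ≤ p) :
    τ.toFun p ≤ ENNReal.ofReal ‖p‖ * dTau τ (star p * p) := by
  rcases eq_or_ne p 0 with rfl | h0
  · simp [τ.map_zero]
  have hn : 0 < ‖p‖ := norm_pos_iff.2 h0
  have hnonneg : 0 ≤ ‖p‖⁻¹ • p := smul_nonneg (by positivity) hp
  calc τ.toFun p = τ.toFun (‖p‖ • ‖p‖⁻¹ • p) := by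
        rw [smul_smul, mul_inv_cancel₀ hn.ne', one_smul]
    _ = ENNReal.ofReal ‖p‖ * τ.toFun (‖p‖⁻¹ • p) := τ.map_smul _ _ hn hnonneg
    _ ≤ ENNReal.ofReal ‖p‖ * dTau τ (star p * p) := by
        gcongr
        refine τ.apply_le_dTau (star_mul_self_nonneg p) hnonneg ?_ ?_
        · rw [norm_smul, norm_inv, norm_norm, inv_mul_cancel₀ hn.ne']
        · rw [hp.isSelfAdjoint.star_eq]
          exact (closedRightIdeal _).smul_of_tower_mem _
            (mem_closedRightIdeal_mul_self hp.isSelfAdjoint)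

end DimensionIdeal

section Normalization

variable {B : Type*} [NonUnitalCStarAlgebra B] [PartialOrder B]

/-- The norm of the restriction of `τ` to the hereditary subalgebra generated by `E`, so that
`QTSetHer E` consists of the quasitraces with `herNorm E τ = 1`. -/
def herNorm (E : B) (τ : QuasiTrace B) : ℝ≥0∞ :=
  ⨆ a : {a : B // a ∈ her E ∧ 0 ≤ a ∧ ‖a‖ ≤ 1}, τ.toFun a

/-- The quasitrace `c • τ`. -/
def QuasiTrace.scale (τ : QuasiTrace B) (c : ℝ≥0∞) (hc : c ≠ ∞) : QuasiTrace B where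
  toFun x := c * τ.toFun x
  zero_of_not_nonneg x hx := by rw [τ.zero_of_not_nonneg x hx, mul_zero]
  map_zero := by rw [τ.map_zero, mul_zero]
  map_smul r x hr hx := by rw [τ.map_smul r x hr hx, mul_left_comm]
  map_add_of_commute x y hx hy h := by rw [τ.map_add_of_commute x y hx hy h, mul_add]
  map_star_mul_self x := by rw [τ.map_star_mul_self]
  lowerSemicontinuousOn :=
    (ENNReal.continuous_const_mul hc).comp_lowerSemicontinuousOn τ.lowerSemicontinuousOn
      fun x y h => by dsimp only; gcongr
  finite_on_pedersen x hx hx0 := ENNReal.mul_lt_top hc.lt_top (τ.finite_on_pedersen x hx hx0)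
  exists_matrix_extension := by
    obtain ⟨σ, hcorner, hzero, hsmul, hadd, hstar⟩ := τ.exists_matrix_extension
    refine ⟨fun x => c * σ x, fun a => congrArg (c * ·) (hcorner a), ?_, fun r x hr hx => ?_,
      fun x y hx hy h => ?_, fun x => congrArg (c * ·) (hstar x)⟩
    · beta_reduce; rw [hzero, mul_zero]
    · beta_reduce; rw [hsmul r x hr hx, mul_left_comm]
    · beta_reduce; rw [hadd x y hx hy h, mul_add]

lemma dTau_scale (τ : QuasiTrace B) (c : ℝ≥0∞) (hc : c ≠ ∞) (x : B) :
    dTau (τ.scale c hc) x = c * dTau τ x := by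
  unfold dTau
  rw [ENNReal.mul_iSup]
  rfl

lemma QuasiTrace.scale_inv_herNorm_mem_QTSetHer {E : B} {τ : QuasiTrace B}
    (h0 : herNorm E τ ≠ 0) (h1 : herNorm E τ ≠ ∞) :
    τ.scale (herNorm E τ)⁻¹ (ENNReal.inv_ne_top.2 h0) ∈ QTSetHer E := by
  change (⨆ a : {a : B // a ∈ her E ∧ 0 ≤ a ∧ ‖a‖ ≤ 1}, (herNorm E τ)⁻¹ * τ.toFun a) = 1
  rw [← ENNReal.mul_iSup]
  exact ENNReal.inv_mul_cancel h0 h1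

/-- A pair `(E, u)` relative to which quasitraces can be normalized: `u` is a local unit for `E`
lying in the Pedersen ideal, and `E` is full in the sense that its dimension dominates, up to
multiples, the dimension of every element of the Pedersen ideal. -/
structure IsNormalizingPair (E u : B) : Prop where
  nonneg : 0 ≤ E
  eq_fEps : ∃ (x : B) (ε : ℝ), 0 ≤ x ∧ 0 < ε ∧ u = fEps ε x
  unit_mul : u * E = E
  pedersen_subset : pedersen B ⊆ dimensionIdeal E

lemma IsNormalizingPair.norm_unit_le_one {E u : B} (h : IsNormalizingPair E u) : ‖u‖ ≤ 1 := by
  obtain ⟨x, ε, -, -, rfl⟩ := h.eq_fEps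
  exact norm_fEps_le_one ε x

lemma IsNormalizingPair.unit_mem_pedersen {E u : B} (h : IsNormalizingPair E u) :
    u ∈ pedersen B := by
  obtain ⟨x, ε, -, hε, rfl⟩ := h.eq_fEps
  exact fEps_mem_pedersen hε x

variable [StarOrderedRing B]

lemma fEps_mem_her {E : B} (hE : 0 ≤ E) {ε : ℝ} (hε : 0 < ε) : fEps ε E ∈ her E := by
  have hε2 : 0 < ε / 2 := half_pos hε
  have hcomm : Commute (fEps ε E) (fEps (ε / 2) E) := cfcₙ_commute_cfcₙ _ _ E
  refine subset_closure
    ⟨cfcₙ (cutoffDiv (ε / 2)) E * fEps ε E * cfcₙ (cutoffDiv (ε / 2)) E, ?_⟩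
  calc fEps ε E = fEps (ε / 2) E * fEps ε E * fEps (ε / 2) E := by
        rw [fEps_mul_fEps hε2 le_rfl, hcomm.eq,
          fEps_mul_fEps hε2 le_rfl]
    _ = E * cfcₙ (cutoffDiv (ε / 2)) E * fEps ε E * (cfcₙ (cutoffDiv (ε / 2)) E * E) := by
        rw [← fEps_eq_mul_cfcₙ hε2 hE.isSelfAdjoint, ← fEps_eq_cfcₙ_mul hε2 hE.isSelfAdjoint]
    _ = _ := by simp only [mul_assoc]

lemma dTau_le_herNorm {E : B} (hE : 0 ≤ E) (τ : QuasiTrace B) : dTau τ E ≤ herNorm E τ :=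
  iSup_le fun _ => le_iSup (fun a : {a : B // a ∈ her E ∧ 0 ≤ a ∧ ‖a‖ ≤ 1} => τ.toFun a)
    ⟨_, fEps_mem_her hE Nat.one_div_pos_of_nat, fEps_nonneg _ _, norm_fEps_le_one _ _⟩

lemma dTau_le_one_of_mem_QTSetHer {E : B} (hE : 0 ≤ E) {τ : QuasiTrace B}
    (hτ : τ ∈ QTSetHer E) : dTau τ E ≤ 1 :=
  (dTau_le_herNorm hE τ).trans_eq hτ

namespace IsNormalizingPair

variable {E u : B}

lemma unit_nonneg (h : IsNormalizingPair E u) : 0 ≤ u := by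
  obtain ⟨x, ε, -, -, rfl⟩ := h.eq_fEps
  exact fEps_nonneg ε x

lemma herNorm_le (h : IsNormalizingPair E u) (τ : QuasiTrace B) : herNorm E τ ≤ τ.toFun u := by
  have hher : her E ⊆ {x | u * x = x} := by
    refine closure_minimal ?_ (isClosed_eq (by fun_prop) (by fun_prop))
    rintro _ ⟨y, rfl⟩
    simp only [Set.mem_ofPred_eq, ← mul_assoc, h.unit_mul]
  exact iSup_le fun ⟨x, hx, hx0, hx1⟩ => τ.isPreQuasitrace.le_of_mul_eq h.unit_nonneg
    h.norm_unit_le_one hx0 hx1 (hher hx)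

lemma one_le_apply_unit (h : IsNormalizingPair E u) {τ : QuasiTrace B} (hτ : τ ∈ QTSetHer E) :
    1 ≤ τ.toFun u :=
  (show herNorm E τ = 1 from hτ) ▸ h.herNorm_le τ

lemma exists_forall_apply_le (h : IsNormalizingPair E u) {p : B} (hp : p ∈ pedersen B)
    (hp0 : 0 ≤ p) : ∃ M : ℝ≥0∞, M ≠ ∞ ∧ ∀ τ : QuasiTrace B, τ.toFun p ≤ M * dTau τ E := by
  obtain ⟨k, hk⟩ := h.pedersen_subset hp
  refine ⟨ENNReal.ofReal ‖p‖ * k, by simp [ENNReal.mul_eq_top], fun τ => ?_⟩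
  rw [mul_assoc]
  exact (QuasiTrace.apply_le_norm_mul hp0).trans (by gcongr; exact hk τ)

lemma exists_forall_mem_QTSetHer_apply_le (h : IsNormalizingPair E u) {p : B}
    (hp : p ∈ pedersen B) (hp0 : 0 ≤ p) :
    ∃ M : ℝ≥0∞, M ≠ ∞ ∧ ∀ τ ∈ QTSetHer E, τ.toFun p ≤ M := by
  obtain ⟨M, hM, hle⟩ := h.exists_forall_apply_le hp hp0
  exact ⟨M, hM, fun τ hτ => (hle τ).trans
    (mul_le_of_le_one_right' (dTau_le_one_of_mem_QTSetHer h.nonneg hτ))⟩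

lemma herNorm_ne_zero (h : IsNormalizingPair E u) {τ : QuasiTrace B} (hτ : ¬ τ.IsZero) :
    herNorm E τ ≠ 0 := by
  intro h0
  have hd : dTau τ E = 0 := le_antisymm ((dTau_le_herNorm h.nonneg τ).trans h0.le) zero_le
  refine hτ (QuasiTrace.isZero_of_apply_pedersen_eq_zero fun p hp hp0 => ?_)
  obtain ⟨M, -, hM⟩ := h.exists_forall_apply_le hp hp0
  simpa [hd] using hM τ

lemma dTau_lt_dTau (h : IsNormalizingPair E u) {x y : B}
    (hxy : ∀ τ ∈ QTSetHer E, dTau τ x < dTau τ y) {τ : QuasiTrace B} (hτ : ¬ τ.IsZero) :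
    dTau τ x < dTau τ y := by
  have h1 : herNorm E τ ≠ ∞ :=
    ((h.herNorm_le τ).trans_lt (τ.finite_on_pedersen _ h.unit_mem_pedersen h.unit_nonneg)).ne
  have hlt := hxy _ (QuasiTrace.scale_inv_herNorm_mem_QTSetHer (h.herNorm_ne_zero hτ) h1)
  rw [dTau_scale, dTau_scale] at hlt
  exact lt_of_mul_lt_mul_left' hlt

end IsNormalizingPair

lemma exists_fEps_ne_zero {x : B} (hx : 0 ≤ x) (hx0 : x ≠ 0) : ∃ ε, 0 < ε ∧ fEps ε x ≠ 0 := by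
  by_contra! hzero
  refine hx0 (tendsto_nhds_unique (tendsto_fEps_mul hx (self_mem_closedRightIdeal hx)) ?_)
  refine tendsto_const_nhds.congr' ?_
  filter_upwards [eventually_mem_nhdsWithin] with ε (hε : 0 < ε)
  rw [hzero ε hε, zero_mul]

lemma Stabilization.exists_isNormalizingPair {C : Type*} [NonUnitalCStarAlgebra C]
    [PartialOrder C] [StarOrderedRing C] (SB : Stabilization C B) (hC : IsSimpleCStar C) :
    ∃ e : C, 0 ≤ e ∧ e ≠ 0 ∧ e ∈ pedersen C ∧ ∃ u : B, IsNormalizingPair (SB.emb 0 0 e) u := by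
  obtain ⟨x, hx⟩ := hC.1
  have hpos : 0 ≤ star x * x := star_mul_self_nonneg x
  obtain ⟨ε, hε, hne⟩ := exists_fEps_ne_zero hpos (by simpa using hx)
  have hE := SB.emb_zero_zero_nonneg (fEps_nonneg ε (star x * x))
  have hideal := isIdealIn_dimensionIdeal SB.hasOrthogonalCopies (SB.emb 0 0 (fEps ε (star x * x)))
  refine ⟨fEps ε (star x * x), fEps_nonneg _ _, hne, fEps_mem_pedersen hε _,
    fEps (ε / 2) (SB.emb 0 0 (star x * x)), hE,
    ⟨_, _, SB.emb_zero_zero_nonneg hpos, half_pos hε, rfl⟩, ?_, ?_⟩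
  · rw [SB.emb_zero_zero_fEps ε hpos.isSelfAdjoint, fEps_mul_fEps (half_pos hε) le_rfl]
  · exact pedersen_subset_of_isIdealIn hideal
      (SB.dense_of_isIdealIn hC hideal hne (self_mem_dimensionIdeal hE)).closure_eq.ge

end Normalization

section Ultralimit

/-- The limit of a sequence in `[0, ∞]` along a fixed free ultrafilter on `ℕ`. -/
def ulim (u : ℕ → ℝ≥0∞) : ℝ≥0∞ := (Ultrafilter.map u (hyperfilter ℕ)).lim

lemma tendsto_ulim (u : ℕ → ℝ≥0∞) : Tendsto u (hyperfilter ℕ : Filter ℕ) (𝓝 (ulim u)) :=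
  (Ultrafilter.map u (hyperfilter ℕ)).le_nhds_lim

lemma ulim_eq_of_tendsto {u : ℕ → ℝ≥0∞} {l : ℝ≥0∞}
    (h : Tendsto u (hyperfilter ℕ : Filter ℕ) (𝓝 l)) : ulim u = l :=
  tendsto_nhds_unique (tendsto_ulim u) h

lemma ulim_const (c : ℝ≥0∞) : ulim (fun _ => c) = c :=
  ulim_eq_of_tendsto tendsto_const_nhds

lemma ulim_mono {u v : ℕ → ℝ≥0∞} (h : ∀ n, u n ≤ v n) : ulim u ≤ ulim v :=
  le_of_tendsto_of_tendsto' (tendsto_ulim u) (tendsto_ulim v) h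

lemma ulim_le {u : ℕ → ℝ≥0∞} {c : ℝ≥0∞} (h : ∀ n, u n ≤ c) : ulim u ≤ c :=
  le_of_tendsto' (tendsto_ulim u) h

lemma le_ulim {u : ℕ → ℝ≥0∞} {c : ℝ≥0∞} (h : ∀ n, c ≤ u n) : c ≤ ulim u :=
  ge_of_tendsto' (tendsto_ulim u) h

lemma single_zero_zero_eq_diagHom {B : Type*} [NonUnitalCStarAlgebra B] (a : B) :
    (fun i j => if i = 0 ∧ j = 0 then a else 0 : Matrix (Fin 2) (Fin 2) B) =
      diagHom B (a, 0) := by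
  ext i j
  fin_cases i <;> fin_cases j <;> simp [diagHom, CStarMatrix.ofMatrix_apply]

variable {B : Type*} [NonUnitalCStarAlgebra B] [PartialOrder B]

lemma IsPreQuasitrace.ulim {t : ℕ → B → ℝ≥0∞} (ht : ∀ n, IsPreQuasitrace (t n)) :
    IsPreQuasitrace fun x => ulim fun n => t n x where
  map_zero := by simp only [(ht _).map_zero, ulim_const]
  map_smul r a hr ha := by
    simp only [(ht _).map_smul r a hr ha]
    exact ulim_eq_of_tendsto
      (ENNReal.Tendsto.const_mul (tendsto_ulim _) (Or.inr ENNReal.ofReal_ne_top))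
  map_add a b ha hb hab := by
    simp only [(ht _).map_add a b ha hb hab]
    exact ulim_eq_of_tendsto ((tendsto_ulim _).add (tendsto_ulim _))
  map_star_mul_self x := by simp only [(ht _).map_star_mul_self x]

variable [StarOrderedRing B]

-- Mathlib's lemma does not apply to `CStarMatrix` directly: its scalar towers are not found.
lemma nonneg_iff_exists_eq_star_mul_self {x : B} : 0 ≤ x ↔ ∃ y, x = star y * y :=
  CStarAlgebra.nonneg_iff_eq_star_mul_self

lemma cStarMatrix_nonneg_iff {x : CStarMatrix (Fin 2) (Fin 2) B} :
    0 ≤ x ↔ ∃ y, x = star y * y :=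
  nonneg_iff_exists_eq_star_mul_self

lemma isPreQuasitrace_of_matrix {σ : Matrix (Fin 2) (Fin 2) B → ℝ≥0∞} (h0 : σ 0 = 0)
    (hsmul : ∀ (r : ℝ) (x : Matrix (Fin 2) (Fin 2) B), 0 < r → (∃ y, x = star y * y) →
      σ (r • x) = ENNReal.ofReal r * σ x)
    (hadd : ∀ x y : Matrix (Fin 2) (Fin 2) B, (∃ z, x = star z * z) → (∃ z, y = star z * z) →
      x * y = y * x → σ (x + y) = σ x + σ y)
    (hstar : ∀ x : Matrix (Fin 2) (Fin 2) B, σ (star x * x) = σ (x * star x)) :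
    IsPreQuasitrace (B := CStarMatrix (Fin 2) (Fin 2) B) fun x => σ x where
  map_zero := h0
  map_smul r a hr ha := hsmul r a hr (cStarMatrix_nonneg_iff.1 ha)
  map_add a b ha hb hab :=
    hadd a b (cStarMatrix_nonneg_iff.1 ha) (cStarMatrix_nonneg_iff.1 hb) hab
  map_star_mul_self x := hstar x

lemma lscReg_map {D : Type*} [NonUnitalCStarAlgebra D] [PartialOrder D] [StarOrderedRing D]
    (φ : B →⋆ₙₐ[ℂ] D) {s : D → ℝ≥0∞} {t : B → ℝ≥0∞} (hst : ∀ a, s (φ a) = t a)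
    (hφ : ∀ a, 0 ≤ φ a → 0 ≤ a) (a : B) : lscReg s (φ a) = lscReg t a := by
  by_cases ha : 0 ≤ a
  · rw [lscReg_of_nonneg ha, lscReg_of_nonneg (map_nonneg φ ha)]
    refine iSup_congr fun ε => iSup_congr fun hε => ?_
    rw [← hst, cutDown, cutDown, map_cfcₙ_of_continuous φ (continuous_max_zero_sub ε)
      (max_zero_zero_sub hε.le) ha.isSelfAdjoint]
  · rw [lscReg, lscReg, if_neg ha, if_neg (mt (hφ a) ha)]

lemma nonneg_of_diagHom_nonneg {a b : B} (h : 0 ≤ diagHom B (a, b)) : 0 ≤ a := by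
  obtain ⟨y, hy⟩ := cStarMatrix_nonneg_iff.1 h
  have hentry := congrFun (congrFun hy 0) 0
  have ha : a = star (y 0 0) * y 0 0 + star (y 1 0) * y 1 0 := by
    simpa [diagHom, CStarMatrix.ofMatrix_apply, CStarMatrix.mul_apply, CStarMatrix.star_apply]
      using hentry
  exact ha ▸ add_nonneg (star_mul_self_nonneg _) (star_mul_self_nonneg _)

/-- The lower semicontinuous regularization of the pointwise ultralimit of a sequence of
quasitraces; the regularization is needed because pointwise limits need not be lower
semicontinuous. -/
def QuasiTrace.ultralimit (τ : ℕ → QuasiTrace B)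
    (hfin : ∀ p ∈ pedersen B, 0 ≤ p → ulim (fun n => (τ n).toFun p) < ∞) : QuasiTrace B where
  toFun := lscReg fun x => ulim fun n => (τ n).toFun x
  zero_of_not_nonneg a ha := if_neg ha
  map_zero := (IsPreQuasitrace.ulim fun n => (τ n).isPreQuasitrace).isPreQuasitrace_lscReg.map_zero
  map_smul := (IsPreQuasitrace.ulim fun n => (τ n).isPreQuasitrace).isPreQuasitrace_lscReg.map_smul
  map_add_of_commute :=
    (IsPreQuasitrace.ulim fun n => (τ n).isPreQuasitrace).isPreQuasitrace_lscReg.map_add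
  map_star_mul_self :=
    (IsPreQuasitrace.ulim fun n => (τ n).isPreQuasitrace).isPreQuasitrace_lscReg.map_star_mul_self
  lowerSemicontinuousOn := lowerSemicontinuousOn_lscReg fun _ _ hx hy _ hδ hxy =>
    ulim_mono fun n => (τ n).apply_cutDown_le_of_norm_sub_le hx hy hδ hxy
  finite_on_pedersen p hp hp0 :=
    ((IsPreQuasitrace.ulim fun n => (τ n).isPreQuasitrace).lscReg_le_self hp0).trans_lt
      (hfin p hp hp0)
  exists_matrix_extension := by
    choose σ hσ h0 hsmul hadd hstar using fun n => (τ n).exists_matrix_extension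
    have hpre := (IsPreQuasitrace.ulim fun n =>
      isPreQuasitrace_of_matrix (h0 n) (hsmul n) (hadd n) (hstar n)).isPreQuasitrace_lscReg
    refine ⟨lscReg (B := CStarMatrix (Fin 2) (Fin 2) B) fun x => ulim fun n => σ n x, fun a => ?_,
      hpre.map_zero, fun r x hr hx => hpre.map_smul r x hr (cStarMatrix_nonneg_iff.2 hx),
      fun x y hx hy hxy => hpre.map_add x y (cStarMatrix_nonneg_iff.2 hx)
        (cStarMatrix_nonneg_iff.2 hy) hxy, hpre.map_star_mul_self⟩
    rw [single_zero_zero_eq_diagHom]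
    refine lscReg_map ((diagHom B).comp (NonUnitalStarAlgHom.inl ℂ B B)) (fun b => ?_)
      (fun b hb => nonneg_of_diagHom_nonneg hb) a
    congr 1
    funext n
    rw [← hσ n b, single_zero_zero_eq_diagHom]
    rfl

variable {τ : ℕ → QuasiTrace B}
  {hfin : ∀ p ∈ pedersen B, 0 ≤ p → ulim (fun n => (τ n).toFun p) < ∞}

lemma dTau_ultralimit_le {x : B} {M : ℝ≥0∞}
    (h : ∀ ε, 0 < ε → ulim (fun n => (τ n).toFun (fEps ε x)) ≤ M) :
    dTau (QuasiTrace.ultralimit τ hfin) x ≤ M :=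
  iSup_le fun _ => ((IsPreQuasitrace.ulim fun n => (τ n).isPreQuasitrace).lscReg_le_self
    (fEps_nonneg _ _)).trans (h _ Nat.one_div_pos_of_nat)

lemma ulim_apply_fEps_le_ultralimit_apply {x : B} (hx : 0 ≤ x) {ε : ℝ} (hε : 0 < ε) :
    ulim (fun n => (τ n).toFun (fEps ε x)) ≤
      (QuasiTrace.ultralimit τ hfin).toFun (fEps (ε / 2) x) :=
  (IsPreQuasitrace.ulim fun n => (τ n).isPreQuasitrace).apply_fEps_le_lscReg hx hε

lemma IsNormalizingPair.not_isZero_ultralimit {E u : B} (h : IsNormalizingPair E u)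
    (hτ : ∀ n, τ n ∈ QTSetHer E) : ¬ (QuasiTrace.ultralimit τ hfin).IsZero := by
  intro hzero
  obtain ⟨x, ε, hx, hε, rfl⟩ := h.eq_fEps
  have hone : 1 ≤ ulim fun n => (τ n).toFun (fEps ε x) :=
    le_ulim fun n => h.one_le_apply_unit (hτ n)
  have hle := hone.trans (ulim_apply_fEps_le_ultralimit_apply (hfin := hfin) hx hε)
  rw [hzero] at hle
  exact absurd hle (by simp)

end Ultralimit

section UniformGap

lemma omegaOn_eq_zero_of_subset {B : Type*} [NonUnitalCStarAlgebra B] [PartialOrder B]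
    {S T : Set (QuasiTrace B)} {a : B} (hST : S ⊆ T) (hT : omegaOn T a = 0) : omegaOn S a = 0 :=
  le_antisymm ((iInf_mono fun _ => biSup_mono fun _ h => hST h).trans hT.le) zero_le

lemma exists_dTau_le_apply_fEps_add {B : Type*} [NonUnitalCStarAlgebra B] [PartialOrder B]
    {S : Set (QuasiTrace B)} {a : B} (hω : omegaOn S a = 0) {κ : ℝ≥0∞} (hκ : κ ≠ 0) :
    ∃ ε : ℝ, 0 < ε ∧ ∀ τ ∈ S, dTau τ a ≤ τ.toFun (fEps ε a) + κ := by
  have hlt : omegaOn S a < κ := hω ▸ pos_iff_ne_zero.2 hκ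
  obtain ⟨k, hk⟩ := iInf_lt_iff.1 hlt
  exact ⟨1 / (k + 1), Nat.one_div_pos_of_nat, fun τ hτ =>
    tsub_le_iff_left.1 ((le_iSup₂ (f := fun (τ : QuasiTrace B) (_ : τ ∈ S) =>
      dTau τ a - τ.toFun (fEps (1 / ((k : ℝ) + 1)) a)) τ hτ).trans hk.le)⟩

variable {B : Type*} [NonUnitalCStarAlgebra B] [PartialOrder B] [StarOrderedRing B]

lemma dTau_ultralimit_le_of_dTau_le_add {τ : ℕ → QuasiTrace B}
    {hfin : ∀ p ∈ pedersen B, 0 ≤ p → ulim (fun n => (τ n).toFun p) < ∞} {a b : B}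
    (ha : 0 ≤ a) (hb : 0 ≤ b) (hω : omegaOn (Set.range τ) a = 0) {κ : ℕ → ℝ≥0∞}
    (hκ : Tendsto κ atTop (𝓝 0)) (hle : ∀ n, dTau (τ n) b ≤ dTau (τ n) a + κ n) :
    dTau (QuasiTrace.ultralimit τ hfin) b ≤ dTau (QuasiTrace.ultralimit τ hfin) a := by
  refine ENNReal.le_of_forall_pos_le_add fun η hη _ => ?_
  obtain ⟨δ, hδ, hδa⟩ := exists_dTau_le_apply_fEps_add hω (ENNReal.coe_ne_zero.2 hη.ne')
  refine dTau_ultralimit_le fun ε hε => ?_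
  have hlim : Tendsto (fun n => (τ n).toFun (fEps δ a) + η + κ n) (hyperfilter ℕ : Filter ℕ)
      (𝓝 (ulim (fun n => (τ n).toFun (fEps δ a)) + η + 0)) :=
    ((tendsto_ulim _).add tendsto_const_nhds).add (hκ.mono_left Nat.hyperfilter_le_atTop)
  calc ulim (fun n => (τ n).toFun (fEps ε b))
      ≤ ulim (fun n => (τ n).toFun (fEps δ a)) + η + 0 := by
        refine le_of_tendsto_of_tendsto' (tendsto_ulim _) hlim fun n => ?_
        refine ((τ n).apply_fEps_le_dTau hb hε).trans ((hle n).trans ?_)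
        gcongr
        exact hδa _ (Set.mem_range_self n)
    _ ≤ dTau (QuasiTrace.ultralimit τ hfin) a + η := by
        rw [add_zero]
        gcongr
        exact (ulim_apply_fEps_le_ultralimit_apply ha hδ).trans
          (QuasiTrace.apply_fEps_le_dTau _ ha (half_pos hδ))

lemma IsNormalizingPair.exists_forall_dTau_add_le {E u : B} (h : IsNormalizingPair E u) {a b : B}
    (ha : 0 ≤ a) (hb : 0 ≤ b) (hω : omegaOn (QTSetHer E) a = 0)
    (hlt : ∀ τ : QuasiTrace B, ¬ τ.IsZero → dTau τ a < dTau τ b) :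
    ∃ κ : ℝ≥0∞, κ ≠ 0 ∧ ∀ τ ∈ QTSetHer E, dTau τ a + κ ≤ dTau τ b := by
  by_contra! hcon
  choose τ hτ hτlt using fun n : ℕ => hcon (n + 1 : ℕ)⁻¹
    (ENNReal.inv_ne_zero.2 (ENNReal.natCast_ne_top _))
  have hfin : ∀ p ∈ pedersen B, 0 ≤ p → ulim (fun n => (τ n).toFun p) < ∞ := by
    intro p hp hp0
    obtain ⟨M, hM, hle⟩ := h.exists_forall_mem_QTSetHer_apply_le hp hp0
    exact (ulim_le fun n => hle _ (hτ n)).trans_lt hM.lt_top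
  have hlim : Tendsto (fun n : ℕ => ((n + 1 : ℕ) : ℝ≥0∞)⁻¹) atTop (𝓝 0) :=
    ENNReal.tendsto_inv_nat_nhds_zero.comp (tendsto_add_atTop_nat 1)
  exact (hlt _ (h.not_isZero_ultralimit (hfin := hfin) hτ)).not_ge
    (dTau_ultralimit_le_of_dTau_le_add ha hb
      (omegaOn_eq_zero_of_subset (Set.range_subset_iff.2 hτ) hω) hlim fun n => (hτlt n).le)

end UniformGap

section Tail

/-- The function `t ↦ min(t, (2δ - t)₊)`, a tent on `[0, 2δ]` of height `δ`. -/
def tent (δ : ℝ) : ℝ → ℝ := fun t => min t (max 0 (2 * δ - t))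

@[fun_prop]
lemma continuous_tent (δ : ℝ) : Continuous (tent δ) := by
  unfold tent
  fun_prop

@[simp]
lemma tent_zero (δ : ℝ) : tent δ 0 = 0 := by
  simp [tent]

lemma tent_nonneg {δ t : ℝ} (ht : 0 ≤ t) : 0 ≤ tent δ t :=
  le_min ht (le_max_left _ _)

lemma tent_le_self (δ t : ℝ) : tent δ t ≤ t :=
  min_le_left _ _

lemma tent_eq_zero {δ t : ℝ} (ht : 0 ≤ t) (h : 2 * δ ≤ t) : tent δ t = 0 := by
  rw [tent, max_eq_left (by linarith), min_eq_right ht]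

lemma le_tent {δ η t : ℝ} (h1 : η ≤ t) (h2 : η ≤ 2 * δ - t) : η ≤ tent δ t :=
  le_min h1 (h2.trans (le_max_right _ _))

/-- The part of a positive element `a` over the interval `(0, 2δ)` of its spectrum: the tail that
remains to be embedded after `f_δ(a)` has been dealt with. -/
def tailPart {B : Type*} [NonUnitalCStarAlgebra B] (δ : ℝ) (a : B) : B := cfcₙ (tent δ) a

/-- The square root of `f_δ'(a) - f_δ(a)`, where `δ' ≤ δ`. -/
def sqrtIncrement {B : Type*} [NonUnitalCStarAlgebra B] (δ' δ : ℝ) (a : B) : B :=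
  cfcₙ (fun t => √(cutoff δ' t - cutoff δ t)) a

variable {B : Type*} [NonUnitalCStarAlgebra B]

lemma fEps_tailPart (η δ : ℝ) {a : B} (ha : IsSelfAdjoint a) :
    fEps η (tailPart δ a) = cfcₙ (fun t => cutoff η (tent δ t)) a :=
  (cfcₙ_comp (cutoff η) (tent δ) a (by fun_prop) (cutoff_zero η) (by fun_prop) (tent_zero δ)
    ha).symm

variable [PartialOrder B] [StarOrderedRing B] {a : B}

lemma tailPart_nonneg (δ : ℝ) (ha : 0 ≤ a) : 0 ≤ tailPart δ a :=
  cfcₙ_nonneg_of_nonneg ha fun _ => tent_nonneg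

lemma tailPart_mem_closedRightIdeal (δ : ℝ) (ha : 0 ≤ a) : tailPart δ a ∈ closedRightIdeal a := by
  refine mem_closedRightIdeal_of_le (tailPart_nonneg δ ha) ha (r := 1) ?_
  calc tailPart δ a ≤ cfcₙ (fun t => t) a := cfcₙ_mono_of_nonneg (by fun_prop) (by fun_prop)
        (tent_zero δ) rfl ha fun t _ => tent_le_self δ t
    _ = (1 : ℝ) • a := by rw [cfcₙ_id' ℝ a ha.isSelfAdjoint, one_smul]

lemma tailPart_mul_fEps_eq_zero (ha : 0 ≤ a) {δ ε : ℝ} (hε : 0 < ε) (h : 2 * δ ≤ ε / 2) :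
    tailPart δ a * fEps ε a = 0 := by
  rw [tailPart, fEps, ← cfcₙ_mul (tent δ) (cutoff ε) a]
  refine (cfcₙ_congr_of_nonneg ha fun t ht => ?_).trans (cfcₙ_const_zero ℝ a)
  rcases le_total (2 * δ) t with h1 | h1
  · rw [tent_eq_zero ht h1, zero_mul]
  · rw [cutoff_eq_zero hε (h1.trans h), mul_zero]

lemma dTau_tailPart_add_le (τ : QuasiTrace B) (ha : 0 ≤ a) {δ ε : ℝ} (hε : 0 < ε)
    (h : 2 * δ ≤ ε / 2) : dTau τ (tailPart δ a) + τ.toFun (fEps ε a) ≤ dTau τ a := by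
  have hr := tailPart_nonneg δ ha
  rw [dTau, ENNReal.iSup_add]
  refine iSup_le fun m => ?_
  set f := fEps (1 / ((m : ℝ) + 1)) (tailPart δ a)
  have hf : 0 ≤ f := fEps_nonneg _ _
  have hm : 0 < 1 / ((m : ℝ) + 1) := Nat.one_div_pos_of_nat
  have hzero : f * fEps ε a = 0 := by
    rw [show f = _ from fEps_eq_cfcₙ_mul hm hr.isSelfAdjoint, mul_assoc,
      tailPart_mul_fEps_eq_zero ha hε h, mul_zero]
  have hzero' : fEps ε a * f = 0 := by
    simpa [hf.isSelfAdjoint.star_eq, star_fEps] using congrArg star hzero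
  rw [← τ.map_add_of_commute _ _ hf (fEps_nonneg _ _) (hzero.trans hzero'.symm)]
  exact τ.apply_le_dTau ha (add_nonneg hf (fEps_nonneg _ _))
    (norm_add_le_one_of_mul_eq_zero hf (fEps_nonneg _ _) (norm_fEps_le_one _ _)
      (norm_fEps_le_one _ _) hzero)
    (add_mem (mem_closedRightIdeal_trans (fEps_mem_closedRightIdeal hm hr.isSelfAdjoint)
      (tailPart_mem_closedRightIdeal δ ha)) (fEps_mem_closedRightIdeal hε ha.isSelfAdjoint))

lemma sqrtIncrement_mul_self (ha : 0 ≤ a) {δ' δ : ℝ} (hδ' : 0 < δ') (h : δ' ≤ δ) :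
    sqrtIncrement δ' δ a * sqrtIncrement δ' δ a = fEps δ' a - fEps δ a := by
  rw [sqrtIncrement, fEps, fEps, ← cfcₙ_sub (cutoff δ') (cutoff δ) a, ← cfcₙ_mul _ _ a
    (by fun_prop) (by simp) (by fun_prop) (by simp)]
  exact cfcₙ_congr_of_nonneg ha fun t ht => Real.mul_self_sqrt (sub_nonneg.2 (cutoff_anti hδ' h ht))

lemma fEps_tailPart_mul_sqrtIncrement (ha : 0 ≤ a) {δ' δ : ℝ} (hδ' : 0 < δ') (h : δ' ≤ δ) :
    fEps (δ' / 2) (tailPart δ a) * sqrtIncrement δ' δ a = sqrtIncrement δ' δ a := by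
  have hδ : 0 < δ := hδ'.trans_le h
  rw [fEps_tailPart _ _ ha.isSelfAdjoint, sqrtIncrement, ← cfcₙ_mul _ _ a (by fun_prop) (by simp)
    (by fun_prop) (by simp)]
  refine cfcₙ_congr_of_nonneg ha fun t _ => ?_
  rcases le_total t (δ' / 2) with h1 | h1
  · simp [cutoff_eq_zero hδ' h1, cutoff_eq_zero hδ (by linarith : t ≤ δ / 2)]
  rcases le_total δ t with h2 | h2
  · simp [cutoff_eq_one hδ' (h.trans h2), cutoff_eq_one hδ h2]
  · rw [cutoff_eq_one (half_pos hδ') (le_tent h1 (by linarith)), one_mul]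

lemma dTau_ne_top_of_omegaOn_eq_zero {S : Set (QuasiTrace B)} (hω : omegaOn S a = 0)
    {τ : QuasiTrace B} (hτ : τ ∈ S) : dTau τ a ≠ ∞ := by
  obtain ⟨ε, hε, hle⟩ := exists_dTau_le_apply_fEps_add hω one_ne_zero
  refine ne_top_of_le_ne_top (ENNReal.add_ne_top.2 ⟨?_, ENNReal.one_ne_top⟩) (hle τ hτ)
  exact (τ.finite_on_pedersen _ (fEps_mem_pedersen hε a) (fEps_nonneg _ _)).ne

lemma exists_forall_dTau_tailPart_le {S : Set (QuasiTrace B)} (ha : 0 ≤ a)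
    (hω : omegaOn S a = 0) {κ : ℝ≥0∞} (hκ : κ ≠ 0) :
    ∃ δ₀ : ℝ, 0 < δ₀ ∧ ∀ δ ≤ δ₀, ∀ τ ∈ S, dTau τ (tailPart δ a) ≤ κ := by
  obtain ⟨ε, hε, hle⟩ := exists_dTau_le_apply_fEps_add hω hκ
  refine ⟨ε / 4, by linarith, fun δ hδ τ hτ => ?_⟩
  have hsum := (dTau_tailPart_add_le τ ha hε (by linarith : 2 * δ ≤ ε / 2)).trans (hle τ hτ)
  rw [add_comm] at hsum
  exact (ENNReal.add_le_add_iff_left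
    (τ.finite_on_pedersen _ (fEps_mem_pedersen hε a) (fEps_nonneg _ _)).ne).1 hsum

end Tail

section Complement

/-- The element `(1 - v v*) c (1 - v v*)`: what is left of `c` once the source of `v*` has been
removed. It is written as `X* X` with `X = c^{1/2}(1 - v v*)`, which makes sense without a unit. -/
def complement {B : Type*} [NonUnitalCStarAlgebra B] [PartialOrder B] [StarOrderedRing B]
    (c v : B) : B :=
  star (CFC.sqrt c - CFC.sqrt c * (v * star v)) * (CFC.sqrt c - CFC.sqrt c * (v * star v))

variable {B : Type*} [NonUnitalCStarAlgebra B] [PartialOrder B] [StarOrderedRing B] {c v : B}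

lemma complement_nonneg (c v : B) : 0 ≤ complement c v :=
  star_mul_self_nonneg _

lemma complement_mem_closedRightIdeal (hc : 0 ≤ c) (hv : v ∈ closedRightIdeal c) :
    complement c v ∈ closedRightIdeal c := by
  rw [complement, star_sub, star_mul, (CFC.sqrt_nonneg c).isSelfAdjoint.star_eq, star_mul,
    star_star, mul_assoc]
  exact mul_right_mem_closedRightIdeal
    (sub_mem (sqrt_mem_closedRightIdeal hc) (mul_right_mem_closedRightIdeal hv _)) _

lemma star_mul_complement_eq_zero {z : B} (hz : v * star v * z = z) :
    star z * complement c v = 0 := by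
  have hzero : (CFC.sqrt c - CFC.sqrt c * (v * star v)) * z = 0 := by
    rw [sub_mul, mul_assoc, hz, sub_self]
  rw [complement, ← mul_assoc, ← star_mul, hzero, star_zero, zero_mul]

lemma HasOrthogonalCopies.dTau_le_dTau_complement_add (hB : HasOrthogonalCopies B)
    (τ : QuasiTrace B) (hc : 0 ≤ c) (v : B) :
    dTau τ c ≤ dTau τ (complement c v) + dTau τ (star v * v) := by
  set s := CFC.sqrt c
  set y := s * (v * star v) with hy
  have hs : star s * s = c := by
    rw [(CFC.sqrt_nonneg c).isSelfAdjoint.star_eq, CFC.sqrt_mul_sqrt_self c hc]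
  have hy0 : 0 ≤ star y * y := star_mul_self_nonneg y
  have hle : c ≤ (2 : ℝ) • (complement c v + star y * y) := by
    have h := star_add_mul_add_le (s - y) y
    rwa [sub_add_cancel, hs] at h
  calc dTau τ c ≤ dTau τ (complement c v + star y * y) :=
        dTau_mono_of_mem_closedRightIdeal τ hc (add_nonneg (complement_nonneg c v) hy0)
          (mem_closedRightIdeal_of_le hc (add_nonneg (complement_nonneg c v) hy0) hle)
    _ ≤ dTau τ (complement c v) + dTau τ (star y * y) :=
        hB.dTau_add_le τ (complement_nonneg c v) hy0
    _ ≤ dTau τ (complement c v) + dTau τ (v * star v) := by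
        gcongr
        refine dTau_mono_of_mem_closedRightIdeal τ hy0 (mul_star_self_nonneg v) ?_
        rw [hy, star_mul, star_mul, star_star, mul_assoc]
        exact mul_mem_closedRightIdeal _ _
    _ ≤ dTau τ (complement c v) + dTau τ (star v * v) := by
        gcongr
        exact dTau_mul_star_self_le τ v

end Complement

section Exhaustion

lemma fEps_eq_zero_of_norm_le {B : Type*} [NonUnitalCStarAlgebra B] {a : B} {ε : ℝ} (hε : 0 < ε)
    (ha : IsSelfAdjoint a) (h : ‖a‖ ≤ ε / 2) : fEps ε a = 0 := by
  refine (cfcₙ_congr fun t ht => ?_).trans (cfcₙ_const_zero ℝ a)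
  exact cutoff_eq_zero hε ((le_abs_self t).trans
    ((NonUnitalIsometricContinuousFunctionalCalculus.norm_quasispectrum_le a ht ha).trans h))

/-- The state of the recursive construction: `c` still has room for the tail of `a` below `2δ`,
with a gap of dimension that is uniform over the normalized quasitraces. -/
structure TailFits {B : Type*} [NonUnitalCStarAlgebra B] [PartialOrder B] (E a : B) (δ : ℝ)
    (c : B) : Prop where
  pos : 0 < δ
  nonneg : 0 ≤ c
  exists_gap : ∃ κ : ℝ≥0∞, κ ≠ 0 ∧ ∀ τ ∈ QTSetHer E, dTau τ (tailPart δ a) + κ ≤ dTau τ c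

variable {B : Type*} [NonUnitalCStarAlgebra B] [PartialOrder B] [StarOrderedRing B]
  {E a c : B} {δ : ℝ}

lemma dTau_tailPart_ne_top (ha : 0 ≤ a) (hω : omegaOn (QTSetHer E) a = 0) (δ : ℝ)
    {τ : QuasiTrace B} (hτ : τ ∈ QTSetHer E) : dTau τ (tailPart δ a) ≠ ∞ :=
  ne_top_of_le_ne_top (dTau_ne_top_of_omegaOn_eq_zero hω hτ)
    (dTau_mono_of_mem_closedRightIdeal τ (tailPart_nonneg δ ha) ha
      (tailPart_mem_closedRightIdeal δ ha))

lemma TailFits.cuntzLE (hc : TailFits E a δ c) (hsc : StrictComparison B) {u : B}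
    (h : IsNormalizingPair E u) (ha : 0 ≤ a) (hω : omegaOn (QTSetHer E) a = 0) :
    CuntzLE (tailPart δ a) c := by
  obtain ⟨κ, hκ, hgap⟩ := hc.exists_gap
  exact hsc _ _ (tailPart_nonneg δ ha) hc.nonneg fun τ hτ => h.dTau_lt_dTau (fun σ hσ =>
    (ENNReal.lt_add_right (dTau_tailPart_ne_top ha hω δ hσ) hκ).trans_le (hgap σ hσ)) hτ

lemma TailFits.exists_tailFits_complement (hc : TailFits E a δ c) (hB : HasOrthogonalCopies B)
    (ha : 0 ≤ a) (hω : omegaOn (QTSetHer E) a = 0) :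
    ∃ δ' : ℝ, 0 < δ' ∧ δ' ≤ δ / 2 ∧ ∀ v : B, star v * v ∈ closedRightIdeal (tailPart δ a) →
      TailFits E a δ' (complement c v) := by
  obtain ⟨κ, hκ, hgap⟩ := hc.exists_gap
  have hκ2 : κ / 2 ≠ 0 := by simp [hκ]
  obtain ⟨δ₀, hδ₀, hsmall⟩ := exists_forall_dTau_tailPart_le ha hω hκ2
  have hpos : 0 < min (δ / 2) δ₀ := lt_min (half_pos hc.pos) hδ₀
  refine ⟨_, hpos, min_le_left _ _, fun v hv => ⟨hpos, complement_nonneg c v, κ / 2, hκ2,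
    fun τ hτ => ?_⟩⟩
  have hle : dTau τ (tailPart δ a) + κ ≤ dTau τ (tailPart δ a) + dTau τ (complement c v) :=
    calc dTau τ (tailPart δ a) + κ ≤ dTau τ c := hgap τ hτ
      _ ≤ dTau τ (complement c v) + dTau τ (star v * v) :=
        hB.dTau_le_dTau_complement_add τ hc.nonneg v
      _ ≤ dTau τ (complement c v) + dTau τ (tailPart δ a) := by
        gcongr
        exact dTau_mono_of_mem_closedRightIdeal τ (star_mul_self_nonneg v) (tailPart_nonneg δ ha) hv
      _ = _ := add_comm _ _
  calc dTau τ (tailPart (min (δ / 2) δ₀) a) + κ / 2 ≤ κ / 2 + κ / 2 := by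
        gcongr
        exact hsmall _ (min_le_right _ _) τ hτ
    _ = κ := ENNReal.add_halves κ
    _ ≤ dTau τ (complement c v) :=
        (ENNReal.add_le_add_iff_left (dTau_tailPart_ne_top ha hω δ hτ)).1 hle

lemma TailFits.exists_next (hc : TailFits E a δ c) (hB : HasOrthogonalCopies B)
    (hsc : StrictComparison B) {u : B} (h : IsNormalizingPair E u) (ha : 0 ≤ a)
    (hω : omegaOn (QTSetHer E) a = 0) :
    ∃ (δ' : ℝ) (c' z : B), TailFits E a δ' c' ∧ δ' ≤ δ / 2 ∧ c' ∈ closedRightIdeal c ∧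
      z ∈ closedRightIdeal c ∧ star z * z = fEps δ' a - fEps δ a ∧ star z * c' = 0 := by
  obtain ⟨δ', hδ', hle, hfits⟩ := hc.exists_tailFits_complement hB ha hω
  have hle' : δ' ≤ δ := hle.trans (half_le_self hc.pos.le)
  have hr := tailPart_nonneg δ ha
  obtain ⟨v, hv, hvv⟩ :=
    (hc.cuntzLE hsc h ha hω).exists_star_mul_self_eq hr hc.nonneg (half_pos hδ')
  set p := sqrtIncrement δ' δ a with hp
  have hfix : star v * v * p = p := by
    rw [hvv, mul_assoc, fEps_tailPart_mul_sqrtIncrement ha hδ' hle',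
      fEps_tailPart_mul_sqrtIncrement ha hδ' hle']
  refine ⟨δ', complement c v, v * p, hfits v ?_, hle, complement_mem_closedRightIdeal hc.nonneg hv,
    mul_right_mem_closedRightIdeal hv _, ?_, star_mul_complement_eq_zero ?_⟩
  · rw [hvv]
    exact mul_right_mem_closedRightIdeal
      (fEps_mem_closedRightIdeal (half_pos hδ') hr.isSelfAdjoint) _
  · rw [star_mul, mul_assoc, ← mul_assoc (star v), hfix, hp, sqrtIncrement, star_cfcₙ_real,
      ← sqrtIncrement, sqrtIncrement_mul_self ha hδ' hle']
  · rw [mul_assoc, ← mul_assoc (star v), hfix]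

lemma TailFits.exists_seq {δ₀ : ℝ} {b : B} (hb : TailFits E a δ₀ b) (hB : HasOrthogonalCopies B)
    (hsc : StrictComparison B) {u : B} (h : IsNormalizingPair E u) (ha : 0 ≤ a)
    (hω : omegaOn (QTSetHer E) a = 0) :
    ∃ (δ : ℕ → ℝ) (c z : ℕ → B), δ 0 = δ₀ ∧ c 0 = b ∧ (∀ n, TailFits E a (δ n) (c n)) ∧
      (∀ n, δ (n + 1) ≤ δ n / 2) ∧ (∀ n, c (n + 1) ∈ closedRightIdeal (c n)) ∧
      (∀ n, z n ∈ closedRightIdeal (c n)) ∧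
      (∀ n, star (z n) * z n = fEps (δ (n + 1)) a - fEps (δ n) a) ∧
      ∀ n, star (z n) * c (n + 1) = 0 := by
  choose δ' c' z hfits hδ hc hz hzz hzc using
    fun s : {s : ℝ × B // TailFits E a s.1 s.2} => s.2.exists_next hB hsc h ha hω
  let S : ℕ → {s : ℝ × B // TailFits E a s.1 s.2} :=
    fun n => Nat.rec ⟨(δ₀, b), hb⟩ (fun _ s => ⟨(δ' s, c' s), hfits s⟩) n
  exact ⟨fun n => (S n).1.1, fun n => (S n).1.2, fun n => z (S n), rfl, rfl, fun n => (S n).2,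
    fun n => hδ (S n), fun n => hc (S n), fun n => hz (S n), fun n => hzz (S n),
    fun n => hzc (S n)⟩

lemma tendsto_zero_of_succ_le_half {δ : ℕ → ℝ} (hpos : ∀ n, 0 < δ n)
    (h : ∀ n, δ (n + 1) ≤ δ n / 2) : Tendsto δ atTop (𝓝 0) := by
  have hle (n : ℕ) : δ n ≤ δ 0 * (1 / 2) ^ n := by
    induction n with
    | zero => simp
    | succ n ih => rw [pow_succ]; linarith [h n]
  refine squeeze_zero (fun n => (hpos n).le) hle ?_
  simpa using (tendsto_pow_atTop_nhds_zero_of_lt_one (r := (1 / 2 : ℝ)) (by norm_num)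
    (by norm_num)).const_mul (δ 0)

lemma mem_closedRightIdeal_of_le_of_forall_succ {c : ℕ → B} (hc : ∀ n, 0 ≤ c n)
    (h : ∀ n, c (n + 1) ∈ closedRightIdeal (c n)) {m n : ℕ} (hmn : m ≤ n) :
    c n ∈ closedRightIdeal (c m) := by
  induction n, hmn using Nat.le_induction with
  | base => exact self_mem_closedRightIdeal (hc m)
  | succ n _ ih => exact mem_closedRightIdeal_trans (h n) ih

lemma IsNormalizingPair.exists_orthogonal_seq {u : B} (h : IsNormalizingPair E u)
    (hB : HasOrthogonalCopies B) (hsc : StrictComparison B) {b : B} (ha : 0 ≤ a) (hb : 0 ≤ b)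
    (hω : omegaOn (QTSetHer E) a = 0)
    (hlt : ∀ τ : QuasiTrace B, ¬ τ.IsZero → dTau τ a < dTau τ b) :
    ∃ (δ : ℕ → ℝ) (z : ℕ → B), (∀ n, 0 < δ n) ∧ Tendsto δ atTop (𝓝 0) ∧ fEps (δ 0) a = 0 ∧
      (∀ n, z n ∈ closedRightIdeal b) ∧
      (∀ n, star (z n) * z n = fEps (δ (n + 1)) a - fEps (δ n) a) ∧
      ∀ m n, m < n → star (z m) * z n = 0 := by
  obtain ⟨κ, hκ, hgap⟩ := h.exists_forall_dTau_add_le ha hb hω hlt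
  have hδ₀ : 0 < 2 * ‖a‖ + 2 := by positivity
  have hfits : TailFits E a (2 * ‖a‖ + 2) b := by
    refine ⟨hδ₀, hb, κ, hκ, fun τ hτ => le_trans ?_ (hgap τ hτ)⟩
    gcongr
    exact dTau_mono_of_mem_closedRightIdeal τ (tailPart_nonneg _ ha) ha
      (tailPart_mem_closedRightIdeal _ ha)
  obtain ⟨δ, c, z, hδ0, rfl, hfits, hδ, hc, hz, hzz, hzc⟩ := hfits.exists_seq hB hsc h ha hω
  have hmem {m n : ℕ} (hmn : m ≤ n) : c n ∈ closedRightIdeal (c m) :=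
    mem_closedRightIdeal_of_le_of_forall_succ (fun n => (hfits n).nonneg) hc hmn
  refine ⟨δ, z, fun n => (hfits n).pos, tendsto_zero_of_succ_le_half (fun n => (hfits n).pos) hδ,
    ?_, fun n => ?_, hzz, fun m n hmn => ?_⟩
  · rw [hδ0]
    exact fEps_eq_zero_of_norm_le hδ₀ ha.isSelfAdjoint (by linarith)
  · exact mem_closedRightIdeal_trans (hz n) (hmem n.zero_le)
  · exact mul_eq_zero_of_mem_closedRightIdeal (mem_closedRightIdeal_trans (hz n) (hmem hmn)) (hzc m)

end Exhaustion

section OrthogonalSeries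

variable {B : Type*} [NonUnitalCStarAlgebra B] {P z : ℕ → B}

lemma star_sum_range_mul_sum_range (hP : P 0 = 0)
    (hz : ∀ n, star (z n) * z n = P (n + 1) - P n) (ho : ∀ m n, m < n → star (z m) * z n = 0)
    {M N : ℕ} (hMN : M ≤ N) :
    star (∑ n ∈ Finset.range M, z n) * ∑ n ∈ Finset.range N, z n = P M := by
  have hne {m n : ℕ} (h : n ≠ m) : star (z m) * z n = 0 := by
    rcases lt_or_gt_of_ne h with h | h
    · rw [← star_star (z n), ← star_mul, ho n m h, star_zero]
    · exact ho m n h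
  have hterm : ∀ m ∈ Finset.range M,
      star (z m) * ∑ n ∈ Finset.range N, z n = P (m + 1) - P m := fun m hm => by
    have hmN : m ∈ Finset.range N := Finset.range_mono hMN hm
    rw [Finset.mul_sum, Finset.sum_eq_single_of_mem m hmN fun n _ hn => hne hn, hz]
  rw [star_sum, Finset.sum_mul, Finset.sum_congr rfl hterm, Finset.sum_range_sub, hP, sub_zero]

lemma star_sub_mul_sub_sum_range (hP : P 0 = 0)
    (hz : ∀ n, star (z n) * z n = P (n + 1) - P n) (ho : ∀ m n, m < n → star (z m) * z n = 0)
    {M N : ℕ} (hMN : M ≤ N) :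
    star (∑ n ∈ Finset.range N, z n - ∑ n ∈ Finset.range M, z n) *
      (∑ n ∈ Finset.range N, z n - ∑ n ∈ Finset.range M, z n) = P N - P M := by
  have hMM := star_sum_range_mul_sum_range hP hz ho (le_refl M)
  have hMN' := star_sum_range_mul_sum_range hP hz ho hMN
  have hNM : star (∑ n ∈ Finset.range N, z n) * ∑ n ∈ Finset.range M, z n = P M := by
    rw [← hMM, ← star_star (∑ n ∈ Finset.range M, z n), ← star_mul, star_star, hMN', ← hMM,
      star_mul, star_star]
  rw [star_sub, sub_mul, mul_sub, mul_sub, star_sum_range_mul_sum_range hP hz ho (le_refl N), hMM,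
    hMN', hNM]
  abel

lemma norm_mul_sq_le (x y : B) : ‖x * y‖ ^ 2 ≤ ‖y‖ * ‖star x * x * y‖ :=
  calc ‖x * y‖ ^ 2 = ‖star y * (star x * x * y)‖ := by
        rw [sq, ← CStarRing.norm_star_mul_self, star_mul]
        simp only [mul_assoc]
    _ ≤ ‖y‖ * ‖star x * x * y‖ := (norm_mul_le _ _).trans_eq (by rw [norm_star])

lemma cauchySeq_sum_range_mul (hP : P 0 = 0) (hz : ∀ n, star (z n) * z n = P (n + 1) - P n)
    (ho : ∀ m n, m < n → star (z m) * z n = 0) {y : B} (hy : CauchySeq fun n => P n * y) :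
    CauchySeq fun n => (∑ k ∈ Finset.range n, z k) * y := by
  rw [Metric.cauchySeq_iff'] at hy ⊢
  intro ε hε
  obtain ⟨M, hM⟩ := hy (ε ^ 2 / (‖y‖ + 1)) (by positivity)
  refine ⟨M, fun N hN => lt_of_pow_lt_pow_left₀ 2 hε.le ?_⟩
  have hPM := hM N hN
  rw [dist_eq_norm, ← sub_mul] at hPM ⊢
  rw [lt_div_iff₀ (by positivity)] at hPM
  calc _ ≤ ‖y‖ * ‖(P N - P M) * y‖ := by
        rw [← star_sub_mul_sub_sum_range hP hz ho hN]
        exact norm_mul_sq_le _ y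
    _ ≤ ‖(P N - P M) * y‖ * (‖y‖ + 1) := by
        rw [mul_comm]
        gcongr
        linarith
    _ < ε ^ 2 := hPM

end OrthogonalSeries

section PreservesInner

/-- `u` preserves the `B`-valued inner product `⟨x, y⟩ = x* y` on `I`. -/
def PreservesInnerOn {B : Type*} [NonUnitalCStarAlgebra B] (u : B → B) (I : Set B) : Prop :=
  ∀ x ∈ I, ∀ y ∈ I, star (u x) * u y = star x * y

variable {B : Type*} [NonUnitalCStarAlgebra B] {u : B → B} {I J : Set B}

lemma PreservesInnerOn.mono (hu : PreservesInnerOn u J) (hIJ : I ⊆ J) : PreservesInnerOn u I :=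
  fun x hx y hy => hu x (hIJ hx) y (hIJ hy)

lemma eq_of_star_mul_eq {p q : B} (hpq : star p * q = star p * p)
    (hqq : star q * q = star p * p) : p = q := by
  have hqp : star q * p = star p * p := by
    rw [← star_star p, ← star_mul, star_star, hpq, star_mul, star_star]
  refine sub_eq_zero.1 (CStarRing.star_mul_self_eq_zero_iff _ |>.1 ?_)
  rw [star_sub, sub_mul, mul_sub, mul_sub, hpq, hqq, hqp, sub_self]

lemma PreservesInnerOn.map_add (hu : PreservesInnerOn u I) {x y : B} (hx : x ∈ I) (hy : y ∈ I)
    (hxy : x + y ∈ I) : u (x + y) = u x + u y := by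
  refine eq_of_star_mul_eq ?_ ?_
  · rw [mul_add, hu _ hxy _ hx, hu _ hxy _ hy, hu _ hxy _ hxy, mul_add]
  · simp only [star_add, add_mul, mul_add, hu _ hx _ hx, hu _ hx _ hy, hu _ hy _ hx, hu _ hy _ hy,
      hu _ hxy _ hxy]

lemma PreservesInnerOn.map_smul (hu : PreservesInnerOn u I) {x : B} (r : ℂ) (hx : x ∈ I)
    (hrx : r • x ∈ I) : u (r • x) = r • u x := by
  refine eq_of_star_mul_eq ?_ ?_
  · rw [mul_smul_comm, hu _ hrx _ hx, hu _ hrx _ hrx, mul_smul_comm]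
  · simp only [star_smul, smul_mul_assoc, mul_smul_comm, hu _ hx _ hx, hu _ hrx _ hrx]

lemma PreservesInnerOn.map_mul_right (hu : PreservesInnerOn u I) {x : B} (d : B) (hx : x ∈ I)
    (hxd : x * d ∈ I) : u (x * d) = u x * d := by
  refine eq_of_star_mul_eq ?_ ?_
  · rw [← mul_assoc, hu _ hxd _ hx, hu _ hxd _ hxd, mul_assoc]
  · rw [star_mul, mul_assoc, ← mul_assoc (star (u x)), hu _ hx _ hx, hu _ hxd _ hxd, star_mul]
    simp only [mul_assoc]

lemma PreservesInnerOn.map_zero (hu : PreservesInnerOn u I) (h0 : (0 : B) ∈ I) : u 0 = 0 := by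
  rw [← CStarRing.star_mul_self_eq_zero_iff, hu 0 h0 0 h0, mul_zero]

lemma PreservesInnerOn.dist_eq (hu : PreservesInnerOn u I) {x y : B} (hx : x ∈ I) (hy : y ∈ I) :
    dist (u x) (u y) = dist x y := by
  have h : star (u x - u y) * (u x - u y) = star (x - y) * (x - y) := by
    simp only [star_sub, sub_mul, mul_sub, hu _ hx _ hx, hu _ hx _ hy, hu _ hy _ hx, hu _ hy _ hy]
  rw [dist_eq_norm, dist_eq_norm, ← mul_self_inj (norm_nonneg _) (norm_nonneg _),
    ← CStarRing.norm_star_mul_self, h, CStarRing.norm_star_mul_self]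

lemma PreservesInnerOn.isClosed_image (hu : PreservesInnerOn u I) (hI : IsClosed I) :
    IsClosed (u '' I) := by
  have hiso : Isometry (I.domRestrict u) := Isometry.of_dist_eq fun x y => hu.dist_eq x.2 y.2
  have : CompleteSpace I := hI.completeSpace_coe
  rw [← Set.range_domRestrict]
  exact hiso.isClosedEmbedding.isClosed_range

end PreservesInner

section Hmod

variable {C V : Type*} [NonUnitalCStarAlgebra C] [NonUnitalCStarAlgebra V]
  (SB : Stabilization C V) {a b : V}

lemma isClosed_Hmod (a : V) : IsClosed (Hmod SB a) := isClosed_closure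

lemma mul_mul_emb_mem_Hmod (a w : V) (c : C) : a * (w * SB.emb 0 0 c) ∈ Hmod SB a :=
  subset_closure ⟨w, c, rfl⟩

lemma Hmod_induction {p : V → Prop} (hp : IsClosed {x | p x})
    (h : ∀ w c, p (a * (w * SB.emb 0 0 c))) {x : V} (hx : x ∈ Hmod SB a) : p x :=
  closure_minimal (t := {x | p x}) (by rintro _ ⟨w, c, rfl⟩; exact h w c) hp hx

lemma Hmod_subset_closedRightIdeal (a : V) : Hmod SB a ⊆ closedRightIdeal a :=
  fun _ => Hmod_induction SB (isClosed_closedRightIdeal a) fun _ _ => mul_mem_closedRightIdeal _ _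

lemma mul_mem_Hmod_of_mem_closedRightIdeal {s x : V} (hs : s ∈ closedRightIdeal b)
    (hx : x ∈ Hmod SB a) : s * x ∈ Hmod SB b := by
  refine closedRightIdeal_induction hs (S := {s | s * x ∈ Hmod SB b})
    ((isClosed_Hmod SB _).preimage (by fun_prop)) fun y => ?_
  refine Hmod_induction SB (p := fun x => b * y * x ∈ Hmod SB b)
    ((isClosed_Hmod SB _).preimage (by fun_prop)) (fun w c => ?_) hx
  convert mul_mul_emb_mem_Hmod SB b (y * a * w) c using 1
  simp only [mul_assoc]

lemma add_mem_Hmod {x y : V} (hx : x ∈ Hmod SB a) (hy : y ∈ Hmod SB a) : x + y ∈ Hmod SB a := by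
  refine Hmod_induction SB (p := fun x => x + y ∈ Hmod SB a)
    ((isClosed_Hmod SB _).preimage (by fun_prop)) (fun w c => ?_) hx
  refine Hmod_induction SB (p := fun y => a * (w * SB.emb 0 0 c) + y ∈ Hmod SB a)
    ((isClosed_Hmod SB _).preimage (by fun_prop)) (fun w' c' => ?_) hy
  -- An approximate unit of `C` on the right brings the sum of two generators to the form of one.
  let _ : PartialOrder C := CStarAlgebra.spectralOrder C
  have _ : StarOrderedRing C := CStarAlgebra.spectralOrderedRing C
  have hl := CStarAlgebra.increasingApproximateUnit C
  have := hl.neBot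
  have hlim (w : V) (c : C) : Tendsto (fun f => a * (w * SB.emb 0 0 (c * f)))
      (CStarAlgebra.approximateUnit C) (𝓝 (a * (w * SB.emb 0 0 c))) :=
    ((((SB.continuous_emb 0 0).tendsto c).comp (hl.tendsto_mul_left c)).const_mul w).const_mul a
  refine (isClosed_Hmod SB _).mem_of_tendsto ((hlim w c).add (hlim w' c')) (.of_forall fun f => ?_)
  convert mul_mul_emb_mem_Hmod SB a (w * SB.emb 0 0 c + w' * SB.emb 0 0 c') f using 1
  rw [add_mul, mul_assoc, mul_assoc, SB.emb_mul, SB.emb_mul, if_pos rfl, if_pos rfl, mul_add]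

lemma isClosedSubmodule_Hmod (a : V) : IsClosedSubmodule SB (Hmod SB a) := by
  refine ⟨isClosed_Hmod SB a, by simpa using mul_mul_emb_mem_Hmod SB a 0 0,
    fun x hx y hy => add_mem_Hmod SB hx hy, fun r x hx => ?_, fun x hx d => ?_⟩
  · refine Hmod_induction SB (p := fun x => r • x ∈ Hmod SB a)
      ((isClosed_Hmod SB _).preimage (by fun_prop)) (fun w c => ?_) hx
    simpa only [smul_mul_assoc, mul_smul_comm] using mul_mul_emb_mem_Hmod SB a (r • w) c
  · refine Hmod_induction SB (p := fun x => x * SB.emb 0 0 d ∈ Hmod SB a)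
      ((isClosed_Hmod SB _).preimage (by fun_prop)) (fun w c => ?_) hx
    simpa only [mul_assoc] using mul_mul_emb_mem_Hmod SB a (w * SB.emb 0 0 c) d

lemma PreservesInnerOn.isClosedSubmodule_image {u : V → V} {N : Set V}
    (hu : PreservesInnerOn u N) (hN : IsClosedSubmodule SB N) :
    IsClosedSubmodule SB (u '' N) := by
  obtain ⟨hclosed, hzero, hadd, hsmul, hact⟩ := hN
  refine ⟨hu.isClosed_image hclosed, ⟨0, hzero, hu.map_zero hzero⟩, ?_, ?_, ?_⟩
  · rintro _ ⟨x, hx, rfl⟩ _ ⟨y, hy, rfl⟩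
    exact ⟨x + y, hadd x hx y hy, hu.map_add hx hy (hadd x hx y hy)⟩
  · rintro r _ ⟨x, hx, rfl⟩
    exact ⟨r • x, hsmul r x hx, hu.map_smul r hx (hsmul r x hx)⟩
  · rintro _ ⟨x, hx, rfl⟩ d
    exact ⟨x * SB.emb 0 0 d, hact x hx d, hu.map_mul_right _ hx (hact x hx d)⟩

end Hmod

section Embedding

variable {B : Type*} [NonUnitalCStarAlgebra B] [PartialOrder B] [StarOrderedRing B] {a b : B}

lemma exists_preservesInnerOn_of_orthogonal_seq (ha : 0 ≤ a) {δ : ℕ → ℝ} {z : ℕ → B}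
    (hpos : ∀ n, 0 < δ n) (hδ : Tendsto δ atTop (𝓝 0)) (h0 : fEps (δ 0) a = 0)
    (hz : ∀ n, star (z n) * z n = fEps (δ (n + 1)) a - fEps (δ n) a)
    (ho : ∀ m n, m < n → star (z m) * z n = 0) :
    ∃ u : B → B, PreservesInnerOn u (closedRightIdeal a) ∧ ∀ y ∈ closedRightIdeal a,
      Tendsto (fun n => (∑ k ∈ Finset.range n, z k) * y) atTop (𝓝 (u y)) := by
  have hunit {y : B} (hy : y ∈ closedRightIdeal a) :
      Tendsto (fun n => fEps (δ n) a * y) atTop (𝓝 y) :=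
    (tendsto_fEps_mul ha hy).comp (tendsto_nhdsWithin_iff.2 ⟨hδ, .of_forall hpos⟩)
  have hlim (y : closedRightIdeal a) :
      ∃ v, Tendsto (fun n => (∑ k ∈ Finset.range n, z k) * (y : B)) atTop (𝓝 v) :=
    cauchySeq_tendsto_of_complete
      (cauchySeq_sum_range_mul (P := fun n => fEps (δ n) a) h0 hz ho (hunit y.2).cauchySeq)
  choose! u hu using fun y (hy : y ∈ closedRightIdeal a) => hlim ⟨y, hy⟩
  refine ⟨u, fun x hx y hy => ?_, hu⟩
  refine tendsto_nhds_unique ((hu x hx).star.mul (hu y hy))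
    (((hunit hy).const_mul (star x)).congr fun n => ?_)
  rw [← star_sum_range_mul_sum_range (P := fun n => fEps (δ n) a) h0 hz ho (le_refl n), star_mul]
  simp only [mul_assoc]

theorem Hmod_unitarily_embeds_general {C : Type*} [NonUnitalCStarAlgebra C] [PartialOrder C]
    [StarOrderedRing C] (SB : Stabilization C B) (hsimple : IsSimpleCStar C)
    (hsc : StrictComparison B) (a b : B) (ha : 0 ≤ a) (hb : 0 ≤ b) (hω : OmegaZero SB a)
    (hlt : ∀ τ : QuasiTrace B, ¬ τ.IsZero → dTau τ a < dTau τ b) :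
    ∃ N : Set B, N ⊆ Hmod SB b ∧ IsClosedSubmodule SB N ∧
      ∃ u : B → B, Set.MapsTo u (Hmod SB a) N ∧ Set.SurjOn u (Hmod SB a) N ∧
        (∀ x ∈ Hmod SB a, ∀ y ∈ Hmod SB a, u (x + y) = u x + u y) ∧
        (∀ (c : ℂ), ∀ x ∈ Hmod SB a, u (c • x) = c • u x) ∧
        (∀ (c : C), ∀ x ∈ Hmod SB a, u (x * SB.emb 0 0 c) = u x * SB.emb 0 0 c) ∧
        (∀ x ∈ Hmod SB a, ∀ y ∈ Hmod SB a, star (u x) * u y = star x * y) := by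
  obtain ⟨e, he, he0, hep, _, hE⟩ := SB.exists_isNormalizingPair hsimple
  obtain ⟨δ, z, hpos, hδ, h0, hzb, hz, ho⟩ := hE.exists_orthogonal_seq SB.hasOrthogonalCopies hsc
    ha hb (omegaOn_eq_zero_of_subset subset_closure (hω e he he0 hep)) hlt
  obtain ⟨u, hu, hlim⟩ := exists_preservesInnerOn_of_orthogonal_seq ha hpos hδ h0 hz ho
  have hsub := Hmod_subset_closedRightIdeal SB a
  have hN := isClosedSubmodule_Hmod SB a
  have ⟨_, _, hadd, hsmul, hact⟩ := hN
  replace hu : PreservesInnerOn u (Hmod SB a) := hu.mono hsub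
  refine ⟨u '' Hmod SB a, ?_, hu.isClosedSubmodule_image SB hN, u, Set.mapsTo_image _ _,
    Set.surjOn_image _ _, fun x hx y hy => hu.map_add hx hy (hadd x hx y hy),
    fun r x hx => hu.map_smul r hx (hsmul r x hx),
    fun d x hx => hu.map_mul_right _ hx (hact x hx d), hu⟩
  rintro _ ⟨x, hx, rfl⟩
  exact (isClosed_Hmod SB _).mem_of_tendsto (hlim x (hsub hx)) (.of_forall fun n =>
    mul_mem_Hmod_of_mem_closedRightIdeal SB (sum_mem fun k _ => hzb k) hx)

end Embedding

/-- **Corollary.** Let `A` be a σ-unital simple C*-algebra with strict comparison which is not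
purely infinite, and let `H_a`, `H_b` be the (countably generated) Hilbert `A`-modules
associated to `a, b ∈ (A ⊗ K)₊`.  If `ω(H_a) = 0` and `d_τ(H_a) < d_τ(H_b)` for all nonzero
`τ ∈ QT̃(A)`, then `H_a` is unitarily equivalent to a Hilbert `A`-submodule of `H_b`:
there is a closed submodule `N ⊆ H_b` and a surjective `A`-module map `u : H_a → N`
preserving the `A`-valued inner products. -/
theorem Hmod_unitarily_embeds
    (SB : Stabilization A W)
    (hσ : SigmaUnital A) (hsimple : IsSimpleCStar A)
    (hsc : StrictComparison W) (hnpi : ¬ PurelyInfinite A)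
    (a b : W) (ha : 0 ≤ a) (hb : 0 ≤ b)
    (hω : OmegaZero SB a)
    (hlt : ∀ τ : QuasiTrace W, ¬ τ.IsZero → dTau τ a < dTau τ b) :
    ∃ N : Set W, N ⊆ Hmod SB b ∧ IsClosedSubmodule SB N ∧
      ∃ u : W → W, Set.MapsTo u (Hmod SB a) N ∧ Set.SurjOn u (Hmod SB a) N ∧
        (∀ x ∈ Hmod SB a, ∀ y ∈ Hmod SB a, u (x + y) = u x + u y) ∧
        (∀ (c : ℂ), ∀ x ∈ Hmod SB a, u (c • x) = c • u x) ∧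
        (∀ (c : A), ∀ x ∈ Hmod SB a, u (x * SB.emb 0 0 c) = u x * SB.emb 0 0 c) ∧
        (∀ x ∈ Hmod SB a, ∀ y ∈ Hmod SB a, star (u x) * u y = star x * y) :=
  Hmod_unitarily_embeds_general SB hsimple hsc a b ha hb hω hlt

end Paper
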